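/- Let α be an irrational vector in ℝ^d and let S be a convex polytope in ℝ^d (the convex hull of finitely many points, with nonempty interior). If S is a bounded remainder set with respect to α, then S is centrally symmetric and every (d−1)-dimensional face of S is centrally symmetric. -/

import Mathlib

/-!
Two facts combine: opposite facets of a bounded remainder polytope have equal areas, as have the
opposite facets of each of its facets; and a polytope with this property is centrally symmetric.

**Valuations.** Let `Ψ` be a translation-invariant valuation which ignores null sets and vanishes on
boxes. If `S` is a bounded remainder set, near a point where the difference of two discrepancies is
almost maximal there is a small box `Q` such that the number of visits of an orbit to `S` between two
visits to `Q` depends only on the time elapsed (`excursion`). Following the points of `S` back to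
their last visit to `Q` cuts `S` into finitely many pieces, which translations rearrange into
a linear combination of boxes (`val_zero`); so `Ψ` vanishes on `S` (`val_zero_of_brs`). Given a
valuation on hyperplanes, the difference of its values on the bottom and the top face in a fixed
direction is such a `Ψ` (`IsVal.boundary`, `box_boundary`), as faces are the jumps of indicator
functions along lines (`boundary_relation`). Hence a valuation takes equal values on opposite faces
of `S` (`faces_of_brs`). With the volume this compares facets of `S`. With the boundary of the volume
it gives a relation between `B` and `T` for opposite facets `B`, `T` of `S`; since `S` is already
known to be symmetric, `B` is a reflected copy of `T`, a reflection changes the sign of the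
boundary of the volume, and the opposite facets of `T` have equal areas (`ridges_of_brs`).

**Symmetry.** Let `K` be a polytope whose opposite facets have equal areas, written as an
intersection of slabs, one for each pair of opposite supporting hyperplanes used. Moving a single
slab does not change the volume to first order (`slab_deriv`), and the volume is a log-concave
function of all displacements by the Brunn–Minkowski inequality (`slab_concave`), so no displacement
of the slabs increases the volume (`slab_le`). Centring all slabs at the origin yields a set
containing `(K - K)/2`, so the volume of `(K - K)/2` is at most that of `K`: this is equality in the
Brunn–Minkowski inequality for `K` and `-K`. The equality case of the one-dimensional
Prékopa–Leindler inequality (`prekopa_eq`) shows that the marginals of `K` are symmetric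
(`marginal_symm`). So in each direction the centroid lies halfway between the supporting hyperplanes,
and `K` is symmetric about it (`minkowski_symm`).
-/

open MeasureTheory

/-- The multiplicity function of the projection of `S ⊆ ℝ^d` to the torus `ℝ^d/ℤ^d`,
viewed as a `ℤ^d`-periodic function on `ℝ^d`. -/
noncomputable def multFn {d : ℕ} (S : Set (Fin d → ℝ)) (x : Fin d → ℝ) : ℝ :=
  ∑' k : Fin d → ℤ, Set.indicator S (fun _ => (1 : ℝ)) (x + fun i => (k i : ℝ))

/-- The discrepancy `∑_{k=0}^{n-1} χ_S(x + k v) − n · Leb(S)`. -/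
noncomputable def disc {d : ℕ} (v : Fin d → ℝ) (S : Set (Fin d → ℝ)) (n : ℕ)
    (x : Fin d → ℝ) : ℝ :=
  (∑ k ∈ Finset.range n, multFn S (x + (k : ℝ) • v)) - n * (volume S).toReal

/-- `S` is a bounded remainder set with respect to the vector `v`. -/
def IsBRS {d : ℕ} (v : Fin d → ℝ) (S : Set (Fin d → ℝ)) : Prop :=
  ∃ C : ℝ, ∀ᵐ x : Fin d → ℝ, ∀ n : ℕ, 1 ≤ n → |disc v S n x| ≤ C

/-- `α ∈ ℝ^d` is an irrational vector: `1, α₁, …, α_d` are linearly independent over `ℚ`. -/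
def IsIrrationalVector {d : ℕ} (α : Fin d → ℝ) : Prop :=
  ∀ (n₀ : ℤ) (n : Fin d → ℤ), (n₀ : ℝ) + ∑ i, (n i : ℝ) * α i = 0 → n₀ = 0 ∧ n = 0

/-- The subgroup `ℤα + ℤ^d` of `ℝ^d`. -/
def lat {d : ℕ} (α : Fin d → ℝ) : Set (Fin d → ℝ) :=
  {v | ∃ (q : ℤ) (p : Fin d → ℤ), v = (q : ℝ) • α + fun i => (p i : ℝ)}

/-- The parallelepiped spanned by the vectors `v 1, …, v d`. -/
def paral {d : ℕ} (v : Fin d → Fin d → ℝ) : Set (Fin d → ℝ) :=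
  {x | ∃ t : Fin d → ℝ, (∀ k, 0 ≤ t k ∧ t k < 1) ∧ x = ∑ k, t k • v k}

/-- A `ℤ^d`-periodic function on `ℝ^d`, i.e. a function on the torus. -/
def IsZdPeriodic {d : ℕ} (g : (Fin d → ℝ) → ℝ) : Prop :=
  ∀ (x : Fin d → ℝ) (k : Fin d → ℤ), g (x + fun i => (k i : ℝ)) = g x

/-- `g` is a transfer function for `S` with respect to `v`:
a function on the torus with `χ_S(x) − Leb S = g(x) − g(x−v)` a.e. -/
def IsTransfer {d : ℕ} (v : Fin d → ℝ) (S : Set (Fin d → ℝ)) (g : (Fin d → ℝ) → ℝ) : Prop :=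
  IsZdPeriodic g ∧
    ∀ᵐ x : Fin d → ℝ, multFn S x - (volume S).toReal = g x - g (x - v)

/-- A bounded function whose set of discontinuity points is Lebesgue-null. -/
def RiemannIntegrableFn {d : ℕ} (g : (Fin d → ℝ) → ℝ) : Prop :=
  (∃ M : ℝ, ∀ x, |g x| ≤ M) ∧ volume {x | ¬ ContinuousAt g x} = 0

/-- A bounded set is Riemann measurable if its boundary is Lebesgue-null. -/
def IsRiemannMeasurable {d : ℕ} (S : Set (Fin d → ℝ)) : Prop :=
  Bornology.IsBounded S ∧ volume (frontier S) = 0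

/-- `S` and `S'` are equidecomposable, with pieces satisfying the predicate `P`,
using translations by vectors in `Γ`. -/
def EquidecompBy {d : ℕ} (P : Set (Fin d → ℝ) → Prop)
    (S S' : Set (Fin d → ℝ)) (Γ : Set (Fin d → ℝ)) : Prop :=
  ∃ (N : ℕ) (A : Fin N → Set (Fin d → ℝ)) (γ : Fin N → Fin d → ℝ),
    (∀ i, P (A i)) ∧ (∀ i, γ i ∈ Γ) ∧
    (∀ i j, i ≠ j → volume (A i ∩ A j) = 0) ∧
    volume (symmDiff S (⋃ i, A i)) = 0 ∧
    (∀ i j, i ≠ j → volume (((fun x => x + γ i) '' A i) ∩ ((fun x => x + γ j) '' A j)) = 0) ∧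
    volume (symmDiff S' (⋃ i, (fun x => x + γ i) '' A i)) = 0

/-- A set is centrally symmetric if it equals its reflection about some point `c`. -/
def IsCentrallySymmetric {d : ℕ} (A : Set (Fin d → ℝ)) : Prop :=
  ∃ c : Fin d → ℝ, ∀ x, x ∈ A ↔ (2 : ℝ) • c - x ∈ A

/-! ### Valuations on convex bodies -/

/-- The indicator function of a set, as a real-valued function. -/
noncomputable abbrev ind {E : Type*} (P : Set E) : E → ℝ := Set.indicator P (fun _ => (1 : ℝ))

lemma ind_mem {E : Type*} {P : Set E} {x : E} (h : x ∈ P) : ind P x = 1 :=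
  Set.indicator_of_mem h _

lemma ind_notMem {E : Type*} {P : Set E} {x : E} (h : x ∉ P) : ind P x = 0 :=
  Set.indicator_of_notMem h _

/-- The top face of `Q ⊆ W × ℝ` in the direction of the last coordinate, projected to `W`. -/
def topFace {W : Type*} (Q : Set (W × ℝ)) : Set W := {w | ∃ s, (w, s) ∈ Q ∧ ∀ q ∈ Q, q.2 ≤ s}

/-- The bottom face of `Q ⊆ W × ℝ` in the direction of the last coordinate, projected to `W`. -/
def botFace {W : Type*} (Q : Set (W × ℝ)) : Set W := {w | ∃ s, (w, s) ∈ Q ∧ ∀ q ∈ Q, s ≤ q.2}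

/-- A translation-invariant valuation on convex bodies of `ℝⁿ`, extended to a linear functional on
the space of all functions. It has to vanish on functions which are zero almost everywhere, so it
is simple and additive on all linear relations between indicator functions of convex bodies. -/
structure IsVal {n : ℕ} (Ψ : ((Fin n → ℝ) → ℝ) →ₗ[ℝ] ℝ) : Prop where
  null : ∀ f : (Fin n → ℝ) → ℝ, f =ᵐ[volume] 0 → Ψ f = 0
  trans : ∀ P : Set (Fin n → ℝ), IsCompact P → Convex ℝ P → ∀ v,
    Ψ (ind ((fun x => x + v) ⁻¹' P)) = Ψ (ind P)

/-- A linear functional with prescribed values `a i` on the vectors `v i` and vanishing on `N`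
exists as soon as the values respect all linear relations modulo `N`. -/
lemma exists_functional {M ι : Type*} [AddCommGroup M] [Module ℝ M] (v : ι → M)
    (N : Submodule ℝ M) (a : ι → ℝ)
    (h : ∀ c : ι →₀ ℝ, Finsupp.linearCombination ℝ v c ∈ N →
      Finsupp.linearCombination ℝ a c = 0) :
    ∃ Ψ : M →ₗ[ℝ] ℝ, (∀ i, Ψ (v i) = a i) ∧ ∀ x ∈ N, Ψ x = 0 := by
  set L := N.mkQ ∘ₗ Finsupp.linearCombination ℝ v with hL
  have hA : (Finsupp.linearCombination ℝ a : (ι →₀ ℝ) →ₗ[ℝ] ℝ) ∈ L.ker.dualAnnihilator := by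
    rw [Submodule.mem_dualAnnihilator]
    intro c hc
    apply h
    simpa [hL] using hc
  rw [← LinearMap.range_dualMap_eq_dualAnnihilator_ker] at hA
  obtain ⟨Ψ, hΨ⟩ := hA
  refine ⟨Ψ ∘ₗ N.mkQ, fun i => ?_, fun x hx => ?_⟩
  · have := congrArg (fun f => f (Finsupp.single i (1 : ℝ))) hΨ
    simpa [hL] using this
  · have : N.mkQ x = 0 := by simpa using hx
    simp only [LinearMap.comp_apply, this, map_zero]

/-- Existence of the functional attached to an additive set function on convex bodies. -/
lemma exists_val {n : ℕ} (φ : Set (Fin n → ℝ) → ℝ)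
    (hadd : ∀ c : {P : Set (Fin n → ℝ) // IsCompact P ∧ Convex ℝ P} →₀ ℝ,
      (∀ᵐ x, ∑ P ∈ c.support, c P * ind P.1 x = 0) → ∑ P ∈ c.support, c P * φ P.1 = 0)
    (htr : ∀ P : Set (Fin n → ℝ), IsCompact P → Convex ℝ P → ∀ v,
      φ ((fun x => x + v) ⁻¹' P) = φ P) :
    ∃ Ψ : ((Fin n → ℝ) → ℝ) →ₗ[ℝ] ℝ, IsVal Ψ ∧
      ∀ P, IsCompact P → Convex ℝ P → Ψ (ind P) = φ P := by
  let N : Submodule ℝ ((Fin n → ℝ) → ℝ) :=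
    { carrier := {f | f =ᵐ[volume] 0}
      add_mem' := by
        intro f g (hf : f =ᵐ[volume] 0) (hg : g =ᵐ[volume] 0)
        change f + g =ᵐ[volume] 0
        simpa using hf.add hg
      zero_mem' := by
        change (0 : (Fin n → ℝ) → ℝ) =ᵐ[volume] 0
        exact Filter.EventuallyEq.rfl
      smul_mem' := by
        intro c f (hf : f =ᵐ[volume] 0)
        change c • f =ᵐ[volume] 0
        simpa using hf.const_smul c }
  obtain ⟨Ψ, h1, h2⟩ := exists_functional
    (fun P : {P : Set (Fin n → ℝ) // IsCompact P ∧ Convex ℝ P} => ind P.1) N (fun P => φ P.1) (by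
      intro c hc
      have := hadd c (by
        filter_upwards [show _ =ᵐ[volume] 0 from hc] with x hx
        simpa [Finsupp.linearCombination_apply, Finsupp.sum, Finset.sum_apply] using hx)
      simpa [Finsupp.linearCombination_apply, Finsupp.sum] using this)
  refine ⟨Ψ, ⟨fun f hf => h2 f hf, fun P hP hP' v => ?_⟩, fun P hP hP' => h1 ⟨P, hP, hP'⟩⟩
  have e1 := h1 ⟨P, hP, hP'⟩
  have hc : IsCompact ((fun x => x + v) ⁻¹' P) := (Homeomorph.addRight v).isCompact_preimage.2 hP
  have hv : Convex ℝ ((fun x => x + v) ⁻¹' P) := hP'.translate_preimage_left v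
  have e2 := h1 ⟨_, hc, hv⟩
  simp only at e1 e2
  have e3 := htr P hP hP'
  rw [e1, e2, e3]

/-- Lebesgue measure is a translation-invariant valuation. -/
lemma exists_vol_val (n : ℕ) : ∃ Ψ : ((Fin n → ℝ) → ℝ) →ₗ[ℝ] ℝ, IsVal Ψ ∧
      ∀ P, IsCompact P → Convex ℝ P → Ψ (ind P) = volume.real P := by
  apply exists_val
  · intro c hc
    have hi : ∀ P ∈ c.support, Integrable (fun x => c P * ind P.1 x) := by
      intro P _
      apply Integrable.const_mul
      rw [integrable_indicator_iff P.2.1.measurableSet]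
      exact integrableOn_const P.2.1.measure_lt_top.ne
    have := integral_finsetSum c.support hi
    rw [integral_congr_ae (show _ =ᵐ[volume] (fun _ => (0 : ℝ)) from hc)] at this
    simp only [integral_zero, integral_const_mul] at this
    rw [this]
    refine Finset.sum_congr rfl fun P _ => ?_
    rw [integral_indicator P.2.1.measurableSet]
    simp
  · intro P hP _ v
    simp only [measureReal_def, measure_preimage_add_right]

/-! ### Faces and the boundary of a valuation -/

/-- The horizontal slice of `Q ⊆ W × ℝ` at height `t`. -/
def slice {W : Type*} (Q : Set (W × ℝ)) (t : ℝ) : Set W := {w | (w, t) ∈ Q}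

lemma slice_compact {k : ℕ} {Q : Set ((Fin k → ℝ) × ℝ)} (hQ : IsCompact Q) (t : ℝ) :
    IsCompact (slice Q t) := by
  have : slice Q t = Prod.fst '' (Q ∩ {q | q.2 = t}) := by
    ext w; constructor
    · intro h; exact ⟨(w, t), ⟨h, rfl⟩, rfl⟩
    · rintro ⟨⟨a, b⟩, ⟨h, h'⟩, rfl⟩
      simp only [Set.mem_ofPred_eq] at h'
      subst h'; exact h
  rw [this]
  exact (hQ.inter_right (isClosed_eq continuous_snd continuous_const)).image continuous_fst

lemma slice_convex {k : ℕ} {Q : Set ((Fin k → ℝ) × ℝ)} (hQ : Convex ℝ Q) (t : ℝ) :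
    Convex ℝ (slice Q t) := by
  intro x hx y hy a b ha hb hab
  have := hQ hx hy ha hb hab
  have e : a * t + b * t = t := by rw [← add_mul, hab, one_mul]
  simpa [slice, e] using this

/-- Over an interior point of a slice of a convex set, the set contains a vertical segment
pointing towards any given height attained by the set. -/
lemma eventually_mem_of_interior_slice {k : ℕ} {Q : Set ((Fin k → ℝ) × ℝ)} (hQ : Convex ℝ Q)
    {t s₀ : ℝ} {w w₀ : Fin k → ℝ} (hw : w ∈ interior (slice Q t)) (h0 : (w₀, s₀) ∈ Q)
    (hne : s₀ ≠ t) : ∀ᶠ s in nhds t, 0 ≤ (t - s) / (t - s₀) → (w, s) ∈ Q := by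
  have hne' : t - s₀ ≠ 0 := sub_ne_zero.2 hne.symm
  set θ : ℝ → ℝ := fun s => (t - s) / (t - s₀) with hθ
  have hc : Continuous θ := by fun_prop
  have hθt : θ t = 0 := by simp [hθ]
  have h1 : ∀ᶠ s in nhds t, θ s < 1 := by
    apply hc.continuousAt.eventually_lt continuousAt_const
    simp [hθt]
  have h2 : ContinuousAt (fun s => (1 - θ s)⁻¹ • (w - θ s • w₀)) t := by
    have h0 : ContinuousAt (fun s => (1 - θ s)⁻¹) t :=
      ContinuousAt.inv₀ (f := fun s => 1 - θ s) (by fun_prop) (by simp [hθt])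
    have h1 : ContinuousAt (fun s => w - θ s • w₀) t := by fun_prop
    exact h0.smul h1
  have h3 : ∀ᶠ s in nhds t, (1 - θ s)⁻¹ • (w - θ s • w₀) ∈ interior (slice Q t) := by
    apply h2.eventually_mem
    apply isOpen_interior.mem_nhds
    simpa [hθt] using hw
  filter_upwards [h1, h3] with s hs1 hs3 hs0
  have hs3' : (1 - θ s)⁻¹ • (w - θ s • w₀) ∈ slice Q t := interior_subset hs3
  have hs0' : 0 ≤ θ s := hs0
  have := hQ h0 (show (_, t) ∈ Q from hs3') hs0' (sub_nonneg.2 hs1.le) (by ring)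
  convert this using 1
  have hz : (1 - θ s) ≠ 0 := by linarith
  ext i
  · simp only [Prod.smul_mk, Prod.mk_add_mk, smul_smul, mul_inv_cancel₀ hz]
    simp
  · simp only [Prod.smul_mk, Prod.mk_add_mk, smul_eq_mul]
    have : θ s * (t - s₀) = t - s := by simp only [hθ]; field_simp
    linarith

/-- Just below the height `t`, over a point off the boundary of the slice at height `t`, membership
in `Q` is membership in that slice, unless nothing of `Q` lies below `t`. -/
lemma eventually_left {k : ℕ} {Q : Set ((Fin k → ℝ) × ℝ)} (hc : IsCompact Q) (hQ : Convex ℝ Q)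
    {t : ℝ} {w : Fin k → ℝ} (hw : w ∉ frontier (slice Q t)) :
    ∀ᶠ s in nhdsWithin t (Set.Iio t),
      ind Q (w, s) = ind (slice Q t) w * ind {t | ∃ q ∈ Q, q.2 < t} t := by
  classical
  by_cases hL : ∃ q ∈ Q, q.2 < t
  · by_cases hm : w ∈ slice Q t
    · have hi : w ∈ interior (slice Q t) := by
        by_contra h; exact hw ⟨subset_closure hm, h⟩
      obtain ⟨⟨w₀, s₀⟩, h0, hlt⟩ := hL
      simp only at hlt
      filter_upwards [nhdsWithin_le_nhds (eventually_mem_of_interior_slice hQ hi h0 hlt.ne),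
        self_mem_nhdsWithin] with s hs hst
      have h1 : (w, s) ∈ Q := hs (div_nonneg (sub_nonneg.2 (le_of_lt hst)) (by linarith))
      have h2 : t ∈ {t | ∃ q ∈ Q, q.2 < t} := ⟨_, h0, hlt⟩
      rw [ind_mem h1, ind_mem hm, ind_mem h2]; simp
    · have : ∀ᶠ s in nhds t, (w, s) ∈ Qᶜ := by
        apply ContinuousAt.eventually_mem (f := fun s : ℝ => (w, s)) (by fun_prop)
        exact hc.isClosed.isOpen_compl.mem_nhds hm
      filter_upwards [nhdsWithin_le_nhds this] with s hs
      rw [ind_notMem hs, ind_notMem hm]; simp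
  · filter_upwards [self_mem_nhdsWithin] with s hs
    have h1 : (w, s) ∉ Q := fun h => hL ⟨_, h, hs⟩
    have h2 : t ∉ {t | ∃ q ∈ Q, q.2 < t} := hL
    rw [ind_notMem h1, ind_notMem h2]; simp

lemma eventually_right {k : ℕ} {Q : Set ((Fin k → ℝ) × ℝ)} (hc : IsCompact Q) (hQ : Convex ℝ Q)
    {t : ℝ} {w : Fin k → ℝ} (hw : w ∉ frontier (slice Q t)) :
    ∀ᶠ s in nhdsWithin t (Set.Ioi t),
      ind Q (w, s) = ind (slice Q t) w * ind {t | ∃ q ∈ Q, t < q.2} t := by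
  classical
  by_cases hL : ∃ q ∈ Q, t < q.2
  · by_cases hm : w ∈ slice Q t
    · have hi : w ∈ interior (slice Q t) := by
        by_contra h; exact hw ⟨subset_closure hm, h⟩
      obtain ⟨⟨w₀, s₀⟩, h0, hlt⟩ := hL
      simp only at hlt
      filter_upwards [nhdsWithin_le_nhds (eventually_mem_of_interior_slice hQ hi h0 hlt.ne'),
        self_mem_nhdsWithin] with s hs hst
      have h1 : (w, s) ∈ Q :=
        hs (div_nonneg_of_nonpos (sub_nonpos.2 (le_of_lt hst)) (by linarith))
      have h2 : t ∈ {t | ∃ q ∈ Q, t < q.2} := ⟨_, h0, hlt⟩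
      rw [ind_mem h1, ind_mem hm, ind_mem h2]; simp
    · have : ∀ᶠ s in nhds t, (w, s) ∈ Qᶜ := by
        apply ContinuousAt.eventually_mem (f := fun s : ℝ => (w, s)) (by fun_prop)
        exact hc.isClosed.isOpen_compl.mem_nhds hm
      filter_upwards [nhdsWithin_le_nhds this] with s hs
      rw [ind_notMem hs, ind_notMem hm]; simp
  · filter_upwards [self_mem_nhdsWithin] with s hs
    have h1 : (w, s) ∉ Q := fun h => hL ⟨_, h, hs⟩
    have h2 : t ∉ {t | ∃ q ∈ Q, t < q.2} := hL
    rw [ind_notMem h1, ind_notMem h2]; simp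

/-- The sum of the jumps of the indicator of `Q` along a vertical line: contributions at
intermediate heights cancel, and the bottom and the top face remain. -/
lemma face_sum {W : Type*} (Q : Set (W × ℝ)) (T : Finset ℝ) (w : W)
    (hTt : ∀ q ∈ Q, (∀ q' ∈ Q, q'.2 ≤ q.2) → q.2 ∈ T)
    (hTb : ∀ q ∈ Q, (∀ q' ∈ Q, q.2 ≤ q'.2) → q.2 ∈ T) :
    ∑ t ∈ T, ind (slice Q t) w * (ind {t | ∃ q ∈ Q, t < q.2} t - ind {t | ∃ q ∈ Q, q.2 < t} t)
      = ind (botFace Q) w - ind (topFace Q) w := by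
  classical
  have hb : ∑ t ∈ T, ind (slice Q t) w * (1 - ind {t | ∃ q ∈ Q, q.2 < t} t)
      = ind (botFace Q) w := by
    by_cases h : w ∈ botFace Q
    · obtain ⟨t, ht, htm⟩ := h
      have h : w ∈ botFace Q := ⟨t, ht, htm⟩
      rw [Finset.sum_eq_single t]
      · rw [ind_mem h, ind_mem (show w ∈ slice Q t from ht),
          ind_notMem]
        · simp
        · rintro ⟨q, hq, hlt⟩; exact absurd (htm q hq) (not_le.2 hlt)
      · intro s _ hst
        by_cases hs : w ∈ slice Q s
        · rw [ind_mem (show s ∈ {t | ∃ q ∈ Q, q.2 < t} from ?_)]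
          · simp
          · exact ⟨(w, t), ht, lt_of_le_of_ne (htm _ hs) hst.symm⟩
        · rw [ind_notMem hs]; simp
      · intro hT; exact absurd (hTb _ ht htm) hT
    · rw [ind_notMem h]
      refine Finset.sum_eq_zero fun s _ => ?_
      by_cases hs : w ∈ slice Q s
      · rw [ind_mem (show s ∈ {t | ∃ q ∈ Q, q.2 < t} from ?_)]
        · simp
        · by_contra hcon
          apply h
          refine ⟨s, hs, fun q hq => ?_⟩
          by_contra hq'
          exact hcon ⟨q, hq, not_le.1 hq'⟩
      · rw [ind_notMem hs]; simp
  have ht : ∑ t ∈ T, ind (slice Q t) w * (1 - ind {t | ∃ q ∈ Q, t < q.2} t)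
      = ind (topFace Q) w := by
    by_cases h : w ∈ topFace Q
    · obtain ⟨t, ht, htm⟩ := h
      have h : w ∈ topFace Q := ⟨t, ht, htm⟩
      rw [Finset.sum_eq_single t]
      · rw [ind_mem h, ind_mem (show w ∈ slice Q t from ht),
          ind_notMem]
        · simp
        · rintro ⟨q, hq, hlt⟩; exact absurd (htm q hq) (not_le.2 hlt)
      · intro s _ hst
        by_cases hs : w ∈ slice Q s
        · rw [ind_mem (show s ∈ {t | ∃ q ∈ Q, t < q.2} from ?_)]
          · simp
          · exact ⟨(w, t), ht, lt_of_le_of_ne (htm _ hs) hst⟩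
        · rw [ind_notMem hs]; simp
      · intro hT; exact absurd (hTt _ ht htm) hT
    · rw [ind_notMem h]
      refine Finset.sum_eq_zero fun s _ => ?_
      by_cases hs : w ∈ slice Q s
      · rw [ind_mem (show s ∈ {t | ∃ q ∈ Q, t < q.2} from ?_)]
        · simp
        · by_contra hcon
          apply h
          refine ⟨s, hs, fun q hq => ?_⟩
          by_contra hq'
          exact hcon ⟨q, hq, not_le.1 hq'⟩
      · rw [ind_notMem hs]; simp
  rw [← hb, ← ht, ← Finset.sum_sub_distrib]
  refine Finset.sum_congr rfl fun t _ => by ring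

/-- Linear relations between convex bodies in `W × ℝ` induce relations between the differences of
their bottom and top faces: the jumps of the left-hand side in the vertical direction are
collected at the finitely many heights of the faces. -/
lemma boundary_relation {k : ℕ} {ι : Type*} (I : Finset ι) (c : ι → ℝ)
    (P : ι → Set ((Fin k → ℝ) × ℝ)) (hc : ∀ i ∈ I, IsCompact (P i)) (hP : ∀ i ∈ I, Convex ℝ (P i))
    (h : ∀ᵐ x : (Fin k → ℝ) × ℝ, ∑ i ∈ I, c i * ind (P i) x = 0) :
    ∀ᵐ w : Fin k → ℝ, ∑ i ∈ I, c i * (ind (botFace (P i)) w - ind (topFace (P i)) w) = 0 := by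
  classical
  obtain ⟨T, hTt, hTb⟩ : ∃ T : Finset ℝ,
      (∀ i ∈ I, ∀ q ∈ P i, (∀ q' ∈ P i, q'.2 ≤ q.2) → q.2 ∈ T) ∧
      (∀ i ∈ I, ∀ q ∈ P i, (∀ q' ∈ P i, q.2 ≤ q'.2) → q.2 ∈ T) := by
    refine ⟨I.image (fun i => sSup (Prod.snd '' P i)) ∪ I.image (fun i => sInf (Prod.snd '' P i)),
      fun i hi q hq hm => ?_, fun i hi q hq hm => ?_⟩
    · apply Finset.mem_union_left
      refine Finset.mem_image.2 ⟨i, hi, ?_⟩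
      exact IsGreatest.csSup_eq ⟨⟨q, hq, rfl⟩, by rintro _ ⟨q', hq', rfl⟩; exact hm q' hq'⟩
    · apply Finset.mem_union_right
      refine Finset.mem_image.2 ⟨i, hi, ?_⟩
      exact IsLeast.csInf_eq ⟨⟨q, hq, rfl⟩, by rintro _ ⟨q', hq', rfl⟩; exact hm q' hq'⟩
  have hfr : ∀ᵐ w : Fin k → ℝ, ∀ t ∈ T, ∀ i ∈ I, w ∉ frontier (slice (P i) t) := by
    rw [Finset.eventually_all]
    intro t _
    rw [Finset.eventually_all]
    intro i hi
    exact measure_eq_zero_iff_ae_notMem.1 ((slice_convex (hP i hi) t).addHaar_frontier volume)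
  filter_upwards [Measure.ae_ae_of_ae_prod (μ := (volume : Measure (Fin k → ℝ)))
    (ν := (volume : Measure ℝ)) h, hfr] with w hw hwf
  -- by density, the relation passes to the one-sided limits at every height
  have hd : Dense {s : ℝ | ∑ i ∈ I, c i * ind (P i) (w, s) = 0} := Measure.dense_of_ae hw
  have key : ∀ t ∈ T, ∑ i ∈ I, c i * (ind (slice (P i) t) w *
      (ind {t | ∃ q ∈ P i, t < q.2} t - ind {t | ∃ q ∈ P i, q.2 < t} t)) = 0 := by
    intro t ht
    have hL : ∑ i ∈ I, c i * (ind (slice (P i) t) w * ind {t | ∃ q ∈ P i, q.2 < t} t) = 0 := by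
      have hev : ∀ᶠ s in nhdsWithin t (Set.Iio t), ∀ i ∈ I, ind (P i) (w, s) =
          ind (slice (P i) t) w * ind {t | ∃ q ∈ P i, q.2 < t} t := by
        rw [Finset.eventually_all]
        exact fun i hi => eventually_left (hc i hi) (hP i hi) (hwf t ht i hi)
      obtain ⟨u, hu, hus⟩ := mem_nhdsLT_iff_exists_Ioo_subset.1 hev
      obtain ⟨s, hs, hs'⟩ := hd.exists_mem_open isOpen_Ioo (Set.nonempty_Ioo.2 hu)
      rw [← hs]
      exact Finset.sum_congr rfl fun i hi => by rw [hus hs' i hi]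
    have hR : ∑ i ∈ I, c i * (ind (slice (P i) t) w * ind {t | ∃ q ∈ P i, t < q.2} t) = 0 := by
      have hev : ∀ᶠ s in nhdsWithin t (Set.Ioi t), ∀ i ∈ I, ind (P i) (w, s) =
          ind (slice (P i) t) w * ind {t | ∃ q ∈ P i, t < q.2} t := by
        rw [Finset.eventually_all]
        exact fun i hi => eventually_right (hc i hi) (hP i hi) (hwf t ht i hi)
      obtain ⟨u, hu, hus⟩ := mem_nhdsGT_iff_exists_Ioo_subset.1 hev
      obtain ⟨s, hs, hs'⟩ := hd.exists_mem_open isOpen_Ioo (Set.nonempty_Ioo.2 hu)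
      rw [← hs]
      exact Finset.sum_congr rfl fun i hi => by rw [hus hs' i hi]
    have := congrArg₂ (· - ·) hR hL
    simp only [sub_zero, ← Finset.sum_sub_distrib] at this
    rw [← this]
    exact Finset.sum_congr rfl fun i _ => by ring
  have := Finset.sum_eq_zero key
  rw [Finset.sum_comm] at this
  rw [← this]
  refine Finset.sum_congr rfl fun i hi => ?_
  rw [← Finset.mul_sum, face_sum (P i) T w (hTt i hi) (hTb i hi)]

lemma topFace_eq_slice {W : Type*} {Q : Set (W × ℝ)} {t : ℝ} (w₀ : W) (h0 : (w₀, t) ∈ Q)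
    (ht : ∀ q ∈ Q, q.2 ≤ t) : topFace Q = slice Q t := by
  ext w; constructor
  · rintro ⟨s, hs, hm⟩
    have : s = t := le_antisymm (ht _ hs) (hm _ h0)
    subst this; exact hs
  · exact fun h => ⟨t, h, ht⟩

lemma botFace_eq_slice {W : Type*} {Q : Set (W × ℝ)} {t : ℝ} (w₀ : W) (h0 : (w₀, t) ∈ Q)
    (ht : ∀ q ∈ Q, t ≤ q.2) : botFace Q = slice Q t := by
  ext w; constructor
  · rintro ⟨s, hs, hm⟩
    have : s = t := le_antisymm (hm _ h0) (ht _ hs)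
    subst this; exact hs
  · exact fun h => ⟨t, h, ht⟩

lemma topFace_slice {k : ℕ} {Q : Set ((Fin k → ℝ) × ℝ)} (hQ : IsCompact Q) :
    (∃ t, topFace Q = slice Q t ∧ ∀ q ∈ Q, q.2 ≤ t) := by
  rcases Q.eq_empty_or_nonempty with rfl | hne
  · exact ⟨0, by ext; simp [topFace, slice], by simp⟩
  · obtain ⟨⟨w₀, t⟩, h0, hm⟩ := hQ.exists_isMaxOn hne continuous_snd.continuousOn
    exact ⟨t, topFace_eq_slice w₀ h0 fun q hq => hm hq, fun q hq => hm hq⟩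

lemma botFace_slice {k : ℕ} {Q : Set ((Fin k → ℝ) × ℝ)} (hQ : IsCompact Q) :
    (∃ t, botFace Q = slice Q t ∧ ∀ q ∈ Q, t ≤ q.2) := by
  rcases Q.eq_empty_or_nonempty with rfl | hne
  · exact ⟨0, by ext; simp [botFace, slice], by simp⟩
  · obtain ⟨⟨w₀, t⟩, h0, hm⟩ := hQ.exists_isMinOn hne continuous_snd.continuousOn
    exact ⟨t, botFace_eq_slice w₀ h0 fun q hq => hm hq, fun q hq => hm hq⟩

/-- The boundary of a valuation: the difference of its values on the bottom and the top face is a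
valuation in one dimension more. -/
lemma IsVal.boundary {n k : ℕ} {Ψ : ((Fin k → ℝ) → ℝ) →ₗ[ℝ] ℝ} (hΨ : IsVal Ψ)
    (L : (Fin n → ℝ) ≃L[ℝ] (Fin k → ℝ) × ℝ) :
    ∃ Ψ' : ((Fin n → ℝ) → ℝ) →ₗ[ℝ] ℝ, IsVal Ψ' ∧ ∀ P, IsCompact P → Convex ℝ P →
      Ψ' (ind P) = Ψ (ind (botFace (L '' P))) - Ψ (ind (topFace (L '' P))) := by
  classical
  apply exists_val (fun P => Ψ (ind (botFace (L '' P))) - Ψ (ind (topFace (L '' P))))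
  · intro c hc
    have hq : ∀ᵐ y : (Fin k → ℝ) × ℝ, ∑ P ∈ c.support, c P * ind (L '' P.1) y = 0 := by
      have h1 : (volume : Measure ((Fin k → ℝ) × ℝ)) ≪ Measure.map L volume :=
        have := L.isAddHaarMeasure_map (volume : Measure (Fin n → ℝ))
        have : Measure.IsAddHaarMeasure (volume : Measure ((Fin k → ℝ) × ℝ)) := by
          rw [Measure.volume_eq_prod]; infer_instance
        Measure.absolutelyContinuous_isAddHaarMeasure _ _
      apply h1.ae_le
      change ∀ᵐ y ∂(Measure.map L volume), _
      have hemb : MeasurableEmbedding (L : (Fin n → ℝ) → (Fin k → ℝ) × ℝ) :=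
        L.toHomeomorph.measurableEmbedding
      rw [hemb.ae_map_iff]
      filter_upwards [hc] with x hx
      rw [← hx]
      refine Finset.sum_congr rfl fun P _ => ?_
      congr 1
      simp only [ind, Set.indicator]
      congr 1
      simp
    have h2 := boundary_relation c.support c (fun P => L '' P.1)
      (fun P _ => P.2.1.image L.continuous) (fun P _ => P.2.2.linear_image L.toLinearMap) hq
    have h3 := hΨ.null (∑ P ∈ c.support, c P • (ind (botFace (L '' P.1)) - ind (topFace (L '' P.1))))
      (by
        filter_upwards [h2] with w hw
        simpa [Finset.sum_apply] using hw)
    simpa [map_sum] using h3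
  · intro P hP hP' v
    have e : L '' ((fun x => x + v) ⁻¹' P) = (fun y => y + L v) ⁻¹' (L '' P) := by
      ext y
      simp only [Set.mem_image, Set.mem_preimage]
      constructor
      · rintro ⟨x, hx, rfl⟩; exact ⟨x + v, hx, by simp⟩
      · rintro ⟨x, hx, he⟩; refine ⟨x - v, by simpa using hx, by simp [he]⟩
    have hb : botFace ((fun y => y + L v) ⁻¹' (L '' P)) =
        (fun w => w + (L v).1) ⁻¹' botFace (L '' P) := by
      ext w
      constructor
      · rintro ⟨s, hs, hm⟩
        refine ⟨s + (L v).2, hs, fun q hq => ?_⟩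
        have := hm (q - L v) (by simpa using hq)
        simp only [Prod.snd_sub] at this
        linarith
      · rintro ⟨s, hs, hm⟩
        refine ⟨s - (L v).2, ?_, fun q hq => ?_⟩
        · rw [Set.mem_preimage]
          convert hs using 1
          ext <;> simp
        · have := hm (q + L v) hq
          simp only [Prod.snd_add] at this
          linarith
    have ht : topFace ((fun y => y + L v) ⁻¹' (L '' P)) =
        (fun w => w + (L v).1) ⁻¹' topFace (L '' P) := by
      ext w
      constructor
      · rintro ⟨s, hs, hm⟩
        refine ⟨s + (L v).2, hs, fun q hq => ?_⟩
        have := hm (q - L v) (by simpa using hq)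
        simp only [Prod.snd_sub] at this
        linarith
      · rintro ⟨s, hs, hm⟩
        refine ⟨s - (L v).2, ?_, fun q hq => ?_⟩
        · rw [Set.mem_preimage]
          convert hs using 1
          ext <;> simp
        · have := hm (q + L v) hq
          simp only [Prod.snd_add] at this
          linarith
    have hLc : IsCompact (L '' P) := hP.image L.continuous
    have hLv : Convex ℝ (L '' P) := hP'.linear_image L.toLinearMap
    obtain ⟨t, et, -⟩ := topFace_slice hLc
    obtain ⟨b, eb, -⟩ := botFace_slice hLc
    simp only [e]
    rw [hb, ht, et, eb, hΨ.trans _ (slice_compact hLc _) (slice_convex hLv _),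
      hΨ.trans _ (slice_compact hLc _) (slice_convex hLv _)]

/-! ### Rearranging a set with bounded excursions into boxes -/

lemma mem_topFace_image {n k : ℕ} {L : (Fin n → ℝ) ≃L[ℝ] (Fin k → ℝ) × ℝ} {P : Set (Fin n → ℝ)}
    {w : Fin k → ℝ} : w ∈ topFace (L '' P) ↔
      ∃ x ∈ P, (L x).1 = w ∧ ∀ y ∈ P, (L y).2 ≤ (L x).2 := by
  constructor
  · rintro ⟨s, ⟨x, hx, hxs⟩, hm⟩
    refine ⟨x, hx, by rw [hxs], fun y hy => ?_⟩
    have := hm (L y) ⟨y, hy, rfl⟩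
    rw [hxs]; exact this
  · rintro ⟨x, hx, rfl, hm⟩
    exact ⟨(L x).2, ⟨x, hx, rfl⟩, by rintro _ ⟨y, hy, rfl⟩; exact hm y hy⟩

lemma mem_botFace_image {n k : ℕ} {L : (Fin n → ℝ) ≃L[ℝ] (Fin k → ℝ) × ℝ} {P : Set (Fin n → ℝ)}
    {w : Fin k → ℝ} : w ∈ botFace (L '' P) ↔
      ∃ x ∈ P, (L x).1 = w ∧ ∀ y ∈ P, (L x).2 ≤ (L y).2 := by
  constructor
  · rintro ⟨s, ⟨x, hx, hxs⟩, hm⟩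
    refine ⟨x, hx, by rw [hxs], fun y hy => ?_⟩
    have := hm (L y) ⟨y, hy, rfl⟩
    rw [hxs]; exact this
  · rintro ⟨x, hx, rfl, hm⟩
    exact ⟨(L x).2, ⟨x, hx, rfl⟩, by rintro _ ⟨y, hy, rfl⟩; exact hm y hy⟩

/-- A linear functional is maximal on a box at the points of a face described by the signs of its
coefficients. -/
lemma box_max {n : ℕ} (ℓ : (Fin n → ℝ) →ₗ[ℝ] ℝ) {a b x : Fin n → ℝ} (hx : x ∈ Set.Icc a b) :
    (∀ y ∈ Set.Icc a b, ℓ y ≤ ℓ x) ↔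
      ∀ i, (0 < ℓ (Pi.single i 1) → x i = b i) ∧ (ℓ (Pi.single i 1) < 0 → x i = a i) := by
  have hab : a ≤ b := hx.1.trans hx.2
  constructor
  · intro h i
    have hu : ∀ t, Function.update x i t = x + (t - x i) • Pi.single i (1 : ℝ) := by
      intro t; ext j
      by_cases hj : j = i
      · subst hj; simp
      · simp [Function.update_of_ne hj, Pi.single_eq_of_ne hj]
    have key : ∀ t ∈ Set.Icc (a i) (b i), (t - x i) * ℓ (Pi.single i 1) ≤ 0 := by
      intro t ht
      have h1 := h (Function.update x i t)
        ⟨le_update_iff.2 ⟨ht.1, fun j _ => hx.1 j⟩, update_le_iff.2 ⟨ht.2, fun j _ => hx.2 j⟩⟩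
      rw [hu, map_add, map_smul, smul_eq_mul] at h1
      linarith
    constructor
    · intro hp
      have := key (b i) ⟨hab i, le_rfl⟩
      have h2 := hx.2 i
      nlinarith
    · intro hp
      have := key (a i) ⟨le_rfl, hab i⟩
      have h2 := hx.1 i
      nlinarith
  · intro h y hy
    rw [LinearMap.pi_apply_eq_sum_univ ℓ y, LinearMap.pi_apply_eq_sum_univ ℓ x]
    refine Finset.sum_le_sum fun i _ => ?_
    have e : (fun j => if i = j then (1 : ℝ) else 0) = Pi.single i 1 := by
      ext j; simp [Pi.single_apply, eq_comm]
    rw [e, smul_eq_mul, smul_eq_mul]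
    have h1 := hy.1 i
    have h2 := hy.2 i
    rcases lt_trichotomy (ℓ (Pi.single i 1)) 0 with h0 | h0 | h0
    · rw [(h i).2 h0]; nlinarith
    · rw [h0]; simp
    · rw [(h i).1 h0]; nlinarith

/-- Opposite faces of a box are translates of each other, so the boundary of a valuation vanishes
on boxes. -/
lemma box_boundary {n k : ℕ} {Ψ : ((Fin k → ℝ) → ℝ) →ₗ[ℝ] ℝ} (hΨ : IsVal Ψ)
    (L : (Fin n → ℝ) ≃L[ℝ] (Fin k → ℝ) × ℝ) (a b : Fin n → ℝ) :
    Ψ (ind (botFace (L '' Set.Icc a b))) = Ψ (ind (topFace (L '' Set.Icc a b))) := by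
  set ℓ : (Fin n → ℝ) →ₗ[ℝ] ℝ := LinearMap.snd ℝ _ _ ∘ₗ L.toLinearMap with hℓ
  have hℓL : ∀ x, (L x).2 = ℓ x := fun x => rfl
  set v : Fin n → ℝ := fun i => if 0 < ℓ (Pi.single i 1) then b i - a i else
    if ℓ (Pi.single i 1) < 0 then a i - b i else 0 with hv
  have hvp : ∀ i, 0 < ℓ (Pi.single i 1) → v i = b i - a i := fun i h => by simp [hv, h]
  have hvn : ∀ i, ℓ (Pi.single i 1) < 0 → v i = a i - b i := fun i h => by
    simp [hv, h, not_lt.2 h.le]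
  have hv0 : ∀ i, ℓ (Pi.single i 1) = 0 → v i = 0 := fun i h => by simp [hv, h]
  have box_min : ∀ {x}, x ∈ Set.Icc a b → ((∀ y ∈ Set.Icc a b, ℓ x ≤ ℓ y) ↔
      ∀ i, (0 < ℓ (Pi.single i 1) → x i = a i) ∧ (ℓ (Pi.single i 1) < 0 → x i = b i)) := by
    intro x hx
    have := box_max (-ℓ) hx
    simp only [LinearMap.neg_apply, neg_le_neg_iff, Left.neg_pos_iff, Left.neg_neg_iff] at this
    rw [this]
    exact forall_congr' fun i => and_comm
  have e : botFace (L '' Set.Icc a b) =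
      (fun w => w + (L v).1) ⁻¹' topFace (L '' Set.Icc a b) := by
    ext w
    simp only [Set.mem_preimage, mem_topFace_image, mem_botFace_image, hℓL]
    constructor
    · rintro ⟨x, hx, rfl, hm⟩
      rw [box_min hx] at hm
      have hxv : x + v ∈ Set.Icc a b := by
        constructor <;> intro i <;> have h1 := hx.1 i <;> have h2 := hx.2 i <;>
          rcases lt_trichotomy (ℓ (Pi.single i 1)) 0 with h0 | h0 | h0
        all_goals simp only [Pi.add_apply]
        · rw [hvn i h0, (hm i).2 h0]; linarith
        · rw [hv0 i h0]; linarith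
        · rw [hvp i h0, (hm i).1 h0]; linarith
        · rw [hvn i h0, (hm i).2 h0]; linarith
        · rw [hv0 i h0]; linarith
        · rw [hvp i h0, (hm i).1 h0]; linarith
      refine ⟨x + v, hxv, by simp, ?_⟩
      rw [box_max ℓ hxv]
      refine fun i => ⟨fun h0 => ?_, fun h0 => ?_⟩
      · rw [Pi.add_apply, hvp i h0, (hm i).1 h0]; ring
      · rw [Pi.add_apply, hvn i h0, (hm i).2 h0]; ring
    · rintro ⟨y, hy, hyw, hm⟩
      rw [box_max ℓ hy] at hm
      have hxv : y - v ∈ Set.Icc a b := by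
        constructor <;> intro i <;> have h1 := hy.1 i <;> have h2 := hy.2 i <;>
          rcases lt_trichotomy (ℓ (Pi.single i 1)) 0 with h0 | h0 | h0
        all_goals simp only [Pi.sub_apply]
        · rw [hvn i h0, (hm i).2 h0]; linarith
        · rw [hv0 i h0]; linarith
        · rw [hvp i h0, (hm i).1 h0]; linarith
        · rw [hvn i h0, (hm i).2 h0]; linarith
        · rw [hv0 i h0]; linarith
        · rw [hvp i h0, (hm i).1 h0]; linarith
      refine ⟨y - v, hxv, by simp [hyw], ?_⟩
      rw [box_min hxv]
      refine fun i => ⟨fun h0 => ?_, fun h0 => ?_⟩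
      · rw [Pi.sub_apply, hvp i h0, (hm i).1 h0]; ring
      · rw [Pi.sub_apply, hvn i h0, (hm i).2 h0]; ring
  have hc : IsCompact (L '' Set.Icc a b) := isCompact_Icc.image L.continuous
  have hcv : Convex ℝ (L '' Set.Icc a b) := (convex_Icc a b).linear_image L.toLinearMap
  obtain ⟨t, et, -⟩ := topFace_slice hc
  rw [e, et, hΨ.trans _ (slice_compact hc _) (slice_convex hcv _)]

/-- The inclusion of `ℤ^d` in `ℝ^d`. -/
abbrev zv {d : ℕ} (p : Fin d → ℤ) : Fin d → ℝ := fun i => (p i : ℝ)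

@[simp]
lemma zv_apply {d : ℕ} (p : Fin d → ℤ) (i : Fin d) : zv p i = (p i : ℝ) := rfl

/-- The set of points `z` such that `z + v` lies in `Q` modulo `ℤ^d`. -/
def hit {d : ℕ} (Q : Set (Fin d → ℝ)) (v : Fin d → ℝ) : Set (Fin d → ℝ) :=
  {z | ∃ p : Fin d → ℤ, z + v + zv p ∈ Q}

lemma finite_zv {d : ℕ} {A : Set (Fin d → ℝ)} (hA : Bornology.IsBounded A) :
    {p : Fin d → ℤ | zv p ∈ A}.Finite := by
  obtain ⟨r, hr⟩ := hA.subset_closedBall 0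
  refine (Set.finite_Icc (fun _ => -⌈r⌉) (fun _ => ⌈r⌉)).subset fun p hp => ?_
  have h1 := hr hp
  rw [mem_closedBall_zero_iff] at h1
  have h2 : ∀ i, |(p i : ℝ)| ≤ ⌈r⌉ := fun i =>
    ((norm_le_pi_norm (zv p) i).trans h1).trans (Int.le_ceil r)
  constructor <;> intro i <;> have := abs_le.1 (h2 i)
  · exact_mod_cast this.1
  · exact_mod_cast this.2

lemma box_unique {d : ℕ} {a b : Fin d → ℝ} (hab : ∀ i, b i - a i < 1) {z : Fin d → ℝ}
    {p p' : Fin d → ℤ} (h : z + zv p ∈ Set.Icc a b) (h' : z + zv p' ∈ Set.Icc a b) : p = p' := by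
  ext i
  have h1 := h.1 i
  have h2 := h.2 i
  have h3 := h'.1 i
  have h4 := h'.2 i
  simp only [Pi.add_apply, zv] at h1 h2 h3 h4
  have h5 : (p i : ℝ) < p' i + 1 := by linarith [hab i]
  have h6 : (p' i : ℝ) < p i + 1 := by linarith [hab i]
  have h7 : p i < p' i + 1 := by exact_mod_cast h5
  have h8 : p' i < p i + 1 := by exact_mod_cast h6
  omega

lemma sum_hit {d : ℕ} {a b : Fin d → ℝ} (hab : ∀ i, b i - a i < 1) (z v : Fin d → ℝ)
    (Pf : Finset (Fin d → ℤ)) (hPf : ∀ p, z + v + zv p ∈ Set.Icc a b → p ∈ Pf) :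
    ∑ p ∈ Pf, ind (Set.Icc a b) (z + v + zv p) = ind (hit (Set.Icc a b) v) z := by
  by_cases h : z ∈ hit (Set.Icc a b) v
  · obtain ⟨p, hp⟩ := h
    rw [ind_mem (show z ∈ hit (Set.Icc a b) v from ⟨p, hp⟩), Finset.sum_eq_single p]
    · exact ind_mem hp
    · intro p' _ hne
      exact ind_notMem fun hp' => hne (box_unique hab hp' hp)
    · exact fun h => absurd (hPf p hp) h
  · rw [ind_notMem h]
    exact Finset.sum_eq_zero fun p _ => ind_notMem fun hp => h ⟨p, hp⟩

open scoped Pointwise in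
/-- Multiplication by the (periodic) indicator of a box modulo `ℤ^d` preserves the span of the
indicators of a family of bounded sets closed under intersection with boxes. -/
lemma mul_hit {d : ℕ} (𝒞 : Set (Set (Fin d → ℝ))) (hb : ∀ P ∈ 𝒞, Bornology.IsBounded P)
    (hi : ∀ P ∈ 𝒞, ∀ a b, P ∩ Set.Icc a b ∈ 𝒞) {a b : Fin d → ℝ} (hab : ∀ i, b i - a i < 1)
    (v : Fin d → ℝ) {f : (Fin d → ℝ) → ℝ} (hf : f ∈ Submodule.span ℝ (ind '' 𝒞)) :
    f * ind (hit (Set.Icc a b) v) ∈ Submodule.span ℝ (ind '' 𝒞) := by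
  induction hf using Submodule.span_induction with
  | mem f hf =>
    obtain ⟨P, hP, rfl⟩ := hf
    have hfin : {p : Fin d → ℤ | ∃ x ∈ P, x + v + zv p ∈ Set.Icc a b}.Finite := by
      refine (finite_zv (A := Set.Icc a b - (P + ({v} : Set (Fin d → ℝ)))) ?_).subset ?_
      · exact (Metric.isBounded_Icc a b).sub ((hb P hP).add (Bornology.isBounded_singleton (x := v)))
      · rintro p ⟨x, hx, hp⟩
        exact ⟨_, hp, x + v, Set.add_mem_add hx (Set.mem_singleton v), by simp⟩
    have : ind P * ind (hit (Set.Icc a b) v) =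
        ∑ p ∈ hfin.toFinset, ind (P ∩ Set.Icc (a - v - zv p) (b - v - zv p)) := by
      ext x
      rw [Pi.mul_apply, Finset.sum_apply]
      by_cases hx : x ∈ P
      · rw [ind_mem hx, one_mul, ← sum_hit hab x v hfin.toFinset]
        · refine Finset.sum_congr rfl fun p _ => ?_
          have : x + v + zv p ∈ Set.Icc a b ↔
              x ∈ P ∩ Set.Icc (a - v - zv p) (b - v - zv p) := by
            simp only [Set.mem_inter_iff, hx, true_and, Set.mem_Icc, sub_le_iff_le_add,
              le_sub_iff_add_le, add_right_comm]
          by_cases h : x + v + zv p ∈ Set.Icc a b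
          · rw [ind_mem h, ind_mem (this.1 h)]
          · rw [ind_notMem h, ind_notMem (fun h' => h (this.2 h'))]
        · intro p hp
          simpa using ⟨x, hx, hp⟩
      · rw [ind_notMem hx, zero_mul]
        exact (Finset.sum_eq_zero fun p _ => ind_notMem fun h => hx h.1).symm
    rw [this]
    exact Submodule.sum_mem _ fun p _ => Submodule.subset_span ⟨_, hi P hP _ _, rfl⟩
  | zero => simp
  | add f g _ _ hf hg => rw [add_mul]; exact Submodule.add_mem _ hf hg
  | smul c f _ hf => rw [smul_mul_assoc]; exact Submodule.smul_mem _ c hf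

lemma mul_prod_hit {d : ℕ} (𝒞 : Set (Set (Fin d → ℝ))) (hb : ∀ P ∈ 𝒞, Bornology.IsBounded P)
    (hi : ∀ P ∈ 𝒞, ∀ a b, P ∩ Set.Icc a b ∈ 𝒞) {a b : Fin d → ℝ} (hab : ∀ i, b i - a i < 1)
    (v : ℕ → Fin d → ℝ) {f : (Fin d → ℝ) → ℝ} (hf : f ∈ Submodule.span ℝ (ind '' 𝒞)) (k : ℕ) :
    (f * ∏ i ∈ Finset.range k, (1 - ind (hit (Set.Icc a b) (v i))))
      ∈ Submodule.span ℝ (ind '' 𝒞) := by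
  induction k with
  | zero => simpa using hf
  | succ k ih =>
    rw [Finset.prod_range_succ, ← mul_assoc, mul_sub, mul_one]
    exact Submodule.sub_mem _ ih (mul_hit 𝒞 hb hi hab _ ih)

lemma IsVal.trans_span {n : ℕ} {Ψ : ((Fin n → ℝ) → ℝ) →ₗ[ℝ] ℝ} (hΨ : IsVal Ψ)
    {f : (Fin n → ℝ) → ℝ} (hf : f ∈ Submodule.span ℝ (ind '' {P | IsCompact P ∧ Convex ℝ P}))
    (v : Fin n → ℝ) : Ψ (fun x => f (x + v)) = Ψ f := by
  induction hf using Submodule.span_induction with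
  | mem f hf =>
    obtain ⟨P, hP, rfl⟩ := hf
    exact hΨ.trans P hP.1 hP.2 v
  | zero => rfl
  | add f g _ _ hf hg =>
    rw [map_add, ← hf, ← hg, ← map_add]; rfl
  | smul c f _ hf =>
    rw [map_smul, ← hf, ← map_smul]; rfl

/-- Splitting according to the first index with `h i = 1`, for `h` with values in `{0, 1}`. -/
lemma sum_first (h : ℕ → ℝ) (n : ℕ) :
    ∑ k ∈ Finset.range n, h k * ∏ i ∈ Finset.range k, (1 - h i) =
      1 - ∏ i ∈ Finset.range n, (1 - h i) := by
  induction n with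
  | zero => simp
  | succ n ih => rw [Finset.sum_range_succ, ih, Finset.prod_range_succ]; ring

lemma sum_abel (N u : ℕ → ℝ) (h0 : N 0 = 0) (n : ℕ) :
    ∑ k ∈ Finset.range n, (N (k + 1) - N k) * u k =
      ∑ k ∈ Finset.range n, N (k + 1) * (u k - u (k + 1)) + N n * u n := by
  induction n with
  | zero => simp [h0]
  | succ n ih => rw [Finset.sum_range_succ, ih, Finset.sum_range_succ]; ring

open scoped Pointwise in
/-- If the visit counts of `S` between two visits of the box `Q = [a, b]` depend only on the time
elapsed, then `S` can be cut into pieces which are rearranged by translations into a linear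
combination of boxes. So translation-invariant valuations vanishing on boxes vanish on `S`. -/
lemma val_zero {d : ℕ} {α : Fin d → ℝ} {S : Set (Fin d → ℝ)} (hS : IsCompact S)
    (hSc : Convex ℝ S) {a b : Fin d → ℝ} (hab : ∀ i, b i - a i < 1) (R : ℕ)
    (hR : ∀ x, ∃ k ≤ R, ∃ p : Fin d → ℤ, x - (k : ℝ) • α + zv p ∈ Set.Icc a b) (c : ℕ → ℝ)
    (hN : ∀ᵐ y, y ∈ Set.Icc a b → ∀ (l : ℕ) (p : Fin d → ℤ), y + (l : ℝ) • α + zv p ∈ Set.Icc a b →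
      ∑ k ∈ Finset.range l, multFn S (y + (k : ℝ) • α) = c l)
    {Ψ : ((Fin d → ℝ) → ℝ) →ₗ[ℝ] ℝ} (hΨ : IsVal Ψ)
    (hbox : ∀ a b, Ψ (ind (Set.Icc a b)) = 0) : Ψ (ind S) = 0 := by
  set Q := Set.Icc a b with hQ
  have hfin : {p : Fin d → ℤ | ∃ k ∈ Finset.range (R + 1), ∃ z ∈ Q,
      z + (k : ℝ) • α + zv p ∈ S}.Finite := by
    have : {p : Fin d → ℤ | ∃ k ∈ Finset.range (R + 1), ∃ z ∈ Q, z + (k : ℝ) • α + zv p ∈ S} ⊆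
        ⋃ k ∈ Finset.range (R + 1), {p | zv p ∈ S - (Q + ({(k : ℝ) • α} : Set (Fin d → ℝ)))} := by
      rintro p ⟨k, hk, z, hz, hp⟩
      refine Set.mem_biUnion hk ⟨_, hp, z + (k : ℝ) • α,
        Set.add_mem_add hz (Set.mem_singleton _), by simp⟩
    refine Set.Finite.subset (Set.Finite.biUnion (Finset.finite_toSet _) fun k _ => ?_) this
    exact finite_zv
      (hS.isBounded.sub ((Metric.isBounded_Icc a b).add
        (Bornology.isBounded_singleton (x := (k : ℝ) • α))))
  set Pf := hfin.toFinset with hPf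
  have memPf : ∀ k ∈ Finset.range (R + 1), ∀ z ∈ Q, ∀ p, z + (k : ℝ) • α + zv p ∈ S → p ∈ Pf :=
    fun k hk z hz p hp => by rw [hPf, Set.Finite.mem_toFinset]; exact ⟨k, hk, z, hz, hp⟩
  -- `T k p` is the indicator of the points of `S` whose backward orbit modulo `ℤ^d` meets `Q`
  -- first after `k` steps, at the point `x - k α - p`
  let T : ℕ → (Fin d → ℤ) → (Fin d → ℝ) → ℝ := fun k p =>
    ind (S ∩ Set.Icc (a + (k : ℝ) • α + zv p) (b + (k : ℝ) • α + zv p)) *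
      ∏ i ∈ Finset.range k, (1 - ind (hit Q (-((i : ℝ) • α))))
  have hTmem : ∀ k p x, x ∈ S ∩ Set.Icc (a + (k : ℝ) • α + zv p) (b + (k : ℝ) • α + zv p) ↔
      x ∈ S ∧ x + -((k : ℝ) • α) - zv p ∈ Q := by
    intro k p x
    simp only [Set.mem_inter_iff, hQ, Set.mem_Icc, sub_le_iff_le_add,
      le_sub_iff_add_le, ← sub_eq_add_neg, add_right_comm]
  have h1 : ind S = ∑ k ∈ Finset.range (R + 1), ∑ p ∈ Pf, T k p := by
    ext x
    simp only [Finset.sum_apply, T, Pi.mul_apply, Finset.prod_apply, Pi.sub_apply, Pi.one_apply]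
    by_cases hx : x ∈ S
    · have e : ∀ k ∈ Finset.range (R + 1), ∑ p ∈ Pf,
          ind (S ∩ Set.Icc (a + (k : ℝ) • α + zv p) (b + (k : ℝ) • α + zv p)) x *
          ∏ i ∈ Finset.range k, (1 - ind (hit Q (-((i : ℝ) • α))) x) =
          ind (hit Q (-((k : ℝ) • α))) x *
          ∏ i ∈ Finset.range k, (1 - ind (hit Q (-((i : ℝ) • α))) x) := by
        intro k hk
        rw [← Finset.sum_mul]
        congr 1
        have hPf' : ∀ p, x + -((k : ℝ) • α) + zv p ∈ Q → p ∈ Pf.image (fun p => -p) := by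
          intro p hp
          refine Finset.mem_image.2 ⟨-p, memPf k hk _ hp (-p) ?_, neg_neg p⟩
          have : x + -((k : ℝ) • α) + zv p + (k : ℝ) • α + zv (-p) = x := by
            ext i; simp; ring
          rw [this]; exact hx
        rw [← sum_hit hab x _ _ hPf', Finset.sum_image (fun p _ q _ h => neg_injective h)]
        refine Finset.sum_congr rfl fun p _ => ?_
        have hz : x + -((k : ℝ) • α) + zv (-p) = x + -((k : ℝ) • α) - zv p := by
          ext i; simp [sub_eq_add_neg]
        rw [hz]
        by_cases h : x + -((k : ℝ) • α) - zv p ∈ Q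
        · rw [ind_mem h, ind_mem ((hTmem k p x).2 ⟨hx, h⟩)]
        · rw [ind_notMem h, ind_notMem fun h' => h ((hTmem k p x).1 h').2]
      rw [Finset.sum_congr rfl e, sum_first (fun k => ind (hit Q (-((k : ℝ) • α))) x), ind_mem hx]
      obtain ⟨k, hk, p, hp⟩ := hR x
      rw [Finset.prod_eq_zero (Finset.mem_range.2 (Nat.lt_succ_of_le hk)), sub_zero]
      rw [ind_mem, sub_self]
      exact ⟨p, by rwa [← sub_eq_add_neg]⟩
    · rw [ind_notMem hx]
      refine (Finset.sum_eq_zero fun k _ => Finset.sum_eq_zero fun p _ => ?_).symm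
      rw [ind_notMem fun h => hx h.1, zero_mul]
  have hcc_b : ∀ P ∈ {P : Set (Fin d → ℝ) | IsCompact P ∧ Convex ℝ P}, Bornology.IsBounded P :=
    fun P hP => hP.1.isBounded
  have hcc_i : ∀ P ∈ {P : Set (Fin d → ℝ) | IsCompact P ∧ Convex ℝ P}, ∀ a b,
      P ∩ Set.Icc a b ∈ {P : Set (Fin d → ℝ) | IsCompact P ∧ Convex ℝ P} :=
    fun P hP a b => ⟨hP.1.inter isCompact_Icc, hP.2.inter (convex_Icc a b)⟩
  have hbb_b : ∀ P ∈ {P : Set (Fin d → ℝ) | ∃ a b, P = Set.Icc a b}, Bornology.IsBounded P := by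
    rintro _ ⟨a, b, rfl⟩; exact Metric.isBounded_Icc a b
  have hbb_i : ∀ P ∈ {P : Set (Fin d → ℝ) | ∃ a b, P = Set.Icc a b}, ∀ a b,
      P ∩ Set.Icc a b ∈ {P : Set (Fin d → ℝ) | ∃ a b, P = Set.Icc a b} := by
    rintro _ ⟨a, b, rfl⟩ a' b'
    exact ⟨_, _, Set.Icc_inter_Icc⟩
  have hT : ∀ k p, T k p ∈ Submodule.span ℝ (ind '' {P : Set (Fin d → ℝ) | IsCompact P ∧ Convex ℝ P}) :=
    fun k p => mul_prod_hit _ hcc_b hcc_i hab _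
      (Submodule.subset_span ⟨_, hcc_i S ⟨hS, hSc⟩ _ _, rfl⟩) k
  set u : ℕ → (Fin d → ℝ) → ℝ := fun k =>
    ∏ i ∈ Finset.range k, (1 - ind (hit Q (((i + 1 : ℕ) : ℝ) • α))) with hu
  -- translate the pieces back to `Q`; `u k` singles out the points which do not return to `Q` in
  -- the steps `1, …, k`
  have h2 : Ψ (ind S) = Ψ (∑ k ∈ Finset.range (R + 1), ∑ p ∈ Pf,
      fun z => ind S (z + (k : ℝ) • α + zv p) * (ind Q z * u k z)) := by
    rw [congrArg Ψ h1]
    simp only [map_sum]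
    refine Finset.sum_congr rfl fun k _ => Finset.sum_congr rfl fun p _ => ?_
    rw [← hΨ.trans_span (hT k p) ((k : ℝ) • α + zv p)]
    congr 1
    ext z
    simp only [T, Pi.mul_apply, Finset.prod_apply, Pi.sub_apply, Pi.one_apply, hu]
    rw [← mul_assoc]
    congr 1
    · have hz : z + ((k : ℝ) • α + zv p) + -((k : ℝ) • α) - zv p = z := by
        ext i; simp; ring
      have := hTmem k p (z + ((k : ℝ) • α + zv p))
      rw [hz, ← add_assoc] at this
      rw [← add_assoc]
      by_cases hz1 : z + (k : ℝ) • α + zv p ∈ S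
      · by_cases hz2 : z ∈ Q
        · rw [ind_mem hz1, ind_mem hz2, ind_mem (this.2 ⟨hz1, hz2⟩), one_mul]
        · rw [ind_notMem hz2, ind_notMem fun h => hz2 (this.1 h).2, mul_zero]
      · rw [ind_notMem hz1, ind_notMem fun h => hz1 (this.1 h).1, zero_mul]
    · rw [← Finset.prod_range_reflect]
      refine Finset.prod_congr rfl fun i hi => ?_
      congr 1
      have hik : i < k := Finset.mem_range.1 hi
      have hc : ((k - 1 - i : ℕ) : ℝ) = k - (i + 1 : ℕ) := by
        rw [Nat.sub_sub, Nat.cast_sub (by omega)]; push_cast; ring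
      have hiff : z + ((k : ℝ) • α + zv p) ∈ hit Q (-(((k - 1 - i : ℕ) : ℝ) • α)) ↔
          z ∈ hit Q (((i + 1 : ℕ) : ℝ) • α) := by
        rw [hc]
        constructor
        · rintro ⟨p', hp'⟩
          refine ⟨p + p', ?_⟩
          convert hp' using 1
          ext j; simp; ring
        · rintro ⟨p', hp'⟩
          refine ⟨p' - p, ?_⟩
          convert hp' using 1
          ext j; simp; ring
      by_cases h : z ∈ hit Q (((i + 1 : ℕ) : ℝ) • α)
      · rw [ind_mem h, ind_mem (hiff.2 h)]
      · rw [ind_notMem h, ind_notMem fun hz => h (hiff.1 hz)]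
  -- summation by parts expresses the total through the visit counts `c (k + 1)` up to the first
  -- return to `Q`, which happens within `R + 1` steps
  have h3 : (∑ k ∈ Finset.range (R + 1), ∑ p ∈ Pf,
      fun z => ind S (z + (k : ℝ) • α + zv p) * (ind Q z * u k z)) =ᵐ[volume]
      ∑ k ∈ Finset.range (R + 1), c (k + 1) •
        (ind Q * u k * ind (hit Q (((k + 1 : ℕ) : ℝ) • α))) := by
    filter_upwards [hN] with z hz
    simp only [Finset.sum_apply, Pi.smul_apply, Pi.mul_apply, smul_eq_mul]
    by_cases hzQ : z ∈ Q
    swap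
    · rw [ind_notMem hzQ]; simp
    simp only [ind_mem hzQ, one_mul]
    set N : ℕ → ℝ := fun l => ∑ k ∈ Finset.range l, multFn S (z + (k : ℝ) • α) with hNdef
    have e1 : ∀ k ∈ Finset.range (R + 1), ∑ p ∈ Pf, ind S (z + (k : ℝ) • α + zv p) * u k z =
        (N (k + 1) - N k) * u k z := by
      intro k hk
      rw [← Finset.sum_mul]
      congr 1
      simp only [hNdef, Finset.sum_range_succ, add_sub_cancel_left]
      rw [multFn, tsum_eq_sum]
      intro p hp
      exact Set.indicator_of_notMem (fun h => hp (memPf k hk z hzQ p h)) _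
    have hu0 : u (R + 1) z = 0 := by
      obtain ⟨k, hk, p, hp⟩ := hR (z + ((R + 1 : ℕ) : ℝ) • α)
      simp only [hu, Finset.prod_apply, Pi.sub_apply, Pi.one_apply]
      refine Finset.prod_eq_zero (i := R - k) (Finset.mem_range.2 (by omega)) ?_
      rw [ind_mem, sub_self]
      refine ⟨p, ?_⟩
      convert hp using 1
      have : ((R - k + 1 : ℕ) : ℝ) = (R + 1 : ℕ) - k := by push_cast [Nat.cast_sub hk]; ring
      rw [this]
      ext j; simp; ring
    rw [Finset.sum_congr rfl e1, sum_abel N (fun k => u k z) (by simp [hNdef]), hu0, mul_zero,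
      add_zero]
    refine Finset.sum_congr rfl fun k hk => ?_
    have e2 : u k z - u (k + 1) z = u k z * ind (hit Q (((k + 1 : ℕ) : ℝ) • α)) z := by
      simp only [hu, Finset.prod_apply, Finset.prod_range_succ, Pi.sub_apply,
        Pi.one_apply]
      ring
    rw [e2]
    by_cases h : z ∈ hit Q (((k + 1 : ℕ) : ℝ) • α)
    · obtain ⟨p, hp⟩ := h
      rw [show N (k + 1) = c (k + 1) from hz hzQ (k + 1) p hp]
    · rw [ind_notMem h]; simp
  rw [h2]
  have h4 : Ψ (∑ k ∈ Finset.range (R + 1), c (k + 1) •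
        (ind Q * u k * ind (hit Q (((k + 1 : ℕ) : ℝ) • α)))) = 0 := by
    have hm : (∑ k ∈ Finset.range (R + 1), c (k + 1) •
        (ind Q * u k * ind (hit Q (((k + 1 : ℕ) : ℝ) • α)))) ∈
        Submodule.span ℝ (ind '' {P : Set (Fin d → ℝ) | ∃ a b, P = Set.Icc a b}) := by
      refine Submodule.sum_mem _ fun k _ => Submodule.smul_mem _ _ ?_
      apply mul_hit _ hbb_b hbb_i hab
      exact mul_prod_hit _ hbb_b hbb_i hab _ (Submodule.subset_span ⟨Q, ⟨a, b, rfl⟩, rfl⟩) k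
    have hle : Submodule.span ℝ (ind '' {P : Set (Fin d → ℝ) | ∃ a b, P = Set.Icc a b}) ≤
        LinearMap.ker Ψ := by
      rw [Submodule.span_le]
      rintro _ ⟨_, ⟨a, b, rfl⟩, rfl⟩
      exact hbox a b
    exact hle hm
  have h5 := hΨ.null _ h3.sub_eq
  rw [map_sub, h4, sub_zero] at h5
  exact h5

/-! ### Bounded remainder sets under irrational rotations -/

section Torus
open UnitAddTorus

/-- Oscillation of Birkhoff averages under a totally irrational translation of the torus tends to
zero: clear for characters, hence true for all continuous functions by density. -/
lemma birkhoff {d : ℕ} (β : UnitAddTorus (Fin d)) (hβ : ∀ n : Fin d → ℤ, n ≠ 0 → mFourier n β ≠ 1)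
    (f : C(UnitAddTorus (Fin d), ℂ)) : ∀ ε > 0, ∃ N₀ : ℕ, ∀ N ≥ N₀, ∀ x y,
      ‖∑ k ∈ Finset.range N, f (x + k • β) - ∑ k ∈ Finset.range N, f (y + k • β)‖ ≤ ε * N := by
  let A : Submodule ℂ C(UnitAddTorus (Fin d), ℂ) :=
    { carrier := {f | ∀ ε > 0, ∃ N₀ : ℕ, ∀ N ≥ N₀, ∀ x y,
      ‖∑ k ∈ Finset.range N, f (x + k • β) - ∑ k ∈ Finset.range N, f (y + k • β)‖ ≤ ε * N}
      add_mem' := by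
        intro f g hf hg ε hε
        obtain ⟨N₁, h1⟩ := hf (ε / 2) (by positivity)
        obtain ⟨N₂, h2⟩ := hg (ε / 2) (by positivity)
        refine ⟨max N₁ N₂, fun N hN x y => ?_⟩
        have e1 := h1 N ((le_max_left _ _).trans hN) x y
        have e2 := h2 N ((le_max_right _ _).trans hN) x y
        simp only [ContinuousMap.add_apply, Finset.sum_add_distrib]
        rw [add_sub_add_comm]
        refine (norm_add_le _ _).trans ?_
        linarith
      zero_mem' := by
        intro ε hε
        refine ⟨0, fun N _ x y => ?_⟩
        simp only [ContinuousMap.zero_apply, Finset.sum_const_zero, sub_self, norm_zero]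
        positivity
      smul_mem' := by
        intro c f hf ε hε
        obtain ⟨N₁, h1⟩ := hf (ε / (‖c‖ + 1)) (by positivity)
        refine ⟨N₁, fun N hN x y => ?_⟩
        have e1 := h1 N hN x y
        simp only [ContinuousMap.smul_apply, ← Finset.smul_sum, ← smul_sub, norm_smul]
        calc _ ≤ ‖c‖ * (ε / (‖c‖ + 1) * N) := by gcongr
          _ = (‖c‖ / (‖c‖ + 1)) * (ε * N) := by ring
          _ ≤ 1 * (ε * N) := by
            gcongr
            rw [div_le_one (by positivity)]; linarith
          _ = _ := one_mul _ }
  have hA : IsClosed (A : Set C(UnitAddTorus (Fin d), ℂ)) := by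
    rw [← isSeqClosed_iff_isClosed]
    intro u f hu hf ε hε
    obtain ⟨j, hj⟩ := ((Metric.tendsto_atTop.1 hf) (ε / 4) (by positivity))
    have hj' : ∀ x, ‖u j x - f x‖ ≤ ε / 4 := fun x => by
      rw [← ContinuousMap.sub_apply]
      refine ((u j - f).norm_coe_le_norm x).trans ?_
      rw [← dist_eq_norm]; exact (hj j le_rfl).le
    obtain ⟨N₁, h1⟩ := hu j (ε / 4) (by positivity)
    refine ⟨N₁, fun N hN x y => ?_⟩
    have hs : ∀ x, ‖∑ k ∈ Finset.range N, u j (x + k • β) - ∑ k ∈ Finset.range N, f (x + k • β)‖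
        ≤ ε / 4 * N := fun x => by
      rw [← Finset.sum_sub_distrib]
      refine (norm_sum_le_of_le _ fun k _ => hj' _).trans (le_of_eq ?_)
      simp [mul_comm]
    have e1 := h1 N hN x y
    have e2 := hs x
    have e3 := hs y
    have hN0 : (0 : ℝ) ≤ ε * N := by positivity
    calc _ = ‖(∑ k ∈ Finset.range N, u j (x + k • β) - ∑ k ∈ Finset.range N, u j (y + k • β))
          - (∑ k ∈ Finset.range N, u j (x + k • β) - ∑ k ∈ Finset.range N, f (x + k • β))
          + (∑ k ∈ Finset.range N, u j (y + k • β) - ∑ k ∈ Finset.range N, f (y + k • β))‖ := by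
          congr 1; ring
      _ ≤ _ := (norm_add_le _ _).trans (add_le_add_left (norm_sub_le _ _) _)
      _ ≤ _ := by linarith
  have hspan : Submodule.span ℂ (Set.range (mFourier (d := Fin d))) ≤ A := by
    rw [Submodule.span_le]
    rintro _ ⟨n, rfl⟩ ε hε
    by_cases hn : n = 0
    · refine ⟨0, fun N _ x y => ?_⟩
      subst hn
      simp only [mFourier_zero, ContinuousMap.one_apply, sub_self, norm_zero]
      positivity
    · set z := mFourier n β with hz
      have hz1 : z ≠ 1 := hβ n hn
      have hk : ∀ (x : UnitAddTorus (Fin d)) (k : ℕ),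
          mFourier n (x + k • β) = mFourier n x * z ^ k := by
        intro x k
        have hadd : ∀ x y : UnitAddTorus (Fin d),
            mFourier n (x + y) = mFourier n x * mFourier n y := by
          intro x y
          simp only [mFourier, ContinuousMap.coe_mk, ← Finset.prod_mul_distrib]
          refine Finset.prod_congr rfl fun i _ => ?_
          simp [fourier_apply, smul_add, AddCircle.toCircle_add]
        induction k with
        | zero => simp
        | succ k ih => rw [succ_nsmul, ← add_assoc, hadd, ih, pow_succ, mul_assoc]
      have hnorm : ∀ x, ‖mFourier n x‖ ≤ 1 := fun x =>
        ((mFourier n).norm_coe_le_norm x).trans mFourier_norm.le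
      have hz1' : 0 < ‖z - 1‖ := norm_pos_iff.2 (sub_ne_zero.2 hz1)
      have hsum : ∀ x N, ‖∑ k ∈ Finset.range N, mFourier n (x + k • β)‖ ≤ 2 / ‖z - 1‖ := by
        intro x N
        simp only [hk, ← Finset.mul_sum]
        rw [geom_sum_eq hz1, norm_mul, norm_div]
        have h1 : ‖z ^ N - 1‖ ≤ 2 := by
          refine (norm_sub_le _ _).trans ?_
          rw [norm_pow, norm_one]
          linarith [pow_le_one₀ (n := N) (norm_nonneg z) (hnorm β)]
        calc _ ≤ 1 * (2 / ‖z - 1‖) := by gcongr; exact hnorm x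
          _ = _ := one_mul _
      obtain ⟨N₀, hN₀⟩ := exists_nat_gt (4 / ‖z - 1‖ / ε)
      refine ⟨N₀, fun N hN x y => ?_⟩
      rw [div_lt_iff₀ hε] at hN₀
      have hNN : (N₀ : ℝ) ≤ N := by exact_mod_cast hN
      have := norm_sub_le (∑ k ∈ Finset.range N, mFourier n (x + k • β))
        (∑ k ∈ Finset.range N, mFourier n (y + k • β))
      have h1 := hsum x N
      have h2 := hsum y N
      have h3 : 2 / ‖z - 1‖ + 2 / ‖z - 1‖ = 4 / ‖z - 1‖ := by ring
      nlinarith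
  have htop : (⊤ : Submodule ℂ C(UnitAddTorus (Fin d), ℂ)) ≤ A := by
    rw [← span_mFourier_closure_eq_top]
    exact Submodule.topologicalClosure_minimal _ hspan hA
  exact htop trivial

/-- Kronecker's theorem with a uniform bound on the hitting time of an open set. -/
lemma torus_hit {d : ℕ} (β : UnitAddTorus (Fin d))
    (hβ : ∀ n : Fin d → ℤ, n ≠ 0 → mFourier n β ≠ 1) {U : Set (UnitAddTorus (Fin d))}
    (hU : IsOpen U) (hne : U.Nonempty) : ∃ R : ℕ, ∀ x, ∃ k < R, x + k • β ∈ U := by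
  by_cases hUc : Uᶜ.Nonempty
  swap
  · rw [Set.not_nonempty_iff_eq_empty, Set.compl_empty_iff] at hUc
    exact ⟨1, fun x => ⟨0, one_pos, by simp [hUc]⟩⟩
  set g : UnitAddTorus (Fin d) → ℝ := fun x => Metric.infDist x Uᶜ with hg
  have hgc : Continuous g := Metric.continuous_infDist_pt _
  have hgpos : ∀ x ∈ U, 0 < g x := fun x hx =>
    (hU.isClosed_compl.notMem_iff_infDist_pos hUc).1 (not_not.2 hx)
  have hg0 : ∀ x, 0 ≤ g x := fun x => Metric.infDist_nonneg
  have hgz : ∀ x, x ∉ U → g x = 0 := fun x hx => Metric.infDist_zero_of_mem hx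
  obtain ⟨u, hu⟩ := hne
  obtain ⟨t, ht⟩ := isCompact_univ.elim_finite_subcover
    (fun t : UnitAddTorus (Fin d) => {y | y + t ∈ U})
    (fun t => hU.preimage (continuous_add_const t))
    (fun y _ => Set.mem_iUnion.2 ⟨u - y, by simpa using hu⟩)
  have hpos : ∀ y, 0 < ∑ s ∈ t, g (y + s) := by
    intro y
    obtain ⟨s, hs, hy⟩ := Set.mem_iUnion₂.1 (ht (Set.mem_univ y))
    exact Finset.sum_pos' (fun s _ => hg0 _) ⟨s, hs, hgpos _ hy⟩
  obtain ⟨y₀, -, hy₀⟩ := isCompact_univ.exists_isMinOn Set.univ_nonempty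
    (f := fun y => ∑ s ∈ t, g (y + s)) (by fun_prop)
  set δ := ∑ s ∈ t, g (y₀ + s) with hδ
  have hδpos : 0 < δ := hpos y₀
  obtain ⟨N₀, hN₀⟩ := birkhoff β hβ ⟨fun x => (g x : ℂ), by fun_prop⟩ (δ / (2 * (t.card + 1)))
    (by positivity)
  refine ⟨N₀ + 1, fun x => ?_⟩
  by_contra! hcon
  have h1 : ∀ y, ∑ k ∈ Finset.range (N₀ + 1), g (y + k • β) ≤
      δ / (2 * (t.card + 1)) * (N₀ + 1 : ℕ) := by
    intro y
    have h2 := hN₀ (N₀ + 1) (Nat.le_succ _) y x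
    have h3 : ∑ k ∈ Finset.range (N₀ + 1), (g (x + k • β) : ℂ) = 0 :=
      Finset.sum_eq_zero fun k hk => by
        rw [hgz _ (hcon k (Finset.mem_range.1 hk))]; simp
    simp only [ContinuousMap.coe_mk] at h2
    rw [h3, sub_zero, ← Complex.ofReal_sum, Complex.norm_real] at h2
    exact (le_abs_self _).trans h2
  have h2 : δ * (N₀ + 1 : ℕ) ≤ t.card * (δ / (2 * (t.card + 1)) * (N₀ + 1 : ℕ)) := by
    calc δ * (N₀ + 1 : ℕ) = ∑ k ∈ Finset.range (N₀ + 1), δ := by simp [mul_comm]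
      _ ≤ ∑ k ∈ Finset.range (N₀ + 1), ∑ s ∈ t, g (y₀ + k • β + s) :=
        Finset.sum_le_sum fun k _ => hy₀ (Set.mem_univ _)
      _ = ∑ s ∈ t, ∑ k ∈ Finset.range (N₀ + 1), g (y₀ + s + k • β) := by
        rw [Finset.sum_comm]
        simp only [add_right_comm]
      _ ≤ ∑ s ∈ t, δ / (2 * (t.card + 1)) * (N₀ + 1 : ℕ) := Finset.sum_le_sum fun s _ => h1 _
      _ = _ := by simp
  have h3 : (t.card : ℝ) * (δ / (2 * (t.card + 1)) * (N₀ + 1 : ℕ)) =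
      (t.card / (t.card + 1)) / 2 * (δ * (N₀ + 1 : ℕ)) := by field_simp
  have h4 : (t.card : ℝ) / (t.card + 1) ≤ 1 := by
    rw [div_le_one (by positivity)]; linarith
  have h5 : 0 < δ * (N₀ + 1 : ℕ) := by positivity
  rw [h3] at h2
  nlinarith

end Torus

/-- Uniform hitting times of an open set of `ℝ^d`, modulo `ℤ^d`, for an irrational vector. -/
lemma exists_hit {d : ℕ} {α : Fin d → ℝ} (hα : IsIrrationalVector α) {U : Set (Fin d → ℝ)}
    (hU : IsOpen U) (hne : U.Nonempty) :
    ∃ R : ℕ, ∀ x, ∃ k ≤ R, ∃ p : Fin d → ℤ, x - (k : ℝ) • α + zv p ∈ U := by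
  set π : (Fin d → ℝ) → UnitAddTorus (Fin d) := fun x i => (x i : UnitAddCircle) with hπ
  have hopen : IsOpenMap π := by
    have : π = Pi.map (fun (_ : Fin d) (x : ℝ) => (x : UnitAddCircle)) := rfl
    rw [this]
    exact IsOpenMap.piMap (fun _ => QuotientAddGroup.isOpenMap_coe) (by simp)
  have hβ : ∀ n : Fin d → ℤ, n ≠ 0 → UnitAddTorus.mFourier n (π α) ≠ 1 := by
    intro n hn h1
    have h2 : UnitAddTorus.mFourier n (π α) =
        Complex.exp (2 * Real.pi * Complex.I * ((∑ i, (n i : ℝ) * α i : ℝ) : ℂ)) := by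
      simp only [UnitAddTorus.mFourier, ContinuousMap.coe_mk, hπ, fourier_coe_apply,
        ← Complex.exp_sum]
      congr 1
      push_cast
      rw [Finset.mul_sum]
      refine Finset.sum_congr rfl fun i _ => ?_
      ring
    rw [h2, Complex.exp_eq_one_iff] at h1
    obtain ⟨m, hm⟩ := h1
    rw [mul_comm] at hm
    have h3 := mul_right_cancel₀ (by simp [Real.pi_ne_zero]) hm
    have h4 : ∑ i, (n i : ℝ) * α i = m := by exact_mod_cast h3
    exact hn (hα (-m) n (by rw [h4]; push_cast; ring)).2
  obtain ⟨R, hR⟩ := torus_hit (π α) hβ (hopen U hU) (hne.image π)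
  refine ⟨R, fun x => ?_⟩
  obtain ⟨k, hk, u, hu, hux⟩ := hR (π (x - (R : ℝ) • α))
  refine ⟨R - k, Nat.sub_le _ _, ?_⟩
  have : ∀ i, ∃ p : ℤ, x i - ((R - k : ℕ) : ℝ) * α i + p = u i := by
    intro i
    have h1 := congrFun hux i
    have h2 : ((u i : ℝ) : UnitAddCircle) =
        ((x i - ((R - k : ℕ) : ℝ) * α i : ℝ) : UnitAddCircle) := by
      simp only [hπ] at h1
      rw [h1]
      simp only [Pi.add_apply, Pi.smul_apply]
      rw [← AddCircle.coe_nsmul, ← AddCircle.coe_add]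
      congr 1
      push_cast [Nat.cast_sub hk.le]
      simp
      ring
    rw [← sub_eq_zero, ← AddCircle.coe_sub, AddCircle.coe_eq_zero_iff] at h2
    obtain ⟨m, hm⟩ := h2
    exact ⟨m, by simp only [zsmul_eq_mul, mul_one] at hm; linarith⟩
  choose p hp using this
  refine ⟨p, ?_⟩
  convert hu using 1
  ext i
  simp [hp i]

open scoped Pointwise in
/-- The multiplicity function of a bounded set is locally constant off the boundary, and it takes
integer values. -/
lemma multFn_locally {d : ℕ} {S : Set (Fin d → ℝ)} (hS : Bornology.IsBounded S) (x : Fin d → ℝ) :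
    (∃ m : ℤ, multFn S x = m) ∧ ((∀ p, x + zv p ∉ frontier S) →
      ∀ᶠ y in nhds x, multFn S y = multFn S x) := by
  have hfin := finite_zv (hS.sub (Metric.isBounded_ball (x := x) (r := 1)))
  have hsum : ∀ y ∈ Metric.ball x 1, multFn S y = ∑ p ∈ hfin.toFinset, ind S (y + zv p) := by
    intro y hy
    rw [multFn, tsum_eq_sum]
    intro p hp
    refine Set.indicator_of_notMem (fun h => hp ?_) _
    rw [Set.Finite.mem_toFinset]
    exact ⟨_, h, y, hy, by simp⟩
  have hx := Metric.mem_ball_self (x := x) one_pos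
  constructor
  · rw [hsum x hx]
    have : ∀ p, ∃ m : ℤ, ind S (x + zv p) = m := by
      intro p
      by_cases h : x + zv p ∈ S
      · exact ⟨1, by rw [ind_mem h]; simp⟩
      · exact ⟨0, by rw [ind_notMem h]; simp⟩
    choose m hm using this
    exact ⟨∑ p ∈ hfin.toFinset, m p, by push_cast; exact Finset.sum_congr rfl fun p _ => hm p⟩
  · intro hfr
    have h1 : ∀ᶠ y in nhds x, ∀ p ∈ hfin.toFinset, ind S (y + zv p) = ind S (x + zv p) := by
      rw [Finset.eventually_all]
      intro p _
      have hc : ContinuousAt (fun y : Fin d → ℝ => y + zv p) x := by fun_prop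
      by_cases h : x + zv p ∈ S
      · have hi : x + zv p ∈ interior S := by
          by_contra h'; exact hfr p ⟨subset_closure h, h'⟩
        filter_upwards [hc.eventually_mem (isOpen_interior.mem_nhds hi)] with y hy
        rw [ind_mem h, ind_mem (interior_subset hy)]
      · have hi : x + zv p ∈ (closure S)ᶜ := fun h' =>
          hfr p ⟨h', fun h'' => h (interior_subset h'')⟩
        filter_upwards [hc.eventually_mem (isClosed_closure.isOpen_compl.mem_nhds hi)] with y hy
        rw [ind_notMem h, ind_notMem fun h' => hy (subset_closure h')]
    filter_upwards [h1, Metric.ball_mem_nhds x one_pos] with y hy hyb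
    rw [hsum y hyb, hsum x hx]
    exact Finset.sum_congr rfl hy

lemma multFn_add_zv {d : ℕ} (S : Set (Fin d → ℝ)) (x : Fin d → ℝ) (p : Fin d → ℤ) :
    multFn S (x + zv p) = multFn S x := by
  unfold multFn
  rw [← (Equiv.addLeft p).tsum_eq (fun k : Fin d → ℤ => Set.indicator S _ (x + fun i => (k i : ℝ)))]
  refine tsum_congr fun k => ?_
  congr 1
  ext i
  simp [add_assoc]

lemma disc_add {d : ℕ} (α : Fin d → ℝ) (S : Set (Fin d → ℝ)) (n l : ℕ) (y : Fin d → ℝ) :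
    disc α S (l + n) y = disc α S l y + disc α S n (y + (l : ℝ) • α) := by
  unfold disc
  rw [Finset.sum_range_add]
  have : ∀ k : ℕ, y + ((l + k : ℕ) : ℝ) • α = y + (l : ℝ) • α + (k : ℝ) • α := by
    intro k; push_cast; rw [add_smul, add_assoc]
  simp only [this]
  push_cast
  ring

lemma disc_zv {d : ℕ} (α : Fin d → ℝ) (S : Set (Fin d → ℝ)) (n : ℕ) (y : Fin d → ℝ)
    (p : Fin d → ℤ) : disc α S n (y + zv p) = disc α S n y := by
  unfold disc
  simp only [add_right_comm y (zv p), multFn_add_zv]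

/-- For a bounded remainder set there is an open set `U` such that the number of visits to `S` during
an excursion from `U` to `U` depends only on the length of the excursion. The set `U` is a
neighbourhood of a point where the difference of two discrepancies is almost maximal, which forces
the discrepancy of every excursion to be less than `1/4` in absolute value. -/
lemma excursion {d : ℕ} {α : Fin d → ℝ} {S : Set (Fin d → ℝ)} (hS : IsCompact S)
    (hSc : Convex ℝ S) (hbrs : IsBRS α S) : ∃ U : Set (Fin d → ℝ), IsOpen U ∧ U.Nonempty ∧
      ∃ c : ℕ → ℝ, ∀ᵐ y, y ∈ U → ∀ (l : ℕ) (p : Fin d → ℤ), y + (l : ℝ) • α + zv p ∈ U →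
        ∑ k ∈ Finset.range l, multFn S (y + (k : ℝ) • α) = c l := by
  obtain ⟨C, hC⟩ := hbrs
  set X : Set (Fin d → ℝ) := {x | (∀ n, |disc α S n x| ≤ max C 0) ∧
    ∀ (k : ℕ) (p : Fin d → ℤ), x + (k : ℝ) • α + zv p ∉ frontier S} with hX
  have hXae : ∀ᵐ x, x ∈ X := by
    have h1 : ∀ᵐ x : Fin d → ℝ, ∀ (k : ℕ) (p : Fin d → ℤ), x + (k : ℝ) • α + zv p ∉ frontier S := by
      rw [ae_all_iff]; intro k
      rw [ae_all_iff]; intro p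
      have h0 : volume ((fun x => x + ((k : ℝ) • α + zv p)) ⁻¹' frontier S) = 0 := by
        rw [measure_preimage_add_right]; exact hSc.addHaar_frontier volume
      filter_upwards [measure_eq_zero_iff_ae_notMem.1 h0] with x hx
      rw [add_assoc]; exact hx
    filter_upwards [hC, h1] with x hx hx1
    refine ⟨fun n => ?_, hx1⟩
    rcases Nat.eq_zero_or_pos n with rfl | hn
    · simp [disc]
    · exact (hx n hn).trans (le_max_left _ _)
  obtain ⟨x₁, hx₁⟩ : X.Nonempty := by
    have : (X ∩ Set.univ).Nonempty := by
      obtain ⟨x, hx⟩ := hXae.exists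
      exact ⟨x, hx, trivial⟩
    exact this.left
  set A : Set ℝ := {r | ∃ x ∈ X, ∃ n m, r = disc α S n x - disc α S m x} with hA
  have hAb : BddAbove A := by
    refine ⟨2 * max C 0, ?_⟩
    rintro _ ⟨x, hx, n, m, rfl⟩
    have h1 := abs_le.1 (hx.1 n)
    have h2 := abs_le.1 (hx.1 m)
    linarith
  have hle : ∀ x ∈ X, ∀ n m, disc α S n x - disc α S m x ≤ sSup A :=
    fun x hx n m => le_csSup hAb ⟨x, hx, n, m, rfl⟩
  obtain ⟨_, ⟨x₀, hx₀, n, m, rfl⟩, hgt⟩ := exists_lt_of_lt_csSup (s := A)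
    ⟨_, x₁, hx₁, 0, 0, rfl⟩ (sub_lt_self (sSup A) (show (0 : ℝ) < 1 / 4 by norm_num))
  have hloc : ∀ n, ∀ᶠ y in nhds x₀, disc α S n y = disc α S n x₀ := by
    intro n
    have : ∀ᶠ y in nhds x₀, ∀ k ∈ Finset.range n,
        multFn S (y + (k : ℝ) • α) = multFn S (x₀ + (k : ℝ) • α) := by
      rw [Finset.eventually_all]
      intro k _
      have hc : Filter.Tendsto (fun y : Fin d → ℝ => y + (k : ℝ) • α) (nhds x₀)
          (nhds (x₀ + (k : ℝ) • α)) := ContinuousAt.tendsto (by fun_prop)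
      exact hc.eventually ((multFn_locally hS.isBounded _).2 (hx₀.2 k))
    filter_upwards [this] with y hy
    simp only [disc]
    rw [Finset.sum_congr rfl hy]
  obtain ⟨U, hUs, hUo, hxU⟩ := mem_nhds_iff.1 (Filter.inter_mem (hloc n) (hloc m))
  refine ⟨U, hUo, ⟨x₀, hxU⟩, fun l => round ((l : ℝ) * (volume S).toReal), ?_⟩
  filter_upwards [hXae] with y hy hyU l p hp
  have e1 := disc_add α S n l y
  have e2 := disc_add α S m l y
  rw [← disc_zv α S n (y + (l : ℝ) • α) p, (hUs hp).1] at e1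
  rw [← disc_zv α S m (y + (l : ℝ) • α) p, (hUs hp).2] at e2
  -- extending only one of the two orbit segments by the excursion cannot exceed the supremum
  have e3 := hle y hy (l + n) m
  have e4 := hle y hy n (l + m)
  rw [(hUs hyU).2] at e3
  rw [(hUs hyU).1] at e4
  have e5 : |disc α S l y| < 1 / 4 := by rw [abs_lt]; constructor <;> linarith
  choose z hz using fun k : ℕ => (multFn_locally hS.isBounded (y + (k : ℝ) • α)).1
  simp only [disc, hz] at e5
  simp only [hz]
  -- the visit count is an integer within `1/4` of `l * Leb S`, so it equals the nearest integer
  have e6 := abs_sub_round ((l : ℝ) * (volume S).toReal)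
  norm_cast at e5 ⊢
  set r := round ((l : ℝ) * (volume S).toReal)
  set w := ∑ k ∈ Finset.range l, z k
  rw [abs_lt] at e5
  rw [abs_le] at e6
  have h1 : (w : ℝ) < r + 1 := by linarith
  have h2 : (r : ℝ) < w + 1 := by linarith
  have h3 : w < r + 1 := by exact_mod_cast h1
  have h4 : r < w + 1 := by exact_mod_cast h2
  omega

/-- Translation-invariant valuations which vanish on boxes vanish on bounded remainder convex
bodies. -/
lemma val_zero_of_brs {d : ℕ} {α : Fin d → ℝ} (hα : IsIrrationalVector α) {S : Set (Fin d → ℝ)}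
    (hS : IsCompact S) (hSc : Convex ℝ S) (hbrs : IsBRS α S)
    {Ψ : ((Fin d → ℝ) → ℝ) →ₗ[ℝ] ℝ} (hΨ : IsVal Ψ)
    (hbox : ∀ a b, Ψ (ind (Set.Icc a b)) = 0) : Ψ (ind S) = 0 := by
  obtain ⟨U, hUo, ⟨u, hu⟩, c, hc⟩ := excursion hS hSc hbrs
  obtain ⟨ε, hε, hεU⟩ := Metric.isOpen_iff.1 hUo u hu
  set r := min (ε / 2) (1 / 3) with hr
  have hr0 : 0 < r := lt_min (by positivity) (by norm_num)
  have hr1 : r ≤ ε / 2 := min_le_left _ _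
  have hr2 : r ≤ 1 / 3 := min_le_right _ _
  have hIcc : Set.Icc (u - fun _ => r) (u + fun _ => r) ⊆ U := by
    refine (Set.Subset.trans ?_ hεU)
    intro x hx
    have : dist x u ≤ r := by
      rw [dist_pi_le_iff hr0.le]
      intro i
      rw [Real.dist_eq, abs_le]
      have h1 := hx.1 i
      have h2 := hx.2 i
      simp only [Pi.sub_apply, Pi.add_apply] at h1 h2
      constructor <;> linarith
    exact Metric.mem_ball.2 (by linarith)
  obtain ⟨R, hR⟩ := exists_hit hα (U := Metric.ball u r) Metric.isOpen_ball ⟨u, by simpa using hr0⟩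
  have hball : Metric.ball u r ⊆ Set.Icc (u - fun _ => r) (u + fun _ => r) := by
    intro x hx
    have h1 : ∀ i, |x i - u i| ≤ r := fun i => by
      rw [← Real.dist_eq]; exact (dist_le_pi_dist x u i).trans (Metric.mem_ball.1 hx).le
    constructor <;> intro i <;> have := abs_le.1 (h1 i) <;>
      simp only [Pi.sub_apply, Pi.add_apply] <;> linarith
  refine val_zero (α := α) hS hSc (a := u - fun _ => r) (b := u + fun _ => r) (fun i => ?_) R
    (fun x => ?_) c ?_ hΨ hbox
  · simp only [Pi.sub_apply, Pi.add_apply]; linarith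
  · obtain ⟨k, hk, p, hp⟩ := hR x
    exact ⟨k, hk, p, hball hp⟩
  · filter_upwards [hc] with y hy hyQ l p hp
    exact hy (hIcc hyQ) l p (hIcc hp)

/-- The face relation: a translation-invariant valuation takes equal values on opposite faces of a
bounded remainder convex body. -/
lemma faces_of_brs {d k : ℕ} {α : Fin d → ℝ} (hα : IsIrrationalVector α) {S : Set (Fin d → ℝ)}
    (hS : IsCompact S) (hSc : Convex ℝ S) (hbrs : IsBRS α S)
    {Ψ : ((Fin k → ℝ) → ℝ) →ₗ[ℝ] ℝ} (hΨ : IsVal Ψ) (L : (Fin d → ℝ) ≃L[ℝ] (Fin k → ℝ) × ℝ) :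
    Ψ (ind (botFace (L '' S))) = Ψ (ind (topFace (L '' S))) := by
  obtain ⟨Ψ', hΨ', hf⟩ := hΨ.boundary L
  have := val_zero_of_brs hα hS hSc hbrs hΨ' (fun a b => by
    rw [hf _ isCompact_Icc (convex_Icc a b), box_boundary hΨ L, sub_self])
  rw [hf S hS hSc] at this
  linarith

/-! ### The one-dimensional Prékopa–Leindler inequality and its equality case -/

/-- The quantile function of a positive continuous density on an interval. -/
lemma exists_quantile {f : ℝ → ℝ} {a b : ℝ} (hab : a < b) (hfc : ContinuousOn f (Set.Ioo a b))
    (hfp : ∀ x ∈ Set.Ioo a b, 0 < f x) (hfi : IntegrableOn f (Set.Ioo a b)) :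
    0 < ∫ t in Set.Ioo a b, f t ∧ ∃ x : ℝ → ℝ, x '' Set.Ioo 0 1 = Set.Ioo a b ∧
      ∀ u ∈ Set.Ioo (0 : ℝ) 1, HasDerivAt x ((∫ t in Set.Ioo a b, f t) / f (x u)) u := by
  have hii : IntervalIntegrable f volume a b := by
    rwa [intervalIntegrable_iff_integrableOn_Ioo_of_le hab.le]
  set A := ∫ t in Set.Ioo a b, f t with hA
  have hAint : ∫ t in a..b, f t = A := by
    rw [intervalIntegral.integral_of_le hab.le, integral_Ioc_eq_integral_Ioo]
  have hApos : 0 < A := by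
    rw [← hAint]
    exact intervalIntegral.intervalIntegral_pos_of_pos_on hii hfp hab
  set F : ℝ → ℝ := fun x => (∫ t in a..x, f t) / A with hF
  have hsub : ∀ {x y}, a ≤ x → x ≤ y → y ≤ b → IntervalIntegrable f volume x y := by
    intro x y h1 h2 h3
    refine hii.mono_set ?_
    rw [Set.uIcc_of_le h2, Set.uIcc_of_le hab.le]
    exact Set.Icc_subset_Icc h1 h3
  have hFmono : StrictMonoOn F (Set.Icc a b) := by
    intro x hx y hy hxy
    have h1 : 0 < ∫ t in x..y, f t :=
      intervalIntegral.intervalIntegral_pos_of_pos_on (hsub hx.1 hxy.le hy.2)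
        (fun t ht => hfp t ⟨hx.1.trans_lt ht.1, ht.2.trans_le hy.2⟩) hxy
    have h2 := intervalIntegral.integral_add_adjacent_intervals (hsub le_rfl hx.1 hx.2)
      (hsub hx.1 hxy.le hy.2)
    have h3 : ∫ t in a..x, f t < ∫ t in a..y, f t := by linarith
    simp only [hF]
    gcongr
  have hFa : F a = 0 := by simp [hF]
  have hFb : F b = 1 := by simp only [hF, hAint]; exact div_self hApos.ne'
  have hFcont : ContinuousOn F (Set.Icc a b) := by
    apply ContinuousOn.div_const
    have := intervalIntegral.continuousOn_primitive_interval
      (f := f) (a := a) (b := b) (μ := volume) (by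
        rw [Set.uIcc_of_le hab.le, integrableOn_Icc_iff_integrableOn_Ioo]; exact hfi)
    rwa [Set.uIcc_of_le hab.le] at this
  have hFimg : ∀ u ∈ Set.Ioo (0 : ℝ) 1, ∃ t ∈ Set.Ioo a b, F t = u := by
    intro u hu
    rw [← hFa, ← hFb] at hu
    obtain ⟨t, ht, htu⟩ := intermediate_value_Ioo hab.le hFcont hu
    exact ⟨t, ht, htu⟩
  have hFmem : ∀ t ∈ Set.Ioo a b, F t ∈ Set.Ioo (0 : ℝ) 1 := by
    intro t ht
    rw [← hFa, ← hFb]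
    exact ⟨hFmono (Set.left_mem_Icc.2 hab.le) (Set.Ioo_subset_Icc_self ht) ht.1,
      hFmono (Set.Ioo_subset_Icc_self ht) (Set.right_mem_Icc.2 hab.le) ht.2⟩
  have hFderiv : ∀ t ∈ Set.Ioo a b, HasStrictDerivAt F (f t / A) t := by
    intro t ht
    have hnt : Set.Ioo a b ∈ nhds t := isOpen_Ioo.mem_nhds ht
    have h1 : HasStrictDerivAt (fun x => ∫ t in a..x, f t) (f t) t :=
      intervalIntegral.integral_hasStrictDerivAt_right (hsub le_rfl ht.1.le ht.2.le)
        ⟨Set.Ioo a b, hnt, hfc.aestronglyMeasurable measurableSet_Ioo⟩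
        (hfc.continuousAt hnt)
    exact h1.div_const A
  have hinj : Set.InjOn F (Set.Ioo a b) := (hFmono.mono Set.Ioo_subset_Icc_self).injOn
  set x := Function.invFunOn F (Set.Ioo a b) with hx
  have hxF : ∀ t ∈ Set.Ioo a b, x (F t) = t := fun t ht => hinj.leftInvOn_invFunOn ht
  refine ⟨hApos, x, ?_, ?_⟩
  · ext t
    constructor
    · rintro ⟨u, hu, rfl⟩
      obtain ⟨t, ht, rfl⟩ := hFimg u hu
      rw [hxF t ht]; exact ht
    · intro ht
      exact ⟨F t, hFmem t ht, hxF t ht⟩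
  · intro u hu
    obtain ⟨t, ht, rfl⟩ := hFimg u hu
    rw [hxF t ht]
    have := (hFderiv t ht).to_local_left_inverse (g := x)
      (div_ne_zero (hfp t ht).ne' hApos.ne') (by
        filter_upwards [isOpen_Ioo.mem_nhds ht] with s hs using hxF s hs)
    rw [inv_div] at this
    exact this.hasDerivAt

/-- Change of variables bound along an increasing curve. -/
lemma integral_comp_le {h z z' : ℝ → ℝ} (hz : ∀ u ∈ Set.Ioo (0 : ℝ) 1, HasDerivAt z (z' u) u)
    (hz' : ∀ u ∈ Set.Ioo (0 : ℝ) 1, 0 < z' u) (hh : Integrable h) (h0 : ∀ x, 0 ≤ h x) :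
    IntegrableOn (fun u => z' u * h (z u)) (Set.Ioo 0 1) ∧
      ∫ u in Set.Ioo (0 : ℝ) 1, z' u * h (z u) ≤ ∫ x, h x := by
  have hinj : Set.InjOn z (Set.Ioo 0 1) := by
    apply StrictMonoOn.injOn
    apply strictMonoOn_of_deriv_pos (convex_Ioo 0 1)
    · exact fun u hu => (hz u hu).continuousAt.continuousWithinAt
    · intro u hu
      rw [interior_Ioo] at hu
      rw [(hz u hu).deriv]; exact hz' u hu
  have hzw : ∀ u ∈ Set.Ioo (0 : ℝ) 1, HasDerivWithinAt z (z' u) (Set.Ioo 0 1) u :=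
    fun u hu => (hz u hu).hasDerivWithinAt
  have e : Set.EqOn (fun u => |z' u| • h (z u)) (fun u => z' u * h (z u)) (Set.Ioo 0 1) := by
    intro u hu
    simp only [abs_of_pos (hz' u hu), smul_eq_mul]
  constructor
  · have := (integrableOn_image_iff_integrableOn_abs_deriv_smul measurableSet_Ioo hzw hinj h).1
      hh.integrableOn
    exact this.congr_fun e measurableSet_Ioo
  · rw [← setIntegral_congr_fun measurableSet_Ioo e,
      ← integral_image_eq_integral_abs_deriv_smul measurableSet_Ioo hzw hinj]
    exact setIntegral_le_integral hh (Filter.Eventually.of_forall h0)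

/-- The one-dimensional Prékopa–Leindler inequality for positive continuous densities on
intervals, by transport: both densities are parametrized by their quantiles. -/
lemma prekopa {f g h : ℝ → ℝ} {a b a' b' r : ℝ} (hab : a < b) (hab' : a' < b')
    (hr0 : 0 < r) (hr1 : r < 1)
    (hfc : ContinuousOn f (Set.Ioo a b)) (hfp : ∀ x ∈ Set.Ioo a b, 0 < f x)
    (hfi : IntegrableOn f (Set.Ioo a b))
    (hgc : ContinuousOn g (Set.Ioo a' b')) (hgp : ∀ x ∈ Set.Ioo a' b', 0 < g x)
    (hgi : IntegrableOn g (Set.Ioo a' b')) (hh : Integrable h) (h0 : ∀ x, 0 ≤ h x)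
    (hfgh : ∀ x ∈ Set.Ioo a b, ∀ y ∈ Set.Ioo a' b',
      f x ^ (1 - r) * g y ^ r ≤ h ((1 - r) * x + r * y)) :
    (∫ x in Set.Ioo a b, f x) ^ (1 - r) * (∫ x in Set.Ioo a' b', g x) ^ r ≤ ∫ x, h x := by
  obtain ⟨hA, x, hx, hx'⟩ := exists_quantile hab hfc hfp hfi
  obtain ⟨hB, y, hy, hy'⟩ := exists_quantile hab' hgc hgp hgi
  set A := ∫ x in Set.Ioo a b, f x
  set B := ∫ x in Set.Ioo a' b', g x
  have hxm : ∀ u ∈ Set.Ioo (0 : ℝ) 1, x u ∈ Set.Ioo a b := fun u hu => hx ▸ Set.mem_image_of_mem _ hu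
  have hym : ∀ u ∈ Set.Ioo (0 : ℝ) 1, y u ∈ Set.Ioo a' b' :=
    fun u hu => hy ▸ Set.mem_image_of_mem _ hu
  have hr1' : 0 < 1 - r := by linarith
  obtain ⟨hi, hle⟩ := integral_comp_le (h := h) (z := fun u => (1 - r) * x u + r * y u)
    (z' := fun u => (1 - r) * (A / f (x u)) + r * (B / g (y u)))
    (fun u hu => ((hx' u hu).const_mul _).add ((hy' u hu).const_mul _))
    (fun u hu => by
      have h1 := hfp _ (hxm u hu)
      have h2 := hgp _ (hym u hu)
      positivity) hh h0
  refine le_trans ?_ hle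
  have hc : ∫ u in Set.Ioo (0 : ℝ) 1, A ^ (1 - r) * B ^ r = A ^ (1 - r) * B ^ r := by simp
  rw [← hc]
  refine setIntegral_mono_on (integrableOn_const (by simp)) hi measurableSet_Ioo fun u hu => ?_
  have h1 := hfp _ (hxm u hu)
  have h2 := hgp _ (hym u hu)
  have h3 := Real.geom_mean_le_arith_mean2_weighted hr1'.le hr0.le (div_pos hA h1).le
    (div_pos hB h2).le (by ring)
  have h4 := hfgh _ (hxm u hu) _ (hym u hu)
  calc A ^ (1 - r) * B ^ r
      = ((A / f (x u)) ^ (1 - r) * (B / g (y u)) ^ r) * (f (x u) ^ (1 - r) * g (y u) ^ r) := by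
        rw [Real.div_rpow hA.le h1.le, Real.div_rpow hB.le h2.le]
        have := (Real.rpow_pos_of_pos h1 (1 - r)).ne'
        have := (Real.rpow_pos_of_pos h2 r).ne'
        field_simp
    _ ≤ _ := by gcongr

/-- The equality case of the one-dimensional Prékopa–Leindler inequality: the densities agree up
to a translation. -/
lemma prekopa_eq {f g h : ℝ → ℝ} {a b a' b' : ℝ} (hab : a < b) (hab' : a' < b')
    (hfc : ContinuousOn f (Set.Ioo a b)) (hfp : ∀ x ∈ Set.Ioo a b, 0 < f x)
    (hfi : IntegrableOn f (Set.Ioo a b))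
    (hgc : ContinuousOn g (Set.Ioo a' b')) (hgp : ∀ x ∈ Set.Ioo a' b', 0 < g x)
    (hgi : IntegrableOn g (Set.Ioo a' b')) (hh : Integrable h) (h0 : ∀ x, 0 ≤ h x)
    (hfgh : ∀ x ∈ Set.Ioo a b, ∀ y ∈ Set.Ioo a' b',
      f x ^ (1 / 2 : ℝ) * g y ^ (1 / 2 : ℝ) ≤ h ((x + y) / 2))
    (hAB : ∫ x in Set.Ioo a b, f x = ∫ x in Set.Ioo a' b', g x)
    (hle : ∫ x, h x ≤ ∫ x in Set.Ioo a b, f x) :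
    ∃ c, a' = a + c ∧ b' = b + c ∧ ∀ x ∈ Set.Ioo a b, g (x + c) = f x := by
  obtain ⟨hA, x, hx, hx'⟩ := exists_quantile hab hfc hfp hfi
  obtain ⟨hB, y, hy, hy'⟩ := exists_quantile hab' hgc hgp hgi
  rw [← hAB] at hy' hB
  set A := ∫ x in Set.Ioo a b, f x
  have hxm : ∀ u ∈ Set.Ioo (0 : ℝ) 1, x u ∈ Set.Ioo a b := fun u hu => hx ▸ Set.mem_image_of_mem _ hu
  have hym : ∀ u ∈ Set.Ioo (0 : ℝ) 1, y u ∈ Set.Ioo a' b' :=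
    fun u hu => hy ▸ Set.mem_image_of_mem _ hu
  -- the midpoint of the two quantile curves transports `Ioo 0 1` into the domain of `h`
  obtain ⟨hi, hle'⟩ := integral_comp_le (h := h) (z := fun u => (x u + y u) / 2)
    (z' := fun u => (A / f (x u) + A / g (y u)) / 2)
    (fun u hu => ((hx' u hu).add (hy' u hu)).div_const 2)
    (fun u hu => by
      have h1 := hfp _ (hxm u hu)
      have h2 := hgp _ (hym u hu)
      positivity) hh h0
  set ψ : ℝ → ℝ := fun u =>
    (A / f (x u) + A / g (y u)) / 2 * (f (x u) ^ (1 / 2 : ℝ) * g (y u) ^ (1 / 2 : ℝ)) with hψ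
  have hxc : ContinuousOn x (Set.Ioo 0 1) :=
    fun u hu => (hx' u hu).continuousAt.continuousWithinAt
  have hyc : ContinuousOn y (Set.Ioo 0 1) :=
    fun u hu => (hy' u hu).continuousAt.continuousWithinAt
  have hfx : ContinuousOn (fun u => f (x u)) (Set.Ioo 0 1) := hfc.comp hxc hxm
  have hgy : ContinuousOn (fun u => g (y u)) (Set.Ioo 0 1) := hgc.comp hyc hym
  have hψc : ContinuousOn ψ (Set.Ioo 0 1) := by
    apply ContinuousOn.mul
    · apply ContinuousOn.div_const
      exact (continuousOn_const.div hfx fun u hu => (hfp _ (hxm u hu)).ne').add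
        (continuousOn_const.div hgy fun u hu => (hgp _ (hym u hu)).ne')
    · exact (hfx.rpow_const fun u hu => Or.inl (hfp _ (hxm u hu)).ne').mul
        (hgy.rpow_const fun u hu => Or.inl (hgp _ (hym u hu)).ne.symm)
  -- `ψ = A * (s / t + t / s) / 2` with `s, t` the square roots of the two densities
  have hψA : ∀ u ∈ Set.Ioo (0 : ℝ) 1, A ≤ ψ u ∧ (ψ u = A → f (x u) = g (y u)) := by
    intro u hu
    have h1 := hfp _ (hxm u hu)
    have h2 := hgp _ (hym u hu)
    simp only [hψ, ← Real.sqrt_eq_rpow]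
    set s := Real.sqrt (f (x u)) with hs
    set t := Real.sqrt (g (y u)) with ht
    have hs0 : 0 < s := Real.sqrt_pos.2 h1
    have ht0 : 0 < t := Real.sqrt_pos.2 h2
    have es : f (x u) = s ^ 2 := (Real.sq_sqrt h1.le).symm
    have et : g (y u) = t ^ 2 := (Real.sq_sqrt h2.le).symm
    rw [es, et]
    have e : (A / s ^ 2 + A / t ^ 2) / 2 * (s * t) = A + A * (s - t) ^ 2 / (2 * s * t) := by
      field_simp
      ring
    rw [e]
    constructor
    · have : 0 ≤ A * (s - t) ^ 2 / (2 * s * t) := by positivity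
      linarith
    · intro h
      have h3 : A * (s - t) ^ 2 / (2 * s * t) = 0 := by linarith
      have h4 : (s - t) ^ 2 = 0 := by
        rw [div_eq_zero_iff] at h3
        rcases h3 with h3 | h3
        · exact (mul_eq_zero.1 h3).resolve_left hA.ne'
        · exact absurd h3 (by positivity)
      have h5 : s = t := by
        have := pow_eq_zero_iff (two_ne_zero) |>.1 h4
        linarith
      rw [h5]
  have hψi : IntegrableOn ψ (Set.Ioo 0 1) := by
    refine Integrable.mono' hi (hψc.aestronglyMeasurable measurableSet_Ioo) ?_
    rw [ae_restrict_iff' measurableSet_Ioo]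
    refine Filter.Eventually.of_forall fun u hu => ?_
    have h1 := hfp _ (hxm u hu)
    have h2 := hgp _ (hym u hu)
    rw [Real.norm_of_nonneg (hA.le.trans (hψA u hu).1)]
    exact mul_le_mul_of_nonneg_left (hfgh _ (hxm u hu) _ (hym u hu)) (by positivity)
  have hψle : ∫ u in Set.Ioo (0 : ℝ) 1, ψ u ≤ A := by
    refine le_trans ?_ (hle'.trans hle)
    refine setIntegral_mono_on hψi hi measurableSet_Ioo fun u hu => ?_
    have h1 := hfp _ (hxm u hu)
    have h2 := hgp _ (hym u hu)
    exact mul_le_mul_of_nonneg_left (hfgh _ (hxm u hu) _ (hym u hu)) (by positivity)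
  have hAi : IntegrableOn (fun _ : ℝ => A) (Set.Ioo 0 1) := integrableOn_const (by simp)
  have hae : ψ =ᵐ[volume.restrict (Set.Ioo 0 1)] fun _ => A := by
    have h1 : 0 ≤ᵐ[volume.restrict (Set.Ioo 0 1)] fun u => ψ u - A := by
      rw [Filter.EventuallyLE, ae_restrict_iff' measurableSet_Ioo]
      exact Filter.Eventually.of_forall fun u hu => sub_nonneg.2 (hψA u hu).1
    have h2 : ∫ u in Set.Ioo (0 : ℝ) 1, (ψ u - A) = 0 := by
      apply le_antisymm
      · rw [integral_sub hψi hAi]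
        simp only [integral_const, MeasurableSet.univ, measureReal_restrict_apply, Set.univ_inter,
          Real.volume_real_Ioo, sub_zero, smul_eq_mul]
        simp only [zero_le_one, max_eq_left, one_mul]
        linarith
      · exact integral_nonneg_of_ae h1
    have h3 := (integral_eq_zero_iff_of_nonneg_ae h1 (hψi.sub hAi)).1 h2
    filter_upwards [h3] with u hu
    simpa [sub_eq_zero] using hu
  have heq : Set.EqOn ψ (fun _ => A) (Set.Ioo 0 1) :=
    Measure.eqOn_open_of_ae_eq hae isOpen_Ioo hψc continuousOn_const
  have hfg : ∀ u ∈ Set.Ioo (0 : ℝ) 1, f (x u) = g (y u) := fun u hu => (hψA u hu).2 (heq hu)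
  have hd : ∀ u ∈ Set.Ioo (0 : ℝ) 1, HasDerivAt (fun u => y u - x u) 0 u := by
    intro u hu
    have := (hy' u hu).sub (hx' u hu)
    rwa [hfg u hu, sub_self] at this
  obtain ⟨c, hc⟩ := isOpen_Ioo.exists_is_const_of_deriv_eq_zero
    (isPreconnected_Ioo (a := (0 : ℝ)) (b := 1))
    (fun u hu => (hd u hu).differentiableAt.differentiableWithinAt) (fun u hu => (hd u hu).deriv)
  have hyx : ∀ u ∈ Set.Ioo (0 : ℝ) 1, y u = x u + c := fun u hu => by
    have := hc u hu; linarith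
  have himg : Set.Ioo a' b' = Set.Ioo (a + c) (b + c) := by
    rw [← hy, ← Set.image_add_const_Ioo, ← hx, Set.image_image]
    exact Set.image_congr hyx
  have e1 := congrArg sInf himg
  have e2 := congrArg sSup himg
  rw [csInf_Ioo hab', csInf_Ioo (by linarith)] at e1
  rw [csSup_Ioo hab', csSup_Ioo (by linarith)] at e2
  refine ⟨c, e1, e2, fun t ht => ?_⟩
  rw [← hx] at ht
  obtain ⟨u, hu, rfl⟩ := ht
  rw [← hyx u hu, hfg u hu]

/-! ### Slices and the Brunn–Minkowski inequality -/

lemma interior_nonempty_of_vol {E : Type*} [NormedAddCommGroup E] [NormedSpace ℝ E]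
    [MeasurableSpace E] [BorelSpace E] [FiniteDimensional ℝ E] (μ : Measure E)
    [μ.IsAddHaarMeasure] {A : Set E} (hA : Convex ℝ A) (h : μ.real A ≠ 0) :
    (interior A).Nonempty := by
  rw [hA.interior_nonempty_iff_affineSpan_eq_top]
  by_contra hne
  apply h
  have h0 : μ A = 0 := measure_mono_null (subset_affineSpan ℝ A) (Measure.addHaar_affineSubspace μ _ hne)
  simp [Measure.real, h0]

lemma vol_pos_of_interior {E : Type*} [NormedAddCommGroup E] [NormedSpace ℝ E]
    [MeasurableSpace E] [BorelSpace E] [FiniteDimensional ℝ E] (μ : Measure E)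
    [μ.IsAddHaarMeasure] {A : Set E} (hA : IsCompact A) (h : (interior A).Nonempty) :
    0 < μ.real A :=
  ENNReal.toReal_pos (μ.measure_pos_of_nonempty_interior h).ne' hA.measure_lt_top.ne

/-- Linear isomorphisms rescale Lebesgue measure. -/
lemma vol_integral_image {n k : ℕ} (L : (Fin n → ℝ) ≃L[ℝ] (Fin k → ℝ) × ℝ) :
    ∃ κ : ℝ, 0 < κ ∧ (∀ A : Set (Fin n → ℝ), volume.real (L '' A) = κ * volume.real A) ∧
      ∀ (A : Set (Fin n → ℝ)) (g : (Fin k → ℝ) × ℝ → ℝ),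
        ∫ q in L '' A, g q = κ * ∫ x in A, g (L x) := by
  have : (volume : Measure ((Fin k → ℝ) × ℝ)).IsAddHaarMeasure := by
    rw [Measure.volume_eq_prod]; infer_instance
  have := L.symm.isAddHaarMeasure_map (volume : Measure ((Fin k → ℝ) × ℝ))
  have h := Measure.isAddLeftInvariant_eq_smul
    ((volume : Measure ((Fin k → ℝ) × ℝ)).map L.symm) (volume : Measure (Fin n → ℝ))
  have hpos := Measure.addHaarScalarFactor_pos_of_isAddHaarMeasure
    ((volume : Measure ((Fin k → ℝ) × ℝ)).map L.symm) (volume : Measure (Fin n → ℝ))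
  set c := Measure.addHaarScalarFactor
    ((volume : Measure ((Fin k → ℝ) × ℝ)).map L.symm) (volume : Measure (Fin n → ℝ)) with hc
  have h4 : ∀ A : Set (Fin n → ℝ), (L.symm.toHomeomorph : _ → _) ⁻¹' A = L '' A := fun A =>
    (L.toEquiv.image_eq_preimage_symm A).symm
  refine ⟨c, hpos, fun A => ?_, fun A g => ?_⟩
  swap
  · have h1 := L.symm.toHomeomorph.measurableEmbedding.setIntegral_map
      (μ := (volume : Measure ((Fin k → ℝ) × ℝ))) (fun x => g (L x)) A
    rw [h4] at h1
    have h2 : ∫ x in A, g (L x) ∂((volume : Measure ((Fin k → ℝ) × ℝ)).map L.symm) =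
        ∫ q in L '' A, g (L (L.symm q)) := h1
    simp only [ContinuousLinearEquiv.apply_symm_apply] at h2
    rw [← h2, h, Measure.restrict_smul, integral_smul_nnreal_measure]
    rfl
  have h1 := L.symm.toHomeomorph.measurableEmbedding.map_apply
    (volume : Measure ((Fin k → ℝ) × ℝ)) A
  rw [h4] at h1
  have h3 : ((volume : Measure ((Fin k → ℝ) × ℝ)).map L.symm) A = volume (L '' A) := h1
  rw [h] at h3
  rw [Measure.real, ← h3]
  simp [Measure.real]

lemma vol_image {n k : ℕ} (L : (Fin n → ℝ) ≃L[ℝ] (Fin k → ℝ) × ℝ) :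
    ∃ κ : ℝ, 0 < κ ∧ ∀ A : Set (Fin n → ℝ), volume.real (L '' A) = κ * volume.real A := by
  obtain ⟨κ, h1, h2, -⟩ := vol_integral_image L
  exact ⟨κ, h1, h2⟩

lemma exists_equiv {n k : ℕ} (h : n = k + 1) : Nonempty ((Fin n → ℝ) ≃L[ℝ] (Fin k → ℝ) × ℝ) := by
  refine ⟨ContinuousLinearEquiv.ofFinrankEq ?_⟩
  simp [h]

/-- Fubini for the horizontal slices of a compact set. -/
lemma slice_fubini {k : ℕ} {Q : Set ((Fin k → ℝ) × ℝ)} (hQ : IsCompact Q) :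
    Integrable (fun s => volume.real (slice Q s)) ∧
      ∫ s, volume.real (slice Q s) = volume.real Q := by
  have hmeas : MeasurableSet Q := hQ.isClosed.measurableSet
  have hfub : volume Q = ∫⁻ s, volume (slice Q s) := by
    rw [Measure.volume_eq_prod, Measure.prod_apply_symm hmeas]
    rfl
  have hm : Measurable fun s => volume (slice Q s) := measurable_measure_prodMk_right hmeas
  have hlt : ∀ s, volume (slice Q s) < ⊤ := fun s => (slice_compact hQ s).measure_lt_top
  constructor
  · apply integrable_toReal_of_lintegral_ne_top hm.aemeasurable
    rw [← hfub]
    exact hQ.measure_lt_top.ne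
  · simp only [Measure.real]
    rw [integral_toReal hm.aemeasurable (Filter.Eventually.of_forall hlt), hfub]

/-- Fubini data for the horizontal slices of a convex body. -/
lemma slice_data {k : ℕ} {Q : Set ((Fin k → ℝ) × ℝ)} (hQ : IsCompact Q) (hQc : Convex ℝ Q)
    (hi : (interior Q).Nonempty) : ∃ a b : ℝ, a < b ∧ (∀ q ∈ Q, a ≤ q.2 ∧ q.2 ≤ b) ∧
      (∃ q ∈ Q, q.2 = a) ∧ (∃ q ∈ Q, q.2 = b) ∧
      (∀ s ∈ Set.Ioo a b, 0 < volume.real (slice Q s)) ∧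
      Integrable (fun s => volume.real (slice Q s)) ∧
      ∫ s, volume.real (slice Q s) = volume.real Q ∧
      ∫ s in Set.Ioo a b, volume.real (slice Q s) = volume.real Q := by
  obtain ⟨q₀, hq₀⟩ := hi
  have hne : Q.Nonempty := ⟨q₀, interior_subset hq₀⟩
  obtain ⟨qa, hqa, ha⟩ := hQ.exists_isMinOn hne continuous_snd.continuousOn
  obtain ⟨qb, hqb, hb⟩ := hQ.exists_isMaxOn hne continuous_snd.continuousOn
  have ha' : ∀ q ∈ Q, qa.2 ≤ q.2 := fun q hq => ha hq
  have hb' : ∀ q ∈ Q, q.2 ≤ qb.2 := fun q hq => hb hq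
  have hev : ∀ᶠ s in nhds q₀.2, (q₀.1, s) ∈ interior Q := by
    have hc : ContinuousAt (fun s : ℝ => (q₀.1, s)) q₀.2 := by fun_prop
    exact hc.eventually (isOpen_interior.mem_nhds hq₀)
  obtain ⟨ε, hε, hball⟩ := Metric.eventually_nhds_iff.1 hev
  have h1 : qa.2 < q₀.2 := by
    have := ha' _ (interior_subset (@hball (q₀.2 - ε / 2) (by
      rw [Real.dist_eq, abs_lt]; constructor <;> linarith)))
    simp only at this
    linarith
  have h2 : q₀.2 < qb.2 := by
    have := hb' _ (interior_subset (@hball (q₀.2 + ε / 2) (by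
      rw [Real.dist_eq, abs_lt]; constructor <;> linarith)))
    simp only at this
    linarith
  have hint : ∀ s ∈ Set.Ioo qa.2 qb.2, ∃ w, (w, s) ∈ interior Q := by
    -- points of the segments from an interior point to the two extremal points
    have key : ∀ q ∈ Q, ∀ s : ℝ, ∀ t : ℝ, 0 ≤ t → t < 1 → (1 - t) * q₀.2 + t * q.2 = s →
        ∃ w, (w, s) ∈ interior Q := by
      intro q hq s t ht0 ht1 hs
      have := hQc.combo_interior_self_mem_interior hq₀ hq (a := 1 - t) (b := t) (by linarith) ht0
        (by ring)
      refine ⟨((1 - t) • q₀ + t • q).1, ?_⟩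
      convert this using 1
      ext
      · rfl
      · simp [← hs]
    intro s hs
    rcases le_total s q₀.2 with h | h
    · refine key qa hqa s ((q₀.2 - s) / (q₀.2 - qa.2)) (by apply div_nonneg <;> linarith) ?_ ?_
      · rw [div_lt_one (by linarith)]; linarith [hs.1]
      · have : q₀.2 - qa.2 ≠ 0 := by linarith
        field_simp; ring
    · refine key qb hqb s ((s - q₀.2) / (qb.2 - q₀.2)) (by apply div_nonneg <;> linarith) ?_ ?_
      · rw [div_lt_one (by linarith)]; linarith [hs.2]
      · have : qb.2 - q₀.2 ≠ 0 := by linarith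
        field_simp; ring
  obtain ⟨hint1, hint2⟩ := slice_fubini hQ
  refine ⟨qa.2, qb.2, h1.trans h2, fun q hq => ⟨ha' q hq, hb' q hq⟩, ⟨qa, hqa, rfl⟩,
    ⟨qb, hqb, rfl⟩, fun s hs => ?_, hint1, hint2, ?_⟩
  · obtain ⟨w, hw⟩ := hint s hs
    apply vol_pos_of_interior volume (slice_compact hQ s)
    refine ⟨w, ?_⟩
    rw [mem_interior_iff_mem_nhds] at hw ⊢
    have hc : ContinuousAt (fun w : Fin k → ℝ => (w, s)) w := by fun_prop
    exact hc.preimage_mem_nhds hw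
  · rw [← hint2, ← integral_Icc_eq_integral_Ioo]
    apply setIntegral_eq_integral_of_forall_compl_eq_zero
    intro s hs
    have : slice Q s = ∅ := by
      rw [Set.eq_empty_iff_forall_notMem]
      intro w hw
      exact hs ⟨ha' _ hw, hb' _ hw⟩
    rw [this]; simp

/-- The multiplicative Brunn–Minkowski inequality for the parameter `r` in dimension `n`. -/
def BM (n : ℕ) : Prop :=
  ∀ (A B C : Set (Fin n → ℝ)) (r : ℝ), IsCompact A → Convex ℝ A → IsCompact B → Convex ℝ B →
    IsCompact C → Convex ℝ C → 0 < r → r < 1 → (∀ a ∈ A, ∀ b ∈ B, (1 - r) • a + r • b ∈ C) →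
    volume.real A ^ (1 - r) * volume.real B ^ r ≤ volume.real C

/-- The volumes of the slices of a convex body depend continuously on the height, because they
are log-concave. -/
lemma slice_continuousOn {k : ℕ} (hk : BM k) {Q : Set ((Fin k → ℝ) × ℝ)} (hQ : IsCompact Q)
    (hQc : Convex ℝ Q) {a b : ℝ} (hpos : ∀ s ∈ Set.Ioo a b, 0 < volume.real (slice Q s)) :
    ContinuousOn (fun s => volume.real (slice Q s)) (Set.Ioo a b) := by
  have hconc : ConcaveOn ℝ (Set.Ioo a b) fun s => Real.log (volume.real (slice Q s)) := by
    rw [concaveOn_iff_forall_pos]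
    refine ⟨convex_Ioo a b, fun x hx y hy u v hu hv huv => ?_⟩
    have h := hk (slice Q x) (slice Q y) (slice Q (u • x + v • y)) v (slice_compact hQ _)
      (slice_convex hQc _) (slice_compact hQ _) (slice_convex hQc _) (slice_compact hQ _)
      (slice_convex hQc _) hv (by linarith) (fun w hw w' hw' => by
        have := hQc hw hw' hu.le hv.le huv
        rw [show 1 - v = u by linarith]
        exact this)
    have hx' := hpos x hx
    have hy' := hpos y hy
    have h2 := Real.log_le_log (by positivity) h
    rw [Real.log_mul (by positivity) (by positivity), Real.log_rpow hx', Real.log_rpow hy',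
      show 1 - v = u by linarith] at h2
    exact h2
  have hcont := hconc.continuousOn isOpen_Ioo
  have := hcont.rexp
  refine this.congr fun s hs => ?_
  simp only
  rw [Real.exp_log (hpos s hs)]

lemma bm_prod {k : ℕ} (hk : BM k) (A B C : Set ((Fin k → ℝ) × ℝ)) (r : ℝ) (hA : IsCompact A)
    (hAc : Convex ℝ A) (hB : IsCompact B) (hBc : Convex ℝ B) (hC : IsCompact C)
    (hCc : Convex ℝ C) (h0 : 0 < r) (h1 : r < 1)
    (h : ∀ a ∈ A, ∀ b ∈ B, (1 - r) • a + r • b ∈ C) :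
    volume.real A ^ (1 - r) * volume.real B ^ r ≤ volume.real C := by
  have : (volume : Measure ((Fin k → ℝ) × ℝ)).IsAddHaarMeasure := by
    rw [Measure.volume_eq_prod]; infer_instance
  by_cases hA0 : volume.real A = 0
  · rw [hA0, Real.zero_rpow (by linarith), zero_mul]; exact measureReal_nonneg
  by_cases hB0 : volume.real B = 0
  · rw [hB0, Real.zero_rpow (by linarith), mul_zero]; exact measureReal_nonneg
  obtain ⟨a, b, hab, -, -, -, hap, hai, -, haI⟩ :=
    slice_data hA hAc (interior_nonempty_of_vol _ hAc hA0)
  obtain ⟨a', b', hab', -, -, -, hbp, hbi, -, hbI⟩ :=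
    slice_data hB hBc (interior_nonempty_of_vol _ hBc hB0)
  obtain ⟨hint1, hint2⟩ := slice_fubini hC
  rw [← haI, ← hbI, ← hint2]
  refine prekopa hab hab' h0 h1 (slice_continuousOn hk hA hAc hap) hap hai.integrableOn
    (slice_continuousOn hk hB hBc hbp) hbp hbi.integrableOn hint1 (fun _ => measureReal_nonneg) ?_
  intro x hx y hy
  exact hk _ _ _ r (slice_compact hA _) (slice_convex hAc _) (slice_compact hB _)
    (slice_convex hBc _) (slice_compact hC _) (slice_convex hCc _) h0 h1
    fun w hw v hv => h _ hw _ hv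

/-- Brunn–Minkowski inequality for convex bodies, by induction on the dimension through the
one-dimensional Prékopa–Leindler inequality. -/
theorem brunn_minkowski (n : ℕ) : BM n := by
  induction n with
  | zero =>
    intro A B C r _ _ _ _ _ _ h0 h1 h
    have hone : ∀ X : Set (Fin 0 → ℝ), X.Nonempty → volume.real X = 1 := by
      intro X hX
      rw [hX.eq_univ]
      simp [Measure.real, volume_pi]
    rcases A.eq_empty_or_nonempty with rfl | hA
    · rw [measureReal_empty, Real.zero_rpow (by linarith), zero_mul]; exact measureReal_nonneg
    rcases B.eq_empty_or_nonempty with rfl | hB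
    · rw [measureReal_empty, Real.zero_rpow (by linarith), mul_zero]; exact measureReal_nonneg
    obtain ⟨x, hx⟩ := hA
    obtain ⟨y, hy⟩ := hB
    rw [hone A ⟨x, hx⟩, hone B ⟨y, hy⟩, hone C ⟨_, h x hx y hy⟩]
    simp
  | succ k hk =>
    intro A B C r hA hAc hB hBc hC hCc h0 h1 h
    obtain ⟨L⟩ := exists_equiv (rfl : k + 1 = k + 1)
    obtain ⟨κ, hκ, hv⟩ := vol_image L
    have key := bm_prod hk (L '' A) (L '' B) (L '' C) r (hA.image L.continuous)
      (hAc.linear_image L.toLinearMap) (hB.image L.continuous)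
      (hBc.linear_image L.toLinearMap) (hC.image L.continuous)
      (hCc.linear_image L.toLinearMap) h0 h1 (by
        rintro _ ⟨x, hx, rfl⟩ _ ⟨y, hy, rfl⟩
        exact ⟨_, h x hx y hy, by simp⟩)
    rw [hv, hv, hv, Real.mul_rpow hκ.le measureReal_nonneg, Real.mul_rpow hκ.le measureReal_nonneg]
      at key
    have h2 : κ ^ (1 - r) * κ ^ r = κ := by
      rw [← Real.rpow_add hκ]; simp
    refine le_of_mul_le_mul_left ?_ hκ
    calc κ * (volume.real A ^ (1 - r) * volume.real B ^ r)
        = (κ ^ (1 - r) * κ ^ r) * (volume.real A ^ (1 - r) * volume.real B ^ r) := by rw [h2]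
      _ = κ ^ (1 - r) * volume.real A ^ (1 - r) * (κ ^ r * volume.real B ^ r) := by ring
      _ ≤ _ := key

/-! ### Polytopes as intersections of half-spaces -/

/-- A polyhedron: an intersection of finitely many closed half-spaces. -/
def IsHPoly {n : ℕ} (P : Set (Fin n → ℝ)) : Prop :=
  ∃ (ι : Type) (_ : Finite ι) (l : ι → ((Fin n → ℝ) →L[ℝ] ℝ)) (c : ι → ℝ),
    P = {x | ∀ i, l i x ≤ c i}

/-- Fourier–Motzkin elimination of one variable. -/
lemma fourier_motzkin {n : ℕ} {ι : Type} [Finite ι] (l : ι → ((Fin n → ℝ) →L[ℝ] ℝ))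
    (b c : ι → ℝ) : IsHPoly {x | ∃ t : ℝ, ∀ i, l i x + b i * t ≤ c i} := by
  refine ⟨{i // b i = 0} ⊕ ({i // 0 < b i} × {i // b i < 0}), inferInstance,
    Sum.elim (fun i => l i.1) (fun p => (b p.1.1)⁻¹ • l p.1.1 - (b p.2.1)⁻¹ • l p.2.1),
    Sum.elim (fun i => c i.1) (fun p => (b p.1.1)⁻¹ * c p.1.1 - (b p.2.1)⁻¹ * c p.2.1), ?_⟩
  ext x
  constructor
  · rintro ⟨t, ht⟩ (i | ⟨⟨i, hi⟩, ⟨j, hj⟩⟩)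
    · have := ht i.1
      rw [i.2] at this
      simpa using this
    · have h1 := mul_le_mul_of_nonneg_left (ht i) (inv_pos.2 hi).le
      have h2 := mul_le_mul_of_nonpos_left (ht j) (inv_lt_zero.2 hj).le
      have e1 : (b i)⁻¹ * (l i x + b i * t) = (b i)⁻¹ * l i x + t := by field_simp
      have e2 : (b j)⁻¹ * (l j x + b j * t) = (b j)⁻¹ * l j x + t := by field_simp [hj.ne]
      rw [e1] at h1
      rw [e2] at h2
      simp only [Sum.elim_inr, sub_apply, smul_apply,
        smul_eq_mul]
      linarith
  · intro hx
    let lo : Set ℝ := Set.range fun j : {j // b j < 0} => (b j.1)⁻¹ * (c j.1 - l j.1 x)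
    let up : Set ℝ := Set.range fun i : {i // 0 < b i} => (b i.1)⁻¹ * (c i.1 - l i.1 x)
    have hlo : lo.Finite := Set.finite_range _
    have hup : up.Finite := Set.finite_range _
    have hlu : ∀ y ∈ lo, ∀ z ∈ up, y ≤ z := by
      rintro _ ⟨j, rfl⟩ _ ⟨i, rfl⟩
      have := hx (Sum.inr (i, j))
      simp only [Sum.elim_inr, sub_apply, smul_apply,
        smul_eq_mul] at this
      simp only
      linarith
    obtain ⟨t, ht1, ht2⟩ : ∃ t, (∀ y ∈ lo, y ≤ t) ∧ ∀ z ∈ up, t ≤ z := by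
      rcases lo.eq_empty_or_nonempty with h | h
      · rcases up.eq_empty_or_nonempty with h' | h'
        · exact ⟨0, by simp [h], by simp [h']⟩
        · exact ⟨sInf up, by simp [h], fun z hz => csInf_le hup.bddBelow hz⟩
      · exact ⟨sSup lo, fun y hy => le_csSup hlo.bddAbove hy,
          fun z hz => csSup_le h fun y hy => hlu y hy z hz⟩
    refine ⟨t, fun i => ?_⟩
    rcases lt_trichotomy (b i) 0 with hi | hi | hi
    · have h := mul_le_mul_of_nonpos_left (ht1 _ ⟨⟨i, hi⟩, rfl⟩) hi.le
      simp only [mul_inv_cancel_left₀ hi.ne] at h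
      linarith
    · have := hx (Sum.inl ⟨i, hi⟩)
      simp only [Sum.elim_inl] at this
      rw [hi]
      linarith
    · have h := mul_le_mul_of_nonneg_left (ht2 _ ⟨⟨i, hi⟩, rfl⟩) hi.le
      simp only [mul_inv_cancel_left₀ hi.ne'] at h
      linarith

/-- A polytope given by its vertices is a polyhedron. -/
lemma isHPoly_convexHull {n : ℕ} (V : Finset (Fin n → ℝ)) (hV : V.Nonempty) :
    IsHPoly (convexHull ℝ (V : Set (Fin n → ℝ))) := by
  induction hV using Finset.Nonempty.cons_induction with
  | singleton v =>
    refine ⟨Fin n ⊕ Fin n, inferInstance,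
      Sum.elim (fun i => ContinuousLinearMap.proj i) (fun i => - ContinuousLinearMap.proj i),
      Sum.elim (fun i => v i) (fun i => - v i), ?_⟩
    ext x
    simp only [Finset.coe_singleton, convexHull_singleton, Set.mem_singleton_iff,
      Set.mem_ofPred_eq, Sum.forall, Sum.elim_inl, Sum.elim_inr, ContinuousLinearMap.proj_apply,
      neg_apply, neg_le_neg_iff]
    constructor
    · rintro rfl; simp
    · rintro ⟨h1, h2⟩; exact funext fun i => le_antisymm (h1 i) (h2 i)
  | cons v s hv hs ih =>
    obtain ⟨ι, _, l, c, hlc⟩ := ih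
    have hsne : (s : Set (Fin n → ℝ)).Nonempty := hs
    have hcomp : IsCompact (convexHull ℝ (s : Set (Fin n → ℝ))) :=
      s.finite_toSet.isCompact_convexHull ℝ
    -- the recession cone of a polytope is trivial
    have hrec : ∀ y, (∀ i, l i y ≤ 0) → y = 0 := by
      intro y hy
      obtain ⟨p, hp⟩ := hsne.convexHull (𝕜 := ℝ)
      by_contra hne
      obtain ⟨R, hR⟩ := hcomp.isBounded.exists_norm_le
      have hmem : ∀ m : ℕ, p + (m : ℝ) • y ∈ convexHull ℝ (s : Set (Fin n → ℝ)) := by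
        intro m
        rw [hlc] at hp ⊢
        intro i
        have h1 := hp i
        have h2 := mul_nonpos_of_nonneg_of_nonpos (Nat.cast_nonneg (α := ℝ) m) (hy i)
        simp only [map_add, map_smul, smul_eq_mul]
        linarith
      obtain ⟨m, hm⟩ := exists_nat_gt ((R + ‖p‖) / ‖y‖)
      rw [div_lt_iff₀ (norm_pos_iff.2 hne)] at hm
      have h1 := hR _ (hmem m)
      have h2 : ‖(m : ℝ) • y‖ ≤ ‖p + (m : ℝ) • y‖ + ‖p‖ := by
        have := norm_sub_le (p + (m : ℝ) • y) p
        simpa using this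
      rw [norm_smul, Real.norm_natCast] at h2
      linarith
    have := fourier_motzkin (n := n) (ι := ι ⊕ Bool)
      (Sum.elim l (fun _ => 0)) (Sum.elim (fun i => c i - l i v) (fun j => if j then 1 else -1))
      (Sum.elim c (fun j => if j then 1 else 0))
    convert this using 1
    rw [Finset.coe_cons, convexHull_insert hsne]
    ext x
    rw [mem_convexJoin]
    simp only [Set.mem_singleton_iff, exists_eq_left, Set.mem_ofPred_eq, Sum.forall, Sum.elim_inl,
      Sum.elim_inr, Bool.forall_bool, zero_apply, zero_add, Bool.false_eq_true,
      if_false, if_true, one_mul]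
    constructor
    · rintro ⟨y, hy, a, b, ha, hb, hab, rfl⟩
      refine ⟨a, fun i => ?_, by linarith, by linarith⟩
      rw [hlc] at hy
      have h1 := mul_le_mul_of_nonneg_left (hy i) hb
      obtain rfl : b = 1 - a := by linarith
      simp only [map_add, map_smul, smul_eq_mul]
      linarith
    · rintro ⟨t, h1, h2, h3⟩
      rcases eq_or_lt_of_le h3 with rfl | h3
      · have hz : x - v = 0 := hrec _ fun i => by
          have := h1 i
          rw [map_sub]
          linarith
        obtain ⟨p, hp⟩ := hsne.convexHull (𝕜 := ℝ)
        rw [sub_eq_zero] at hz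
        exact ⟨p, hp, hz ▸ left_mem_segment ℝ v p⟩
      · have ht : 0 < 1 - t := by linarith
        refine ⟨(1 - t)⁻¹ • (x - t • v), ?_, t, 1 - t, by linarith, ht.le, by ring, ?_⟩
        · rw [hlc]
          intro i
          have := h1 i
          simp only [map_sub, map_smul, smul_eq_mul]
          rw [inv_mul_le_iff₀ ht]
          linarith
        · rw [smul_inv_smul₀ ht.ne']
          abel

/-- A horizontal slice of a polyhedron is a polyhedron. -/
lemma IsHPoly.slice_image {n k : ℕ} {P : Set (Fin n → ℝ)} (hP : IsHPoly P)
    (L : (Fin n → ℝ) ≃L[ℝ] (Fin k → ℝ) × ℝ) (t : ℝ) : IsHPoly (slice (L '' P) t) := by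
  obtain ⟨ι, hι, l, c, rfl⟩ := hP
  refine ⟨ι, hι, fun i => (l i).comp ((L.symm : (Fin k → ℝ) × ℝ →L[ℝ] (Fin n → ℝ)).comp
    (ContinuousLinearMap.inl ℝ (Fin k → ℝ) ℝ)), fun i => c i - l i (L.symm (0, t)), ?_⟩
  ext w
  have h1 : w ∈ slice (L '' {x | ∀ i, l i x ≤ c i}) t ↔ ∀ i, l i (L.symm (w, t)) ≤ c i := by
    constructor
    · rintro ⟨x, hx, hxw⟩
      rw [← hxw]
      simpa using hx
    · intro h
      exact ⟨L.symm (w, t), h, by simp⟩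
  rw [h1]
  refine forall_congr' fun i => ?_
  have h2 : L.symm (w, t) = L.symm (w, 0) + L.symm (0, t) := by
    rw [← map_add]; simp
  rw [h2, map_add, ← le_sub_iff_add_le]
  rfl

/-! ### Slabs -/

/-- Any nonzero linear functional is the height function of suitable linear coordinates. -/
lemma exists_height {k : ℕ} (l : (Fin (k + 1) → ℝ) →L[ℝ] ℝ) (hl : l ≠ 0) :
    ∃ L : (Fin (k + 1) → ℝ) ≃L[ℝ] (Fin k → ℝ) × ℝ, ∀ x, (L x).2 = l x := by
  have hl' : (l : (Fin (k + 1) → ℝ) →ₗ[ℝ] ℝ) ≠ 0 := by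
    intro h
    apply hl
    ext1 x
    exact LinearMap.congr_fun h x
  have hrank := Module.Dual.finrank_ker_add_one_of_ne_zero hl'
  simp only [Module.finrank_fintype_fun_eq_card, Fintype.card_fin, add_left_inj] at hrank
  have e : LinearMap.ker (l : (Fin (k + 1) → ℝ) →ₗ[ℝ] ℝ) ≃ₗ[ℝ] (Fin k → ℝ) :=
    LinearEquiv.ofFinrankEq _ _ (by simpa using hrank)
  obtain ⟨p, hp⟩ := LinearMap.exists_leftInverse_of_injective
    (LinearMap.ker (l : (Fin (k + 1) → ℝ) →ₗ[ℝ] ℝ)).subtype (Submodule.ker_subtype _)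
  let f : (Fin (k + 1) → ℝ) →ₗ[ℝ] (Fin k → ℝ) × ℝ :=
    (e.toLinearMap ∘ₗ p).prod (l : (Fin (k + 1) → ℝ) →ₗ[ℝ] ℝ)
  have hf : Function.Injective f := by
    rw [← LinearMap.ker_eq_bot, LinearMap.ker_eq_bot']
    intro x hx
    have h1 : e (p x) = 0 := congrArg Prod.fst hx
    have h2 : l x = 0 := congrArg Prod.snd hx
    rw [map_eq_zero_iff e e.injective] at h1
    have h3 : p x = ⟨x, h2⟩ := LinearMap.congr_fun hp ⟨x, h2⟩
    rw [h3] at h1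
    exact congrArg Subtype.val h1
  refine ⟨(LinearMap.linearEquivOfInjective f hf (by simp)).toContinuousLinearEquiv, fun x => rfl⟩

/-- A polyhedron `K` is cut out by finitely many pairwise non-proportional slabs
`{x | ℓ x ∈ ℓ(K)}`. -/
lemma exists_slabs {n : ℕ} {K : Set (Fin n → ℝ)} (hP : IsHPoly K) (hK : K.Nonempty) :
    ∃ T : Finset ((Fin n → ℝ) →L[ℝ] ℝ), (∀ x, (∀ l ∈ T, ∃ y ∈ K, l y = l x) → x ∈ K) ∧
      ∀ l ∈ T, l ≠ 0 ∧ ∀ l' ∈ T, l' ≠ l → ∃ x, l x = 0 ∧ l' x ≠ 0 := by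
  classical
  have hex : ∃ N, ∃ T : Finset ((Fin n → ℝ) →L[ℝ] ℝ), T.card = N ∧
      (∀ x, (∀ l ∈ T, ∃ y ∈ K, l y = l x) → x ∈ K) := by
    obtain ⟨ι, _, l, c, rfl⟩ := hP
    have := Fintype.ofFinite ι
    refine ⟨_, Finset.univ.image l, rfl, fun x hx i => ?_⟩
    obtain ⟨y, hy, hyx⟩ := hx (l i) (Finset.mem_image_of_mem _ (Finset.mem_univ i))
    rw [← hyx]
    exact hy i
  obtain ⟨T, hT, hTK⟩ := Nat.find_spec hex
  -- in a family of least cardinality no slab is redundant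
  have hmin : ∀ l ∈ T, ¬ ∀ x, (∀ l' ∈ T.erase l, ∃ y ∈ K, l' y = l' x) → x ∈ K := by
    intro l hl h
    refine Nat.find_min hex ?_ ⟨T.erase l, rfl, h⟩
    rw [← hT]
    exact Finset.card_erase_lt_of_mem hl
  refine ⟨T, hTK, fun l hl => ⟨?_, fun l' hl' hne => ?_⟩⟩
  · rintro rfl
    obtain ⟨y, hy⟩ := hK
    refine hmin 0 hl fun x hx => hTK x fun l' hl' => ?_
    by_cases h : l' = 0
    · exact ⟨y, hy, by simp [h]⟩
    · exact hx l' (Finset.mem_erase.2 ⟨h, hl'⟩)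
  · by_contra! hcon
    refine hmin l' hl' fun x hx => hTK x fun l'' hm => ?_
    by_cases h : l'' = l'
    · subst h
      obtain ⟨y, hy, hyx⟩ := hx l (Finset.mem_erase.2 ⟨hne.symm, hl⟩)
      refine ⟨y, hy, ?_⟩
      have := hcon (y - x) (by rw [map_sub, hyx, sub_self])
      rwa [map_sub, sub_eq_zero] at this
    · exact hx l'' (Finset.mem_erase.2 ⟨h, hm⟩)

/-- The intersection of the slabs `a i + c i ≤ l i x ≤ b i + c i`. -/
def slab {n : ℕ} {ι : Type*} (l : ι → ((Fin n → ℝ) →L[ℝ] ℝ)) (a b c : ι → ℝ) :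
    Set (Fin n → ℝ) :=
  {x | ∀ i, a i + c i ≤ l i x ∧ l i x ≤ b i + c i}

lemma slab_convex {n : ℕ} {ι : Type*} (l : ι → ((Fin n → ℝ) →L[ℝ] ℝ)) (a b c : ι → ℝ) :
    Convex ℝ (slab l a b c) := by
  intro x hx y hy u v hu hv huv i
  have h1 := hx i
  have h2 := hy i
  simp only [map_add, map_smul, smul_eq_mul]
  obtain rfl : v = 1 - u := by linarith
  constructor <;> nlinarith

lemma slab_compact {n : ℕ} {ι : Type*} [Fintype ι] {l : ι → ((Fin n → ℝ) →L[ℝ] ℝ)}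
    (hinj : ∀ x, (∀ i, l i x = 0) → x = 0) (a b c : ι → ℝ) : IsCompact (slab l a b c) := by
  let f : (Fin n → ℝ) →ₗ[ℝ] (ι → ℝ) := LinearMap.pi fun i => (l i : (Fin n → ℝ) →ₗ[ℝ] ℝ)
  have hf : LinearMap.ker f = ⊥ := by
    rw [LinearMap.ker_eq_bot']
    intro x hx
    exact hinj x fun i => congrFun hx i
  have hcl := LinearMap.isClosedEmbedding_of_injective hf
  have := hcl.isCompact_preimage (isCompact_Icc (a := a + c) (b := b + c))
  convert this using 1
  ext x
  simp only [slab, Set.mem_ofPred_eq, Set.mem_preimage, Set.mem_Icc, Pi.le_def, Pi.add_apply,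
    ← forall_and]
  rfl

/-! ### The derivative of the volume when a slab moves -/

/-- The slice volumes of a compact set `J` are continuous at a height `t` at which the slice is
convex and its interior points are interior to `J` in the vertical direction. -/
lemma slice_continuousAt {k : ℕ} {J : Set ((Fin k → ℝ) × ℝ)} (hJ : IsCompact J)
    (hJc : Convex ℝ J) {t : ℝ}
    (h : ∀ w ∈ interior (slice J t), ∀ᶠ s in nhds t, w ∈ slice J s) :
    ContinuousAt (fun s => volume.real (slice J s)) t := by
  have hB : IsCompact (Prod.fst '' J) := hJ.image continuous_fst
  have key := tendsto_measure_of_ae_tendsto_indicator (μ := (volume : Measure (Fin k → ℝ)))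
    (nhds t) (A := slice J t) (As := fun s => slice J s) (B := Prod.fst '' J)
    (slice_compact hJ t).isClosed.measurableSet
    (fun s => (slice_compact hJ s).isClosed.measurableSet) hB.isClosed.measurableSet
    hB.measure_lt_top.ne (Filter.Eventually.of_forall fun s w hw => ⟨(w, s), hw, rfl⟩) ?_
  · exact (ENNReal.tendsto_toReal (slice_compact hJ t).measure_lt_top.ne).comp key
  · have hfr : ∀ᵐ w : Fin k → ℝ, w ∉ frontier (slice J t) :=
      measure_eq_zero_iff_ae_notMem.1 ((slice_convex hJc t).addHaar_frontier volume)
    filter_upwards [hfr] with w hw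
    by_cases hwt : w ∈ slice J t
    · have hwi : w ∈ interior (slice J t) := by
        by_contra hn
        exact hw ⟨subset_closure hwt, hn⟩
      filter_upwards [h w hwi] with s hs
      simp [hs, hwt]
    · have hc : ContinuousAt (fun s : ℝ => (w, s)) t := by fun_prop
      have := hc.eventually (hJ.isClosed.isOpen_compl.mem_nhds hwt)
      filter_upwards [this] with s hs
      exact ⟨fun h => absurd h hs, fun h => absurd h hwt⟩

lemma hasDerivAt_integral {m : ℝ → ℝ} (hm : Integrable m) (hmm : StronglyMeasurable m)
    {a b : ℝ} (ha : ContinuousAt m a) (hb : ContinuousAt m b) (hab : m a = m b) :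
    HasDerivAt (fun δ => ∫ s in (a + δ)..(b + δ), m s) 0 0 := by
  have h1 : ∀ c, ContinuousAt m c → HasDerivAt (fun δ => ∫ s in (0 : ℝ)..(c + δ), m s) (m c) 0 := by
    intro c hc
    have := intervalIntegral.integral_hasDerivAt_right (hm.intervalIntegrable (a := 0) (b := c))
      hmm.stronglyMeasurableAtFilter hc
    have h2 : HasDerivAt (fun δ : ℝ => c + δ) 1 0 := by
      simpa using (hasDerivAt_id (0 : ℝ)).const_add c
    have h3 := HasDerivAt.comp (0 : ℝ) (h₂ := fun u => ∫ s in (0 : ℝ)..u, m s) (by simpa using this) h2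
    rw [mul_one] at h3
    exact h3
  have h2 := (h1 b hb).sub (h1 a ha)
  rw [hab, sub_self] at h2
  refine h2.congr_of_eventuallyEq (Filter.Eventually.of_forall fun δ => ?_)
  simp only [Pi.sub_apply]
  rw [intervalIntegral.integral_interval_sub_left hm.intervalIntegrable hm.intervalIntegrable]

/-- Moving the `i`-th slab of a convex body cut out by slabs does not change the volume to first
order, provided that the two faces in the boundary of this slab have the same area. -/
lemma slab_deriv {k : ℕ} {ι : Type*} [Fintype ι] [DecidableEq ι]
    {l : ι → ((Fin (k + 1) → ℝ) →L[ℝ] ℝ)} (hinj : ∀ x, (∀ i, l i x = 0) → x = 0)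
    {a b : ι → ℝ} (i : ι) (hab : a i ≤ b i) (hnp : ∀ j ≠ i, ∃ x, l i x = 0 ∧ l j x ≠ 0)
    (L : (Fin (k + 1) → ℝ) ≃L[ℝ] (Fin k → ℝ) × ℝ) (hL : ∀ x, (L x).2 = l i x)
    (heq : volume.real (slice (L '' slab l a b 0) (a i)) =
      volume.real (slice (L '' slab l a b 0) (b i))) :
    HasDerivAt (fun δ => volume.real (slab l a b (Pi.single i δ))) 0 0 := by
  set a' := a - Pi.single i 1 with ha'
  set b' := b + Pi.single i 1 with hb'
  set J := L '' slab l a' b' 0 with hJ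
  have hJcomp : IsCompact J := (slab_compact hinj a' b' 0).image L.continuous
  have hJconv : Convex ℝ J := (slab_convex l a' b' 0).linear_image L.toLinearMap
  obtain ⟨κ, hκ, hvol⟩ := vol_image L
  have hmem : ∀ (a b c : ι → ℝ) (q : (Fin k → ℝ) × ℝ), q ∈ L '' slab l a b c ↔
      ∀ j, a j + c j ≤ l j (L.symm q) ∧ l j (L.symm q) ≤ b j + c j := by
    intro a b c q
    constructor
    · rintro ⟨x, hx, rfl⟩
      rw [L.symm_apply_apply]
      exact hx
    · intro h
      exact ⟨L.symm q, h, by simp⟩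
  have hli : ∀ q, l i (L.symm q) = q.2 := fun q => by rw [← hL]; simp
  have hJmem : ∀ q, q ∈ J ↔ (∀ j, j ≠ i → a j ≤ l j (L.symm q) ∧ l j (L.symm q) ≤ b j) ∧
      a i - 1 ≤ q.2 ∧ q.2 ≤ b i + 1 := by
    intro q
    rw [hJ, hmem]
    constructor
    · intro h
      refine ⟨fun j hj => ?_, ?_⟩
      · have := h j
        simpa [ha', hb', hj] using this
      · have := h i
        simpa [ha', hb', hli] using this
    · rintro ⟨h1, h2⟩ j
      by_cases hj : j = i
      · subst hj
        simpa [ha', hb', hli] using h2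
      · simpa [ha', hb', hj] using h1 j hj
  have hslice : ∀ δ : ℝ, |δ| ≤ 1 → ∀ s, slice (L '' slab l a b (Pi.single i δ)) s =
      if s ∈ Set.Icc (a i + δ) (b i + δ) then slice J s else ∅ := by
    intro δ hδ s
    rw [abs_le] at hδ
    ext w
    have h1 : w ∈ slice (L '' slab l a b (Pi.single i δ)) s ↔
        (∀ j, j ≠ i → a j ≤ l j (L.symm (w, s)) ∧ l j (L.symm (w, s)) ≤ b j) ∧
          a i + δ ≤ s ∧ s ≤ b i + δ := by
      refine (hmem _ _ _ _).trans ?_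
      constructor
      · intro h
        refine ⟨fun j hj => ?_, ?_⟩
        · have := h j
          simpa [hj] using this
        · have := h i
          simpa [hli] using this
      · rintro ⟨h1, h2⟩ j
        by_cases hj : j = i
        · subst hj
          simpa [hli] using h2
        · simpa [hj] using h1 j hj
    rw [h1]
    split_ifs with hs
    · refine Iff.trans ?_ (hJmem (w, s)).symm
      constructor
      · rintro ⟨h1, h2, h3⟩
        exact ⟨h1, by simp only; linarith, by simp only; linarith⟩
      · rintro ⟨h1, -⟩
        exact ⟨h1, hs⟩
    · simp only [Set.mem_empty_iff_false, iff_false]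
      exact fun h => hs h.2
  -- the volume in terms of the slices of `J`
  have hV : ∀ δ : ℝ, |δ| ≤ 1 → κ * volume.real (slab l a b (Pi.single i δ)) =
      ∫ s in (a i + δ)..(b i + δ), volume.real (slice J s) := by
    intro δ hδ
    rw [← hvol, ← (slice_fubini ((slab_compact hinj a b _).image L.continuous)).2,
      intervalIntegral.integral_of_le (by linarith), ← integral_Icc_eq_integral_Ioc,
      ← integral_indicator measurableSet_Icc]
    congr 1
    ext s
    rw [hslice δ hδ s]
    by_cases hs : s ∈ Set.Icc (a i + δ) (b i + δ)
    · rw [if_pos hs, Set.indicator_of_mem hs]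
    · rw [if_neg hs, Set.indicator_of_notMem hs, measureReal_empty]
  have hcont : ∀ t, a i ≤ t → t ≤ b i → ContinuousAt (fun s => volume.real (slice J s)) t := by
    intro t hat htb
    apply slice_continuousAt hJcomp hJconv
    intro w hw
    have hw' : ∀ᶠ w' in nhds w, (w', t) ∈ J := mem_interior_iff_mem_nhds.1 hw
    have hstrict : ∀ j, j ≠ i → a j < l j (L.symm (w, t)) ∧ l j (L.symm (w, t)) < b j := by
      intro j hj
      -- `l j` is not constant along the slice
      obtain ⟨x, hx0, hx1⟩ := hnp j hj
      have hx2 : L x = ((L x).1, 0) := Prod.ext rfl (by rw [hL, hx0])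
      have hc : ContinuousAt (fun ε : ℝ => w + ε • (L x).1) 0 := by fun_prop
      have hc' : Filter.Tendsto (fun ε : ℝ => w + ε • (L x).1) (nhds 0) (nhds w) := by
        have := hc.tendsto
        simpa using this
      have hev := hc'.eventually hw'
      obtain ⟨ε, hε, hball⟩ := Metric.eventually_nhds_iff.1 hev
      have hval : ∀ η : ℝ, l j (L.symm (w + η • (L x).1, t)) =
          l j (L.symm (w, t)) + η * l j x := by
        intro η
        have : (w + η • (L x).1, t) = (w, t) + η • L x := by
          rw [hx2]; simp
        rw [this]
        simp
      have hp := ((hJmem _).1 (@hball (ε / 2) (by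
        rw [Real.dist_eq, sub_zero, abs_of_pos] <;> linarith))).1 j hj
      have hm := ((hJmem _).1 (@hball (-(ε / 2)) (by
        rw [Real.dist_eq, sub_zero, abs_neg, abs_of_pos] <;> linarith))).1 j hj
      rw [hval] at hp hm
      rcases lt_or_gt_of_ne hx1 with h | h
      · have := mul_neg_of_pos_of_neg (half_pos hε) h
        constructor <;> linarith
      · have := mul_pos (half_pos hε) h
        constructor <;> linarith
    have hev1 : ∀ᶠ s in nhds t, ∀ j, j ≠ i →
        a j < l j (L.symm (w, s)) ∧ l j (L.symm (w, s)) < b j := by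
      rw [Filter.eventually_all]
      intro j
      by_cases hj : j = i
      · simp [hj]
      · have hcj : ContinuousAt (fun s : ℝ => l j (L.symm (w, s))) t := by fun_prop
        filter_upwards [hcj.eventually (lt_mem_nhds (hstrict j hj).1),
          hcj.eventually (gt_mem_nhds (hstrict j hj).2)] with s h1 h2 _
        exact ⟨h1, h2⟩
    filter_upwards [hev1, lt_mem_nhds (show a i - 1 < t by linarith),
      gt_mem_nhds (show t < b i + 1 by linarith)] with s h1 h2 h3
    exact (hJmem _).2 ⟨fun j hj => ⟨(h1 j hj).1.le, (h1 j hj).2.le⟩, h2.le, h3.le⟩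
  have hm : StronglyMeasurable fun s => volume.real (slice J s) :=
    (measurable_measure_prodMk_right hJcomp.isClosed.measurableSet).ennreal_toReal.stronglyMeasurable
  have hs0 := hslice 0 (by simp)
  simp only [Pi.single_zero, add_zero] at hs0
  rw [hs0, hs0, if_pos ⟨le_rfl, hab⟩, if_pos ⟨hab, le_rfl⟩] at heq
  have hd := hasDerivAt_integral (slice_fubini hJcomp).1 hm (hcont _ le_rfl hab)
    (hcont _ hab le_rfl) heq
  have hd' := hd.const_mul κ⁻¹
  rw [mul_zero] at hd'
  refine hd'.congr_of_eventuallyEq ?_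
  filter_upwards [Metric.closedBall_mem_nhds (0 : ℝ) one_pos] with δ hδ
  rw [← hV δ (by simpa using hδ), inv_mul_cancel_left₀ hκ.ne.symm]

/-! ### Log-concavity and maximality of the volume -/

/-- The volume of an intersection of slabs is a log-concave function of the displacements. -/
lemma slab_concave {n : ℕ} {ι : Type*} [Fintype ι] {l : ι → ((Fin n → ℝ) →L[ℝ] ℝ)}
    (hinj : ∀ x, (∀ i, l i x = 0) → x = 0) (a b : ι → ℝ) :
    ConcaveOn ℝ {c | 0 < volume.real (slab l a b c)}
      fun c => Real.log (volume.real (slab l a b c)) := by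
  have key : ∀ c c' : ι → ℝ, 0 < volume.real (slab l a b c) → 0 < volume.real (slab l a b c') →
      ∀ u v : ℝ, 0 < u → 0 < v → u + v = 1 →
        volume.real (slab l a b c) ^ u * volume.real (slab l a b c') ^ v ≤
          volume.real (slab l a b (u • c + v • c')) := by
    intro c c' hc hc' u v hu hv huv
    obtain rfl : u = 1 - v := by linarith
    refine brunn_minkowski n _ _ _ v (slab_compact hinj _ _ _) (slab_convex _ _ _ _)
      (slab_compact hinj _ _ _) (slab_convex _ _ _ _) (slab_compact hinj _ _ _)
      (slab_convex _ _ _ _) hv (by linarith) fun x hx y hy i => ?_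
    have h1 := hx i
    have h2 := hy i
    simp only [map_add, map_smul, smul_eq_mul, Pi.add_apply, Pi.smul_apply]
    constructor <;> nlinarith
  rw [concaveOn_iff_forall_pos]
  constructor
  · rw [convex_iff_forall_pos]
    intro c hc c' hc' u v hu hv huv
    have hc : 0 < volume.real (slab l a b c) := hc
    have hc' : 0 < volume.real (slab l a b c') := hc'
    exact lt_of_lt_of_le (by positivity) (key c c' hc hc' u v hu hv huv)
  · intro c hc c' hc' u v hu hv huv
    have hc : 0 < volume.real (slab l a b c) := hc
    have hc' : 0 < volume.real (slab l a b c') := hc'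
    have := Real.log_le_log (by positivity) (key c c' hc hc' u v hu hv huv)
    rw [Real.log_mul (by positivity) (by positivity), Real.log_rpow hc, Real.log_rpow hc'] at this
    exact this

/-- A critical point of the volume of an intersection of slabs is a global maximum. -/
lemma slab_le {n : ℕ} {ι : Type*} [Fintype ι] [DecidableEq ι] {l : ι → ((Fin n → ℝ) →L[ℝ] ℝ)}
    (hinj : ∀ x, (∀ i, l i x = 0) → x = 0) (a b : ι → ℝ)
    (h0 : 0 < volume.real (slab l a b 0))
    (hd : ∀ i, HasDerivAt (fun δ => volume.real (slab l a b (Pi.single i δ))) 0 0) (v : ι → ℝ) :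
    volume.real (slab l a b v) ≤ volume.real (slab l a b 0) := by
  by_contra! hlt
  have hconc := slab_concave hinj a b
  set V : (ι → ℝ) → ℝ := fun c => volume.real (slab l a b c) with hV
  have hV0 : 0 < V 0 := h0
  have hVv : 0 < V v := h0.trans hlt
  have hlog : Real.log (V 0) < Real.log (V v) := Real.log_lt_log h0 hlt
  rcases isEmpty_or_nonempty ι with hι | hι
  · rw [Subsingleton.elim v 0] at hlt
    exact lt_irrefl _ hlt
  have hN : (0 : ℝ) < Fintype.card ι := by exact_mod_cast Fintype.card_pos
  set N : ℝ := ((Fintype.card ι : ℕ) : ℝ) with hNdef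
  have hsc : ∀ i, HasDerivAt (fun ε : ℝ => -(N * v i) * ε) (-(N * v i)) 0 := fun i => by
    simpa using (hasDerivAt_id (0 : ℝ)).const_mul (-(N * v i))
  have hVi : ∀ i, HasDerivAt (fun ε : ℝ => V (Pi.single i (-(N * v i) * ε))) 0 0 := by
    intro i
    have := HasDerivAt.comp (0 : ℝ) (h₂ := fun δ => V (Pi.single i δ)) (h := fun ε : ℝ => -(N * v i) * ε)
      (by simpa using hd i) (hsc i)
    rw [zero_mul] at this
    exact this
  -- `-ε v` is the average of the `N` displacements `-N v i ε` of single slabs, so `g ε` is a lower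
  -- bound for the logarithm of the volume at `-ε v`
  let g : ℝ → ℝ := fun ε => ∑ i, N⁻¹ * Real.log (V (Pi.single i (-(N * v i) * ε)))
  have hg : HasDerivAt g 0 0 := by
    have : HasDerivAt g (∑ i : ι, N⁻¹ * (0 / V (Pi.single i (-(N * v i) * 0)))) 0 := by
      refine HasDerivAt.fun_sum fun i _ => ?_
      refine ((hVi i).log ?_).const_mul _
      simpa using hV0.ne'
    simpa using this
  have hg0 : g 0 = Real.log (V 0) := by
    simp only [g, mul_zero, Pi.single_zero, Finset.sum_const, Finset.card_univ, nsmul_eq_mul]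
    rw [← hNdef]
    field_simp
  have hw : ∑ _i : ι, N⁻¹ = 1 := by
    simp only [Finset.sum_const, Finset.card_univ, nsmul_eq_mul]
    rw [← hNdef]
    field_simp
  have hev : ∀ᶠ ε in nhds (0 : ℝ), ∀ i, 0 < V (Pi.single i (-(N * v i) * ε)) := by
    rw [Filter.eventually_all]
    intro i
    refine (hVi i).continuousAt.eventually (lt_mem_nhds ?_)
    simpa using hV0
  have hslope := hg.tendsto_slope_zero_right
  have hbound : ∀ᶠ ε in nhdsWithin (0 : ℝ) (Set.Ioi 0),
      ε⁻¹ • (g (0 + ε) - g 0) ≤ -(Real.log (V v) - Real.log (V 0)) := by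
    filter_upwards [nhdsWithin_le_nhds hev, self_mem_nhdsWithin] with ε hε hpos
    have hpos : 0 < ε := hpos
    have hsum : ∑ i, N⁻¹ • (Pi.single i (-(N * v i) * ε) : ι → ℝ) = -(ε • v) := by
      ext j
      simp only [Finset.sum_apply, Pi.smul_apply, Pi.single_apply, smul_eq_mul, mul_ite, mul_zero,
        Finset.sum_ite_eq, Finset.mem_univ, if_true, Pi.neg_apply]
      field_simp
    have hmem : ∀ i ∈ Finset.univ, (Pi.single i (-(N * v i) * ε) : ι → ℝ) ∈ {c | 0 < V c} :=
      fun i _ => hε i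
    have h1 := hconc.le_map_sum (t := Finset.univ) (w := fun _ : ι => N⁻¹)
      (p := fun i => Pi.single i (-(N * v i) * ε)) (fun i _ => (inv_pos.2 hN).le) hw hmem
    have hD : -(ε • v) ∈ {c | 0 < V c} := by
      rw [← hsum]
      exact hconc.1.sum_mem (fun i _ => (inv_pos.2 hN).le) hw hmem
    rw [hsum] at h1
    -- `0` lies between `-ε v` and `v`
    have h2 := hconc.2 hD (show v ∈ {c | 0 < V c} from hVv)
      (show 0 ≤ (1 + ε)⁻¹ by positivity) (show 0 ≤ (1 + ε)⁻¹ * ε by positivity) (by field_simp)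
    have h3 : (1 + ε)⁻¹ • -(ε • v) + ((1 + ε)⁻¹ * ε) • v = 0 := by
      rw [smul_neg, smul_smul, neg_add_cancel]
    rw [h3] at h2
    simp only [smul_eq_mul] at h1 h2 ⊢
    have h4 : Real.log (V (-(ε • v))) + ε * Real.log (V v) ≤ (1 + ε) * Real.log (V 0) := by
      have := mul_le_mul_of_nonneg_left h2 (show 0 ≤ 1 + ε by linarith)
      rw [mul_add, mul_assoc, mul_inv_cancel_left₀ (by linarith),
        mul_inv_cancel_left₀ (by linarith)] at this
      exact this
    have h5 : g ε ≤ Real.log (V (-(ε • v))) := h1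
    rw [inv_mul_le_iff₀ hpos, zero_add, hg0]
    linarith
  have := le_of_tendsto hslope hbound
  linarith

/-! ### The half difference body and marginals -/

/-- The half difference body `(K - K)/2`. -/
def halfDiff {n : ℕ} (K : Set (Fin n → ℝ)) : Set (Fin n → ℝ) :=
  (fun p : (Fin n → ℝ) × (Fin n → ℝ) => (1 / 2 : ℝ) • (p.1 - p.2)) '' (K ×ˢ K)

lemma halfDiff_compact {n : ℕ} {K : Set (Fin n → ℝ)} (hK : IsCompact K) :
    IsCompact (halfDiff K) := (hK.prod hK).image (by fun_prop)

lemma halfDiff_convex {n : ℕ} {K : Set (Fin n → ℝ)} (hK : Convex ℝ K) :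
    Convex ℝ (halfDiff K) := by
  have : IsLinearMap ℝ (fun p : (Fin n → ℝ) × (Fin n → ℝ) => (1 / 2 : ℝ) • (p.1 - p.2)) :=
    ((1 / 2 : ℝ) • (LinearMap.fst ℝ (Fin n → ℝ) (Fin n → ℝ) - LinearMap.snd ℝ _ _)).isLinear
  exact (hK.prod hK).is_linear_image this

/-- Equality in the Brunn–Minkowski inequality for `K` and `-K` makes the marginals of `K` in every
direction symmetric. -/
lemma marginal_symm {k : ℕ} {K : Set (Fin (k + 1) → ℝ)} (hK : IsCompact K) (hKc : Convex ℝ K)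
    (hi : (interior K).Nonempty) (hle : volume.real (halfDiff K) ≤ volume.real K)
    (L : (Fin (k + 1) → ℝ) ≃L[ℝ] (Fin k → ℝ) × ℝ) :
    ∃ a b : ℝ, a < b ∧ (∀ x ∈ K, a ≤ (L x).2 ∧ (L x).2 ≤ b) ∧ (∃ x ∈ K, (L x).2 = a) ∧
      (∃ x ∈ K, (L x).2 = b) ∧
      ∀ s ∈ Set.Ioo a b, volume.real (slice (L '' K) (a + b - s)) =
        volume.real (slice (L '' K) s) := by
  obtain ⟨κ, hκ, hvol⟩ := vol_image L
  have hLi : (interior (L '' K)).Nonempty := by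
    have h := L.toHomeomorph.image_interior K
    have h2 : (interior (L.toHomeomorph '' K)).Nonempty := h ▸ hi.image _
    exact h2
  have hQ := hK.image L.continuous
  have hQc : Convex ℝ (L '' K) := hKc.linear_image L.toLinearMap
  obtain ⟨a, b, hab, hmem, ha, hb, hpos, hint, -, hI⟩ := slice_data hQ hQc hLi
  obtain ⟨-, ⟨xa, hxa, rfl⟩, ha⟩ := ha
  obtain ⟨-, ⟨xb, hxb, rfl⟩, hb⟩ := hb
  refine ⟨a, b, hab, fun x hx => hmem _ ⟨x, hx, rfl⟩, ⟨xa, hxa, ha⟩, ⟨xb, hxb, hb⟩, ?_⟩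
  have hD := (halfDiff_compact hK).image L.continuous
  have hDc : Convex ℝ (L '' halfDiff K) := (halfDiff_convex hKc).linear_image L.toLinearMap
  set f : ℝ → ℝ := fun s => volume.real (slice (L '' K) s) with hf
  have hfc := slice_continuousOn (brunn_minkowski k) hQ hQc hpos
  have hneg : ∀ x ∈ Set.Ioo (-b) (-a), -x ∈ Set.Ioo a b := fun x hx =>
    ⟨by linarith [hx.2], by linarith [hx.1]⟩
  have hgI : ∫ x in Set.Ioo (-b) (-a), f (-x) = ∫ x in Set.Ioo a b, f x := by
    rw [← integral_Ioc_eq_integral_Ioo, ← integral_Ioc_eq_integral_Ioo,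
      ← intervalIntegral.integral_of_le (by linarith), ← intervalIntegral.integral_of_le hab.le,
      intervalIntegral.integral_comp_neg]
    simp
  obtain ⟨hhi, hhI⟩ := slice_fubini hD
  have key := prekopa_eq (f := f) (g := fun x => f (-x))
    (h := fun s => volume.real (slice (L '' halfDiff K) s)) hab (neg_lt_neg hab) hfc hpos
    hint.integrableOn (hfc.comp continuous_neg.continuousOn hneg) (fun x hx => hpos _ (hneg x hx))
    hint.comp_neg.integrableOn hhi (fun _ => measureReal_nonneg) ?_ hgI.symm ?_
  · obtain ⟨c, h1, -, h3⟩ := key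
    intro s hs
    have := h3 s hs
    rw [show a + b - s = -(s + c) by linarith]
    exact this
  · intro x hx y hy
    -- the slice of `-K` at height `y` is the reflection of the slice of `K` at height `-y`
    have h1 : f (-y) = volume.real ((fun w => -w) '' slice (L '' K) (-y)) := by
      simp only [hf, Set.image_neg_eq_neg, Measure.real]
      rw [Measure.measure_neg]
    have h2 := brunn_minkowski k (slice (L '' K) x) ((fun w => -w) '' slice (L '' K) (-y))
      (slice (L '' halfDiff K) ((x + y) / 2)) (1 / 2) (slice_compact hQ _) (slice_convex hQc _)
      ((slice_compact hQ _).image continuous_neg)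
      (by rw [Set.image_neg_eq_neg]; exact (slice_convex hQc _).neg) (slice_compact hD _)
      (slice_convex hDc _) (by norm_num) (by norm_num) ?_
    · rw [← h1] at h2
      norm_num at h2 ⊢
      exact h2
    · rintro w ⟨p, hp, hpw⟩ _ ⟨w', ⟨q, hq, hqw⟩, rfl⟩
      refine ⟨(1 / 2 : ℝ) • (p - q), ⟨(p, q), ⟨hp, hq⟩, rfl⟩, ?_⟩
      rw [map_smul, map_sub, hpw, hqw]
      ext
      · simp; ring
      · simp; ring
  · rw [hhI, hI, hvol, hvol]
    exact mul_le_mul_of_nonneg_left hle hκ.le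

/-! ### Polytopes with equal opposite facets are symmetric -/

/-- A convex body `K` whose half difference body has no larger volume is symmetric about its centroid:
its marginals are symmetric, so in every direction the centroid lies halfway between the two
supporting hyperplanes. -/
lemma symm_of_marginals {k : ℕ} {K : Set (Fin (k + 1) → ℝ)} (hK : IsCompact K)
    (hKc : Convex ℝ K) (hi : (interior K).Nonempty)
    (hle : volume.real (halfDiff K) ≤ volume.real K) : IsCentrallySymmetric K := by
  have hv : 0 < volume.real K := vol_pos_of_interior volume hK hi
  set G : Fin (k + 1) → ℝ := (volume.real K)⁻¹ • ∫ x in K, x with hG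
  have hcent : ∀ l : (Fin (k + 1) → ℝ) →L[ℝ] ℝ, l ≠ 0 → ∃ a b : ℝ,
      (∀ x ∈ K, a ≤ l x ∧ l x ≤ b) ∧ (∃ x ∈ K, l x = b) ∧ 2 * l G = a + b := by
    intro l hl
    obtain ⟨L, hL⟩ := exists_height l hl
    obtain ⟨a, b, hab, hmem, -, hb, hsym⟩ := marginal_symm hK hKc hi hle L
    simp only [hL] at hmem hb
    refine ⟨a, b, hmem, hb, ?_⟩
    obtain ⟨κ, hκ, hvol, hint⟩ := vol_integral_image L
    have hQ : IsCompact (L '' K) := hK.image L.continuous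
    set f : ℝ → ℝ := fun s => volume.real (slice (L '' K) s) with hf
    obtain ⟨hfi, hfI⟩ := slice_fubini hQ
    have hsupp : ∀ s, s ∉ Set.Icc a b → f s = 0 := by
      intro s hs
      have : slice (L '' K) s = ∅ := by
        rw [Set.eq_empty_iff_forall_notMem]
        rintro w ⟨x, hx, hxw⟩
        have h1 := hmem x hx
        rw [← hL, hxw] at h1
        exact hs h1
      simp [hf, this]
    -- the first moment of the marginal
    have h1 : ∫ q in L '' K, q.2 = ∫ s, s * f s := by
      have hQm : MeasurableSet (L '' K) := hQ.isClosed.measurableSet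
      rw [← integral_indicator hQm, Measure.volume_eq_prod, integral_prod_symm]
      · congr 1
        ext s
        have : ∀ w, (L '' K).indicator (fun q : (Fin k → ℝ) × ℝ => q.2) (w, s) =
            (slice (L '' K) s).indicator (fun _ => s) w := fun w => rfl
        simp only [this]
        rw [integral_indicator_const _ (slice_compact hQ s).isClosed.measurableSet, smul_eq_mul,
          mul_comm]
      · rw [← Measure.volume_eq_prod, integrable_indicator_iff hQm]
        exact continuous_snd.continuousOn.integrableOn_compact hQ
    have h2 : ∫ s, (s - (a + b) / 2) * f s = 0 := by
      have hae : ∀ᵐ s : ℝ, f (a + b - s) = f s := by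
        have : ∀ᵐ s : ℝ, s ∉ ({a, b} : Set ℝ) :=
          measure_eq_zero_iff_ae_notMem.1 (Set.Finite.measure_zero (by simp) _)
        filter_upwards [this] with s hs
        simp only [Set.mem_insert_iff, Set.mem_singleton_iff, not_or] at hs
        by_cases h : s ∈ Set.Icc a b
        · exact hsym s ⟨lt_of_le_of_ne h.1 (Ne.symm hs.1), lt_of_le_of_ne h.2 hs.2⟩
        · rw [hsupp s h, hsupp]
          intro h'
          exact h ⟨by linarith [h'.2], by linarith [h'.1]⟩
      have h3 : ∫ s, (a + b - s - (a + b) / 2) * f (a + b - s) =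
          ∫ s, (s - (a + b) / 2) * f s :=
        integral_sub_left_eq_self (fun s => (s - (a + b) / 2) * f s) volume (a + b)
      have h4 : ∫ s, (a + b - s - (a + b) / 2) * f (a + b - s) =
          ∫ s, -((s - (a + b) / 2) * f s) := by
        refine integral_congr_ae ?_
        filter_upwards [hae] with s hs
        rw [hs]; ring
      rw [integral_neg] at h4
      linarith
    have hsi : Integrable fun s => s * f s := by
      have : IntegrableOn (fun s => f s * s) (Set.Icc a b) :=
        hfi.integrableOn.mul_continuousOn continuousOn_id isCompact_Icc
      have h3 := this.integrable_indicator measurableSet_Icc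
      refine h3.congr (Filter.Eventually.of_forall fun s => ?_)
      by_cases h : s ∈ Set.Icc a b
      · simp only [Set.indicator_of_mem h]; ring
      · simp only [Set.indicator_of_notMem h]; rw [hsupp s h, mul_zero]
    have h3 : ∫ s, s * f s = (a + b) / 2 * (κ * volume.real K) := by
      simp only [sub_mul] at h2
      rw [integral_sub hsi (hfi.const_mul _), integral_const_mul, hfI, hvol] at h2
      linarith
    have h4 := hint K (fun q => q.2)
    rw [h1, h3] at h4
    simp only [hL] at h4
    have h5 : ∫ x in K, l x = (a + b) / 2 * volume.real K := by
      apply mul_left_cancel₀ hκ.ne'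
      rw [← h4]; ring
    have h6 : l G = (volume.real K)⁻¹ * ∫ x in K, l x := by
      rw [hG, map_smul, smul_eq_mul, ← l.integral_comp_comm]
      exact continuous_id.continuousOn.integrableOn_compact hK
    rw [h6, h5]
    field_simp
  have hsub : ∀ x ∈ K, (2 : ℝ) • G - x ∈ K := by
    intro x hx
    by_contra hn
    obtain ⟨l, u, h1, h2⟩ := geometric_hahn_banach_closed_point hKc hK.isClosed hn
    have hl : l ≠ 0 := by
      rintro rfl
      have := h1 x hx
      simp only [zero_apply] at this h2
      linarith
    obtain ⟨a, b, h3, ⟨xb, hxb, h4⟩, h5⟩ := hcent l hl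
    have h6 := h1 xb hxb
    have h7 := (h3 x hx).1
    rw [map_sub, map_smul, smul_eq_mul, h5] at h2
    linarith
  refine ⟨G, fun x => ⟨hsub x, fun h => ?_⟩⟩
  have := hsub _ h
  rwa [sub_sub_cancel] at this

/-- A full-dimensional polytope in which opposite facets have equal areas is centrally symmetric.
The areas are measured after projection to the coordinates of the facets, and faces of lower
dimension have area zero. -/
theorem minkowski_symm {k : ℕ} {K : Set (Fin (k + 1) → ℝ)} (hK : IsCompact K)
    (hKc : Convex ℝ K) (hi : (interior K).Nonempty) (hP : IsHPoly K)
    (hfaces : ∀ L : (Fin (k + 1) → ℝ) ≃L[ℝ] (Fin k → ℝ) × ℝ,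
      volume.real (botFace (L '' K)) = volume.real (topFace (L '' K))) :
    IsCentrallySymmetric K := by
  classical
  have hne : K.Nonempty := hi.mono interior_subset
  obtain ⟨T, hTK, hT⟩ := exists_slabs hP hne
  let l : T → ((Fin (k + 1) → ℝ) →L[ℝ] ℝ) := fun i => i.1
  have hmin : ∀ i, ∃ x ∈ K, ∀ y ∈ K, l i x ≤ l i y := fun i =>
    hK.exists_isMinOn hne (l i).continuous.continuousOn
  have hmax : ∀ i, ∃ x ∈ K, ∀ y ∈ K, l i y ≤ l i x := fun i =>
    hK.exists_isMaxOn hne (l i).continuous.continuousOn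
  choose p hpK hp using hmin
  choose q hqK hq using hmax
  set a : T → ℝ := fun i => l i (p i) with ha
  set b : T → ℝ := fun i => l i (q i) with hb
  have hKs : slab l a b 0 = K := by
    ext x
    constructor
    · intro hx
      refine hTK x fun m hm => ?_
      have h1 := hx ⟨m, hm⟩
      simp only [Pi.zero_apply, add_zero] at h1
      obtain ⟨y, hy, hyx⟩ := hKc.isPreconnected.intermediate_value (hpK ⟨m, hm⟩) (hqK ⟨m, hm⟩)
        m.continuous.continuousOn h1
      exact ⟨y, hy, hyx⟩
    · intro hx i
      simp only [Pi.zero_apply, add_zero]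
      exact ⟨hp i x hx, hq i x hx⟩
  -- otherwise `K` would contain a half-line
  have hinj : ∀ x, (∀ i, l i x = 0) → x = 0 := by
    intro x hx
    by_contra hx0
    obtain ⟨y, hy⟩ := hne
    obtain ⟨R, hR⟩ := hK.isBounded.exists_norm_le
    have hmem : ∀ m : ℕ, y + (m : ℝ) • x ∈ K := by
      intro m
      rw [← hKs] at hy ⊢
      intro i
      rw [map_add, map_smul, hx i, smul_zero, add_zero]
      exact hy i
    obtain ⟨m, hm⟩ := exists_nat_gt ((R + ‖y‖) / ‖x‖)
    rw [div_lt_iff₀ (norm_pos_iff.2 hx0)] at hm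
    have h1 := hR _ (hmem m)
    have h2 : ‖(m : ℝ) • x‖ ≤ ‖y + (m : ℝ) • x‖ + ‖y‖ := by
      have := norm_sub_le (y + (m : ℝ) • x) y
      simpa using this
    rw [norm_smul, Real.norm_natCast] at h2
    linarith
  have hd : ∀ i, HasDerivAt (fun δ => volume.real (slab l a b (Pi.single i δ))) 0 0 := by
    intro i
    obtain ⟨L, hL⟩ := exists_height (l i) (hT i.1 i.2).1
    refine slab_deriv hinj i (hp i _ (hqK i))
      (fun j hj => (hT i.1 i.2).2 j.1 j.2 (Subtype.coe_injective.ne hj)) L hL ?_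
    rw [hKs]
    have h1 : botFace (L '' K) = slice (L '' K) (a i) := by
      refine botFace_eq_slice (w₀ := (L (p i)).1) ⟨p i, hpK i, Prod.ext rfl (hL _)⟩ ?_
      · rintro _ ⟨x, hx, rfl⟩
        rw [hL]
        exact hp i x hx
    have h2 : topFace (L '' K) = slice (L '' K) (b i) := by
      refine topFace_eq_slice (w₀ := (L (q i)).1) ⟨q i, hqK i, Prod.ext rfl (hL _)⟩ ?_
      · rintro _ ⟨x, hx, rfl⟩
        rw [hL]
        exact hq i x hx
    rw [← h1, ← h2]
    exact hfaces L
  have hv : 0 < volume.real (slab l a b 0) := by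
    rw [hKs]; exact vol_pos_of_interior volume hK hi
  -- these displacements centre all slabs at the origin; the result contains `(K - K)/2`
  have hle := slab_le hinj a b hv hd (fun i => -(a i + b i) / 2)
  rw [hKs] at hle
  refine symm_of_marginals hK hKc hi (le_trans ?_ hle)
  refine measureReal_mono ?_ (slab_compact hinj _ _ _).measure_lt_top.ne
  rintro _ ⟨⟨x, y⟩, ⟨hx, hy⟩, rfl⟩ i
  have h1 := hp i x hx
  have h2 := hp i y hy
  have h3 := hq i x hx
  have h4 := hq i y hy
  simp only [map_smul, map_sub, smul_eq_mul, ha, hb]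
  constructor <;> linarith

/-! ### Faces of bounded remainder polytopes -/

lemma topFace_compact {n k : ℕ} (L : (Fin n → ℝ) ≃L[ℝ] (Fin k → ℝ) × ℝ) {P : Set (Fin n → ℝ)}
    (hP : IsCompact P) (hPc : Convex ℝ P) :
    IsCompact (topFace (L '' P)) ∧ Convex ℝ (topFace (L '' P)) := by
  have hQ := hP.image L.continuous
  have hQc : Convex ℝ (L '' P) := hPc.linear_image L.toLinearMap
  obtain ⟨t, ht, -⟩ := topFace_slice hQ
  rw [ht]
  exact ⟨slice_compact hQ t, slice_convex hQc t⟩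

lemma botFace_compact {n k : ℕ} (L : (Fin n → ℝ) ≃L[ℝ] (Fin k → ℝ) × ℝ) {P : Set (Fin n → ℝ)}
    (hP : IsCompact P) (hPc : Convex ℝ P) :
    IsCompact (botFace (L '' P)) ∧ Convex ℝ (botFace (L '' P)) := by
  have hQ := hP.image L.continuous
  have hQc : Convex ℝ (L '' P) := hPc.linear_image L.toLinearMap
  obtain ⟨t, ht, -⟩ := botFace_slice hQ
  rw [ht]
  exact ⟨slice_compact hQ t, slice_convex hQc t⟩

/-- A point reflection interchanges bottom and top faces. -/
lemma botFace_reflect {n k : ℕ} (L : (Fin n → ℝ) ≃L[ℝ] (Fin k → ℝ) × ℝ) (P : Set (Fin n → ℝ))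
    (z : Fin n → ℝ) :
    botFace (L '' ((fun x => z - x) ⁻¹' P)) = (fun w => (L z).1 - w) ⁻¹' topFace (L '' P) := by
  ext w
  rw [Set.mem_preimage, mem_topFace_image, mem_botFace_image]
  constructor
  · rintro ⟨x, hx, rfl, h⟩
    refine ⟨z - x, hx, by simp, fun y hy => ?_⟩
    have := h (z - y) (by simpa using hy)
    simp only [map_sub, Prod.snd_sub] at this ⊢
    linarith
  · rintro ⟨x, hx, hxw, h⟩
    refine ⟨z - x, by simpa using hx, by simp [hxw], fun y hy => ?_⟩
    have := h (z - y) hy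
    simp only [map_sub, Prod.snd_sub] at this ⊢
    linarith

lemma topFace_reflect {n k : ℕ} (L : (Fin n → ℝ) ≃L[ℝ] (Fin k → ℝ) × ℝ) (P : Set (Fin n → ℝ))
    (z : Fin n → ℝ) :
    topFace (L '' ((fun x => z - x) ⁻¹' P)) = (fun w => (L z).1 - w) ⁻¹' botFace (L '' P) := by
  ext w
  rw [Set.mem_preimage, mem_topFace_image, mem_botFace_image]
  constructor
  · rintro ⟨x, hx, rfl, h⟩
    refine ⟨z - x, hx, by simp, fun y hy => ?_⟩
    have := h (z - y) (by simpa using hy)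
    simp only [map_sub, Prod.snd_sub] at this ⊢
    linarith
  · rintro ⟨x, hx, hxw, h⟩
    refine ⟨z - x, by simpa using hx, by simp [hxw], fun y hy => ?_⟩
    have := h (z - y) hy
    simp only [map_sub, Prod.snd_sub] at this ⊢
    linarith

lemma vol_reflect {k : ℕ} {P : Set (Fin k → ℝ)} (hP : IsCompact P) (z : Fin k → ℝ) :
    volume.real ((fun w => z - w) ⁻¹' P) = volume.real P := by
  rw [Measure.real, Measure.real, (Measure.measurePreserving_sub_left volume z).measure_preimage
    hP.isClosed.measurableSet.nullMeasurableSet]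

/-- A convex subset of a hyperplane of full dimension there has nonempty interior in
coordinates of the hyperplane. -/
lemma interior_slice_nonempty {k : ℕ} (L : (Fin (k + 1) → ℝ) ≃L[ℝ] (Fin k → ℝ) × ℝ) (t : ℝ)
    {T : Set (Fin k → ℝ)} (hT : Convex ℝ T) (hne : T.Nonempty)
    (hrank : Module.finrank ℝ
      (affineSpan ℝ ((fun w => L.symm (w, t)) '' T)).direction = k) :
    (interior T).Nonempty := by
  let M : (Fin k → ℝ) →ₗ[ℝ] (Fin (k + 1) → ℝ) :=
    L.symm.toLinearMap ∘ₗ LinearMap.inl ℝ (Fin k → ℝ) ℝ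
  have hM : Function.Injective M := L.symm.injective.comp LinearMap.inl_injective
  let f : (Fin k → ℝ) →ᵃ[ℝ] (Fin (k + 1) → ℝ) :=
    { toFun := fun w => L.symm (w, t)
      linear := M
      map_vadd' := fun p v => by
        change L.symm (v + p, t) = L.symm (v, 0) + L.symm (p, t)
        rw [← map_add]
        simp }
  have h1 : vectorSpan ℝ ((fun w => L.symm (w, t)) '' T) = (vectorSpan ℝ T).map M :=
    (f.map_vectorSpan (s := T)).symm
  rw [direction_affineSpan, h1,
    ← (Submodule.equivMapOfInjective M hM (vectorSpan ℝ T)).finrank_eq] at hrank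
  have h2 : vectorSpan ℝ T = ⊤ := Submodule.eq_top_of_finrank_eq (by simpa using hrank)
  rw [hT.interior_nonempty_iff_affineSpan_eq_top,
    ← AffineSubspace.direction_eq_top_iff_of_nonempty ((affineSpan_nonempty ℝ).2 hne),
    direction_affineSpan]
  exact h2

/-- The volumes of opposite facets of a polytope of bounded remainder agree. -/
lemma facets_of_brs {d k : ℕ} {α : Fin d → ℝ} (hα : IsIrrationalVector α) {S : Set (Fin d → ℝ)}
    (hS : IsCompact S) (hSc : Convex ℝ S) (hbrs : IsBRS α S)
    (L : (Fin d → ℝ) ≃L[ℝ] (Fin k → ℝ) × ℝ) :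
    volume.real (botFace (L '' S)) = volume.real (topFace (L '' S)) := by
  obtain ⟨Ψ, hΨ, hvol⟩ := exists_vol_val k
  have := faces_of_brs hα hS hSc hbrs hΨ L
  rwa [hvol _ (botFace_compact L hS hSc).1 (botFace_compact L hS hSc).2,
    hvol _ (topFace_compact L hS hSc).1 (topFace_compact L hS hSc).2] at this

/-- In a symmetric convex set of bounded remainder, opposite facets of a facet have equal
volumes. -/
lemma ridges_of_brs {d k j : ℕ} {α : Fin d → ℝ} (hα : IsIrrationalVector α) {S : Set (Fin d → ℝ)}
    (hS : IsCompact S) (hSc : Convex ℝ S) (hbrs : IsBRS α S) (hsym : IsCentrallySymmetric S)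
    (L : (Fin d → ℝ) ≃L[ℝ] (Fin k → ℝ) × ℝ) (M : (Fin k → ℝ) ≃L[ℝ] (Fin j → ℝ) × ℝ) :
    volume.real (botFace (M '' topFace (L '' S))) =
      volume.real (topFace (M '' topFace (L '' S))) := by
  obtain ⟨c, hc⟩ := hsym
  have hSr : (fun x => (2 : ℝ) • c - x) ⁻¹' S = S := Set.ext fun x => (hc x).symm
  obtain ⟨Ψ, hΨ, hvol⟩ := exists_vol_val j
  obtain ⟨Ψ', hΨ', hb⟩ := hΨ.boundary M
  have key := faces_of_brs hα hS hSc hbrs hΨ' L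
  obtain ⟨hT, hTc⟩ := topFace_compact L hS hSc
  obtain ⟨hB, hBc⟩ := botFace_compact L hS hSc
  rw [hb _ hT hTc, hb _ hB hBc,
    hvol _ (botFace_compact M hT hTc).1 (botFace_compact M hT hTc).2,
    hvol _ (topFace_compact M hT hTc).1 (topFace_compact M hT hTc).2,
    hvol _ (botFace_compact M hB hBc).1 (botFace_compact M hB hBc).2,
    hvol _ (topFace_compact M hB hBc).1 (topFace_compact M hB hBc).2] at key
  -- the bottom face is a reflected copy of the top face
  have hr := botFace_reflect L S ((2 : ℝ) • c)
  rw [hSr] at hr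
  rw [hr, botFace_reflect, topFace_reflect, vol_reflect (topFace_compact M hT hTc).1,
    vol_reflect (botFace_compact M hT hTc).1] at key
  linarith

/-- a convex polytope of bounded remainder is centrally symmetric with
centrally symmetric `(d−1)`-dimensional (exposed) faces. -/
theorem stmt6 {d : ℕ} (hd : 1 ≤ d) (α : Fin d → ℝ) (hα : IsIrrationalVector α)
    (V : Finset (Fin d → ℝ)) (S : Set (Fin d → ℝ))
    (hS : S = convexHull ℝ (V : Set (Fin d → ℝ))) (hint : (interior S).Nonempty)
    (hbrs : IsBRS α S) :
    IsCentrallySymmetric S ∧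
      ∀ F : Set (Fin d → ℝ), IsExposed ℝ S F →
        Module.finrank ℝ (affineSpan ℝ F).direction = d - 1 →
        IsCentrallySymmetric F := by
  subst hS
  obtain ⟨k, rfl⟩ : ∃ k, d = k + 1 := ⟨d - 1, by omega⟩
  have hVne : V.Nonempty := by
    obtain ⟨x, hx⟩ := hint
    by_contra h
    rw [Finset.not_nonempty_iff_eq_empty] at h
    subst h
    simp at hx
  have hP := isHPoly_convexHull V hVne
  set S := convexHull ℝ (V : Set (Fin (k + 1) → ℝ)) with hSdef
  have hS : IsCompact S := V.finite_toSet.isCompact_convexHull ℝ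
  have hSc : Convex ℝ S := convex_convexHull ℝ _
  have hsym : IsCentrallySymmetric S :=
    minkowski_symm hS hSc hint hP fun L => facets_of_brs hα hS hSc hbrs L
  refine ⟨hsym, fun F hF hrank => ?_⟩
  rcases F.eq_empty_or_nonempty with rfl | hFne
  · exact ⟨0, by simp⟩
  obtain ⟨l, hl⟩ := hF hFne
  -- the zero functional exposes `S` itself
  by_cases hl0 : l = 0
  · have : F = S := by rw [hl, hl0]; simp
    rwa [this]
  obtain ⟨L, hL⟩ := exists_height l hl0
  obtain ⟨x₀, hx₀⟩ := hFne
  have hx₀' := hx₀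
  rw [hl] at hx₀'
  set t := l x₀ with ht
  have hT : topFace (L '' S) = slice (L '' S) t := by
    refine topFace_eq_slice (w₀ := (L x₀).1) ⟨x₀, hx₀'.1, Prod.ext rfl (hL _)⟩ ?_
    rintro _ ⟨x, hx, rfl⟩
    rw [hL]
    exact hx₀'.2 x hx
  set T := topFace (L '' S) with hTdef
  -- the facet in the coordinates of its hyperplane
  have hFT : ∀ x, x ∈ F ↔ l x = t ∧ (L x).1 ∈ T := by
    intro x
    have h1 : (L x).1 ∈ T ↔ ((L x).1, t) ∈ L '' S := by rw [hT]; rfl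
    rw [h1, hl]
    constructor
    · rintro ⟨hx, hmax⟩
      have h2 : l x = t := le_antisymm (hx₀'.2 x hx) (hmax x₀ hx₀'.1)
      exact ⟨h2, x, hx, Prod.ext rfl ((hL x).trans h2)⟩
    · rintro ⟨h2, y, hy, hyx⟩
      have h3 : y = x := L.injective (hyx.trans (Prod.ext rfl ((hL x).trans h2).symm))
      subst h3
      exact ⟨hy, fun z hz => by rw [h2]; exact hx₀'.2 z hz⟩
  have himg : F = (fun w => L.symm (w, t)) '' T := by
    ext x
    rw [hFT]
    constructor
    · rintro ⟨h1, h2⟩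
      refine ⟨_, h2, ?_⟩
      rw [← h1, ← hL]
      exact L.symm_apply_apply x
    · rintro ⟨w, hw, rfl⟩
      rw [← hL]
      simpa using hw
  obtain ⟨hTcomp, hTc⟩ := topFace_compact L hS hSc
  have hTsym : IsCentrallySymmetric T := by
    rcases k with _ | j
    · exact ⟨0, fun x => by rw [Subsingleton.elim ((2 : ℝ) • (0 : Fin 0 → ℝ) - x) x]⟩
    · refine minkowski_symm hTcomp hTc ?_ ?_ fun M => ridges_of_brs hα hS hSc hbrs hsym L M
      · refine interior_slice_nonempty L t hTc ⟨_, ((hFT x₀).1 hx₀).2⟩ ?_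
        rw [← himg, hrank]
        rfl
      · rw [hT]
        exact hP.slice_image L t
  obtain ⟨w₀, hw₀⟩ := hTsym
  refine ⟨L.symm (w₀, t), fun x => ?_⟩
  rw [hFT, hFT]
  have h1 : l (L.symm (w₀, t)) = t := by rw [← hL]; simp
  have h2 : (L ((2 : ℝ) • L.symm (w₀, t) - x)).1 = (2 : ℝ) • w₀ - (L x).1 := by simp
  rw [h2, ← hw₀, map_sub, map_smul, h1, smul_eq_mul]
  refine and_congr_left fun _ => ?_
  constructor <;> intro h <;> linarith
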